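/- Assume S ⊆ ℝ is discrete, Y ⊆ L²([0,a)) is a perfect set, Z ⊆ ℝ∖{0} is compact, and λY is gap-rich with exceptional set S for every λ ∈ Z. For any x ∈ per(ℤ,Y) of minimal period p, any ε > 0, and any compact K ⊆ ℝ∖S, there exist constants N₀ = N₀(x,K,ε,Z) ∈ ℕ and c₀ = c₀(x,K,ε,Z) > 0 such that for every N ≥ N₀ there exists y ∈ per(ℤ,Y) of period Np with sup_{j∈ℤ} ‖x_j − y_j‖_{L²} < ε and Leb(K ∩ σ(L_{λy})) ≤ e^{−c₀N} for all λ ∈ Z, where Leb denotes Lebesgue measure on ℝ. -/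

import Mathlib

open Set MeasureTheory BoundedContinuousFunction

noncomputable section

/-- `L²(ℝ)`. -/
abbrev L2R := Lp ℝ 2 (volume : Measure ℝ)

/-- `L²([0,a))`. -/
abbrev L2I (a : ℝ) := Lp ℝ 2 (volume.restrict (Ico (0 : ℝ) a))

/-- `g` and `h` satisfy `(-d²/dx² + (V - E)) g = h` in the distributional sense. -/
def WeakSchrodingerEq (V : ℝ → ℝ) (E : ℝ) (g h : L2R) : Prop :=
  ∀ φ : ℝ → ℝ, ContDiff ℝ (⊤ : ℕ∞) φ → HasCompactSupport φ →
    ∫ x, g x * (-(deriv (deriv φ) x) + (V x - E) * φ x) = ∫ x, h x * φ x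

/-- The spectrum of the continuum Schrödinger operator `L_V = -d²/dx² + V` on
`L²(ℝ)`: `E` is in the spectrum iff there is no bounded operator `T` inverting
`L_V - E` (in the distributional sense). -/
def ContSpectrum (V : ℝ → ℝ) : Set ℝ :=
  {E : ℝ | ¬ ∃ T : L2R →L[ℝ] L2R,
      (∀ f : L2R, WeakSchrodingerEq V E (T f) f) ∧
      (∀ g h : L2R, WeakSchrodingerEq V E g h → T h = g)}

/-- A subset of ℝ is discrete if it has no accumulation points. -/
def IsDiscreteSet (S : Set ℝ) : Prop := ∀ x : ℝ, ¬ AccPt x (Filter.principal S)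

/-- Periodic extension `w^{♯ℤ}` of a finite word `w`. -/
def perExt {α : Type*} [Zero α] {m : ℕ} (w : Fin m → α) : ℤ → α :=
  fun n =>
    if h : 0 < m then
      w ⟨(n % (m : ℤ)).toNat, by
        have h1 : 0 ≤ n % (m : ℤ) := Int.emod_nonneg n (by exact_mod_cast h.ne')
        have h2 : n % (m : ℤ) < (m : ℤ) := Int.emod_lt_of_pos n (by exact_mod_cast h)
        omega⟩
    else 0

/-- Concatenation `y^♮ : ℝ → ℝ` of a bi-infinite sequence of pieces in
`L²([0,a))`: `y^♮(ja + t) = y_j(t)` for `t ∈ [0,a)`. -/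
def aggC (a : ℝ) (y : ℤ → L2I a) : ℝ → ℝ :=
  fun t => (y ⌊t / a⌋) (t - (⌊t / a⌋ : ℝ) * a)

/-- `Y ⊆ L²([0,a))` is gap-rich with exceptional set `S`. -/
def GapRichC (a : ℝ) (Y : Set (L2I a)) (S : Set ℝ) : Prop :=
  IsDiscreteSet S ∧
  ∀ E : ℝ, E ∉ S → ∀ m : ℕ, 0 < m → ∀ x : Fin m → L2I a, (∀ i, x i ∈ Y) →
    ∀ ε : ℝ, 0 < ε →
      ∃ l : ℕ, 0 < l ∧ ∃ y : Fin l → L2I a,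
        (∀ i, y i ∈ Y) ∧
        (∀ j : ℤ, dist (perExt x j) (perExt y j) < ε) ∧
        E ∉ ContSpectrum (aggC a (perExt y))

/-- The periodic elements of `Y^ℤ`. -/
def PerC (a : ℝ) (Y : Set (L2I a)) : Set (ℤ →ᵇ L2I a) :=
  {x | (∃ q : ℕ, 0 < q ∧ ∀ n : ℤ, x (n + q) = x n) ∧ ∀ n : ℤ, x n ∈ Y}

/-- The limit-periodic elements of `Y^ℤ`. -/
def LPC (a : ℝ) (Y : Set (L2I a)) : Set (ℤ →ᵇ L2I a) := closure (PerC a Y)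

/-- Cantor set of zero Hausdorff dimension (continuum case: closed, possibly
unbounded). -/
def IsZeroDimCantorC (s : Set ℝ) : Prop :=
  s.Nonempty ∧ IsClosed s ∧ Preperfect s ∧ interior s = ∅ ∧ dimH s = 0

/-!
Let `V` have period `L`, and let `D(E)` be its discriminant, the trace of the transfer matrix of
`-u'' + V u = E u` over one period. The spectrum is `{E | |D(E)| ≤ 2}`. For `|D| > 2` the resolvent
comes from the delay equation `g (x + L) + g (x - L) - D g x = F`, which is uniquely solvable in
`L²` because the sum of the two translations has norm at most `2`. For `|D| ≤ 2` there is a nonzero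
bounded solution, and its truncations at scale `R` form a Weyl sequence: the error they leave is of
size `O(1 / R)` on an interval of length `O(R)`, so that its `L²` norm tends to `0`.

Gap-richness provides, for every coupling `c ∈ Z` and energy `E ∈ K`, an `ε`-approximant of `x`
whose discriminant at `(c, E)` exceeds `2` in modulus. The discriminant is continuous in `(c, E)`
and `Z × K` is compact, so finitely many approximants `z i` and one `δ > 0` suffice, with
`|D| ≥ 2 (1 + δ)` for some `i` at every point. The sequence `y` of period `N p` is obtained by
placing one after the other, for each `i`, a block consisting of many repetitions of `z i`. At each
`(c, E)` the transfer matrix across one of the blocks then has trace at least `2 (1 + δ) ^ n` in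
modulus, with `n` proportional to `N`.

It remains to show that a large trace `G` across a part of the period makes the bands thin. Inside a
band, `|D'| ≥ κ G √(4 - D²)`: the derivative is an integral of squares of solutions, and the `L²`
norm of a solution over one cell controls its Cauchy data. Hence `arcsin (D / 2)` has derivative at
least `κ G` in modulus on the bands, and the area formula bounds their measure by `π n / (κ G)`,
where `n` is the largest number of solutions of `D(E) = τ` in the range of energies considered. This
number is polynomial in the period by Jensen's formula applied to the entire function `D - τ`: `D`
grows at most exponentially in a polynomial of the period, and at the energy `i` it has a positive
distance from `[-2, 2]` that does not depend on the period. Altogether the measure is at most a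
polynomial in `N` times `(1 + δ) ^ (-n)`, which is exponentially small.
-/

namespace ThinSpectrum

/-! ### Indefinite integrals of locally integrable functions -/

section Primitives

variable {𝕜 : Type*} [RCLike 𝕜]

lemma intervalIntegrable_of_locallyIntegrable {E : Type*} [NormedAddCommGroup E] {f : ℝ → E}
    (hf : LocallyIntegrable f) (a b : ℝ) : IntervalIntegrable f volume a b :=
  (hf.integrableOn_isCompact isCompact_uIcc).intervalIntegrable

lemma locallyIntegrable_norm {E : Type*} [NormedAddCommGroup E] {f : ℝ → E}
    (hf : LocallyIntegrable f) : LocallyIntegrable (fun x => ‖f x‖) := fun x => (hf x).norm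

lemma locallyIntegrable_mul_continuous {q u : ℝ → 𝕜} (hq : LocallyIntegrable q)
    (hu : Continuous u) : LocallyIntegrable (fun t => q t * u t) := hq.mul_continuous hu

lemma locallyIntegrable_continuous_mul {q u : ℝ → 𝕜} (hu : Continuous u)
    (hq : LocallyIntegrable q) : LocallyIntegrable (fun t => u t * q t) := by
  simpa only [mul_comm] using locallyIntegrable_mul_continuous hq hu

lemma locallyIntegrable_comp_add_right {E : Type*} [NormedAddCommGroup E] {q : ℝ → E}
    (hq : LocallyIntegrable q) (s : ℝ) : LocallyIntegrable (fun x => q (x + s)) := by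
  refine (locallyIntegrable_iff).2 fun k hk => ?_
  have himage := hq.integrableOn_isCompact (hk.image (f := fun x => x + s) (by fun_prop))
  exact ((measurePreserving_add_right (volume : Measure ℝ) s).integrableOn_image
    (measurableEmbedding_addRight s)).1 himage

/-- `F` is an indefinite integral of `f`, that is, `F` is absolutely continuous with derivative
`f` almost everywhere. The base point is `0`. -/
def IsPrimitive {E : Type*} [NormedAddCommGroup E] [NormedSpace ℝ E] (f F : ℝ → E) : Prop :=
  ∀ x, F x = F 0 + ∫ t in (0 : ℝ)..x, f t

namespace IsPrimitive

section NormedSpace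

variable {E : Type*} [NormedAddCommGroup E] [NormedSpace ℝ E] {f g F G : ℝ → E}

protected lemma continuous (h : IsPrimitive f F) (hf : LocallyIntegrable f) : Continuous F := by
  rw [funext h]
  exact continuous_const.add <|
    intervalIntegral.continuous_primitive (intervalIntegrable_of_locallyIntegrable hf) 0

lemma sub_eq_integral (h : IsPrimitive f F) (hf : LocallyIntegrable f) (a b : ℝ) :
    F b - F a = ∫ t in a..b, f t := by
  rw [h b, h a, add_sub_add_left_eq_sub]
  exact intervalIntegral.integral_interval_sub_left
    (intervalIntegrable_of_locallyIntegrable hf _ _)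
    (intervalIntegrable_of_locallyIntegrable hf _ _)

lemma ae_hasDerivAt [CompleteSpace E] (h : IsPrimitive f F) (hf : LocallyIntegrable f) :
    ∀ᵐ x, HasDerivAt F (f x) x := by
  filter_upwards [LocallyIntegrable.ae_hasDerivAt_integral hf] with x hx
  rw [funext h]
  exact (hx 0).const_add _

lemma absolutelyContinuousOnInterval (h : IsPrimitive f F) (hf : LocallyIntegrable f) (a b : ℝ) :
    AbsolutelyContinuousOnInterval F a b := by
  have hnorm : ∀ a b, IntervalIntegrable (fun t => ‖f t‖) volume a b :=
    intervalIntegrable_of_locallyIntegrable (locallyIntegrable_norm hf)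
  refine squeeze_zero (fun _ => Finset.sum_nonneg fun _ _ => dist_nonneg) (fun I => ?_)
    ((hnorm a b).absolutelyContinuousOnInterval_intervalIntegral (c := a) (by simp))
  refine Finset.sum_le_sum fun i _ => ?_
  rw [dist_eq_norm, dist_eq_norm, h.sub_eq_integral hf,
    intervalIntegral.integral_interval_sub_left (hnorm _ _) (hnorm _ _)]
  exact intervalIntegral.norm_integral_le_abs_integral_norm

protected lemma add (h : IsPrimitive f F) (h' : IsPrimitive g G) (hf : LocallyIntegrable f)
    (hg : LocallyIntegrable g) : IsPrimitive (fun x => f x + g x) (fun x => F x + G x) := by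
  intro x
  simp only [intervalIntegral.integral_add (intervalIntegrable_of_locallyIntegrable hf _ _)
    (intervalIntegrable_of_locallyIntegrable hg _ _), h x, h' x]
  abel

protected lemma sub (h : IsPrimitive f F) (h' : IsPrimitive g G) (hf : LocallyIntegrable f)
    (hg : LocallyIntegrable g) : IsPrimitive (fun x => f x - g x) (fun x => F x - G x) := by
  intro x
  simp only [intervalIntegral.integral_sub (intervalIntegrable_of_locallyIntegrable hf _ _)
    (intervalIntegrable_of_locallyIntegrable hg _ _), h x, h' x]
  abel

lemma comp_add_right (h : IsPrimitive f F) (hf : LocallyIntegrable f) (s : ℝ) :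
    IsPrimitive (fun x => f (x + s)) (fun x => F (x + s)) := by
  intro x
  rw [intervalIntegral.integral_comp_add_right f, ← h.sub_eq_integral hf]
  abel

end NormedSpace

variable {f g F G : ℝ → 𝕜}

lemma const_mul (h : IsPrimitive f F) (k : 𝕜) :
    IsPrimitive (fun x => k * f x) (fun x => k * F x) := by
  intro x
  simp only [intervalIntegral.integral_const_mul, h x, mul_add]

protected lemma mul (hF : IsPrimitive f F) (hG : IsPrimitive g G) (hf : LocallyIntegrable f)
    (hg : LocallyIntegrable g) :
    IsPrimitive (fun t => f t * G t + F t * g t) (fun x => F x * G x) := by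
  intro x
  have hfg : LocallyIntegrable (fun t => f t * G t + F t * g t) :=
    (locallyIntegrable_mul_continuous hf (hG.continuous hg)).add
      (locallyIntegrable_continuous_mul (hF.continuous hf) hg)
  have hint : IsPrimitive (fun t => f t * G t + F t * g t)
      (fun y => ∫ t in (0 : ℝ)..y, (f t * G t + F t * g t)) := fun y => by simp
  have hac := ((hF.absolutelyContinuousOnInterval hf 0 x).fun_smul
    (hG.absolutelyContinuousOnInterval hg 0 x)).fun_sub
      (hint.absolutelyContinuousOnInterval hfg 0 x)
  obtain ⟨C, hC⟩ := hac.const_of_ae_hasDerivAt_zero <| by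
    filter_upwards [hF.ae_hasDerivAt hf, hG.ae_hasDerivAt hg, hint.ae_hasDerivAt hfg]
      with y hFy hGy hy _
    have hderiv := (hFy.mul hGy).sub hy
    rwa [sub_self] at hderiv
  have h0 := hC 0 (by simp)
  have hx := hC x (by simp)
  simp only [smul_eq_mul, intervalIntegral.integral_same, sub_zero] at h0 hx
  linear_combination hx - h0

end IsPrimitive

end Primitives

/-! ### The Volterra operator of a locally integrable potential -/

section Volterra

variable {𝕜 : Type*} [RCLike 𝕜]

/-- The function `x ↦ ∫₀ˣ (x - t) r(t) dt`, whose second derivative is `r` and which vanishes to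
first order at `0`. -/
def secondPrimitive (r : ℝ → 𝕜) (x : ℝ) : 𝕜 := ∫ t in (0 : ℝ)..x, ((x - t : ℝ) : 𝕜) * r t

lemma intervalIntegrable_kernel_mul {r : ℝ → 𝕜} (hr : LocallyIntegrable r) (x : ℝ) :
    IntervalIntegrable (fun t => ((x - t : ℝ) : 𝕜) * r t) volume 0 x :=
  intervalIntegrable_of_locallyIntegrable
    (locallyIntegrable_continuous_mul (u := fun t : ℝ => ((x - t : ℝ) : 𝕜)) (by fun_prop) hr) _ _

@[simp] lemma secondPrimitive_zero_right (r : ℝ → 𝕜) : secondPrimitive r 0 = 0 := by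
  simp [secondPrimitive]

lemma secondPrimitive_sub {r s : ℝ → 𝕜} (hr : LocallyIntegrable r) (hs : LocallyIntegrable s)
    (x : ℝ) :
    secondPrimitive (fun t => r t - s t) x = secondPrimitive r x - secondPrimitive s x := by
  simp only [secondPrimitive, mul_sub]
  exact intervalIntegral.integral_sub (intervalIntegrable_kernel_mul hr x)
    (intervalIntegrable_kernel_mul hs x)

lemma continuous_secondPrimitive {r : ℝ → 𝕜} (hr : LocallyIntegrable r) :
    Continuous (secondPrimitive r) := by
  have hid : LocallyIntegrable (fun t : ℝ => (t : 𝕜) * r t) :=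
    locallyIntegrable_continuous_mul (u := fun t : ℝ => (t : 𝕜)) (by fun_prop) hr
  have heq : secondPrimitive r = fun x : ℝ =>
      (x : 𝕜) * (∫ t in (0 : ℝ)..x, r t) - ∫ t in (0 : ℝ)..x, (t : 𝕜) * r t := by
    funext x
    rw [secondPrimitive, ← intervalIntegral.integral_const_mul, ← intervalIntegral.integral_sub
      ((intervalIntegrable_of_locallyIntegrable hr _ _).const_mul _)
      (intervalIntegrable_of_locallyIntegrable hid _ _)]
    simp only [RCLike.ofReal_sub, sub_mul]
  rw [heq]
  have hr' := intervalIntegral.continuous_primitive (intervalIntegrable_of_locallyIntegrable hr) 0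
  have hid' := intervalIntegral.continuous_primitive (intervalIntegrable_of_locallyIntegrable hid) 0
  fun_prop

lemma IsPrimitive.integral_eq_secondPrimitive {v r : ℝ → 𝕜} (h : IsPrimitive r v)
    (hr : LocallyIntegrable r) (x : ℝ) :
    ∫ t in (0 : ℝ)..x, v t = v 0 * x + secondPrimitive r x := by
  have hlin : IsPrimitive (fun _ => (-1 : 𝕜)) (fun y : ℝ => ((x - y : ℝ) : 𝕜)) := fun y => by
    simp [sub_eq_add_neg, Algebra.smul_def]
  have hprod := h.mul hlin hr continuous_const.locallyIntegrable x
  simp only [sub_self, RCLike.ofReal_zero, mul_zero, sub_zero, mul_neg, mul_one,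
    mul_comm (r _)] at hprod
  have hv : IntervalIntegrable (fun t => -v t) volume 0 x :=
    ((h.continuous hr).neg).intervalIntegrable _ _
  rw [intervalIntegral.integral_add (intervalIntegrable_kernel_mul hr x) hv,
    intervalIntegral.integral_neg] at hprod
  rw [secondPrimitive]
  linear_combination hprod

/-- The Volterra operator `u ↦ ∫₀ˣ (x - t) q(t) u(t) dt`; the equation `u'' = q u` says that
`u - volterra q u` is affine. -/
def volterra (q u : ℝ → 𝕜) : ℝ → 𝕜 := secondPrimitive fun t => q t * u t

lemma norm_volterra_le {q u : ℝ → 𝕜} (hq : LocallyIntegrable q) {x α B : ℝ}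
    (hα : |∫ t in (0 : ℝ)..x, ‖q t‖| ≤ α) (hB0 : 0 ≤ B)
    (hB : ∀ t ∈ uIoc 0 x, |x - t| * ‖u t‖ ≤ B) : ‖volterra q u x‖ ≤ α * B := by
  calc ‖volterra q u x‖ ≤ |∫ t in (0 : ℝ)..x, ‖q t‖ * B| := by
        refine intervalIntegral.norm_integral_le_abs_of_norm_le ?_
          ((intervalIntegrable_of_locallyIntegrable (locallyIntegrable_norm hq) _ _).mul_const _)
        refine (ae_restrict_iff' measurableSet_uIoc).2 (.of_forall fun t ht => ?_)
        rw [norm_mul, norm_mul, RCLike.norm_ofReal, mul_left_comm]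
        exact mul_le_mul_of_nonneg_left (hB t ht) (norm_nonneg _)
    _ = |∫ t in (0 : ℝ)..x, ‖q t‖| * B := by
        rw [intervalIntegral.integral_mul_const, abs_mul, abs_of_nonneg hB0]
    _ ≤ α * B := mul_le_mul_of_nonneg_right hα hB0

lemma succ_mul_sub_mul_pow_le {s y : ℝ} (hs : 0 ≤ s) (hsy : s ≤ y) (n : ℕ) :
    (n + 1) * ((y - s) * s ^ n) ≤ y ^ (n + 1) - s ^ (n + 1) := by
  induction n with
  | zero => simp
  | succ n ih =>
    have hpow : s * ((n + 1) * ((y - s) * s ^ n)) ≤ y * (y ^ (n + 1) - s ^ (n + 1)) :=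
      mul_le_mul hsy ih (mul_nonneg (by positivity)
        (mul_nonneg (sub_nonneg.2 hsy) (pow_nonneg hs n))) (hs.trans hsy)
    push_cast
    linear_combination hpow

lemma abs_sub_mul_abs_pow_le {x t : ℝ} (ht : t ∈ uIcc 0 x) (n : ℕ) :
    |x - t| * |t| ^ n ≤ |x| ^ (n + 1) / (n + 1) := by
  have htx : |t| ≤ |x| := by simpa using abs_sub_left_of_mem_uIcc ht
  have habs : |x - t| = |x| - |t| := by
    rcases le_total 0 x with hx | hx
    · rw [uIcc_of_le hx] at ht
      rw [abs_of_nonneg hx, abs_of_nonneg ht.1, abs_of_nonneg (sub_nonneg.2 ht.2)]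
    · rw [uIcc_of_ge hx] at ht
      rw [abs_of_nonpos hx, abs_of_nonpos ht.2, abs_of_nonpos (sub_nonpos.2 ht.1)]
      ring
  rw [habs, le_div_iff₀' (by positivity)]
  exact (succ_mul_sub_mul_pow_le (abs_nonneg t) htx n).trans
    (sub_le_self _ (pow_nonneg (abs_nonneg t) _))

lemma abs_integral_norm_le_of_uIcc_subset {E : Type*} [NormedAddCommGroup E] {q : ℝ → E}
    (hq : LocallyIntegrable q) {x y a b : ℝ} (h : uIcc x y ⊆ uIcc a b) :
    |∫ t in x..y, ‖q t‖| ≤ |∫ t in a..b, ‖q t‖| :=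
  intervalIntegral.abs_integral_mono_interval (uIoc_subset_uIoc_of_uIcc_subset_uIcc h)
    (.of_forall fun _ => norm_nonneg _)
    (intervalIntegrable_of_locallyIntegrable (locallyIntegrable_norm hq) _ _)

lemma norm_iterate_volterra_le {q g : ℝ → 𝕜} (hq : LocallyIntegrable q) {x α C : ℝ}
    (hα : |∫ t in (0 : ℝ)..x, ‖q t‖| ≤ α) (hg : ∀ t ∈ uIcc 0 x, ‖g t‖ ≤ C) (n : ℕ) :
    ‖(volterra q)^[n] g x‖ ≤ C * ((α * |x|) ^ n / n.factorial) := by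
  have hα0 : 0 ≤ α := (abs_nonneg _).trans hα
  have hC0 : 0 ≤ C := (norm_nonneg _).trans (hg 0 left_mem_uIcc)
  induction n generalizing x with
  | zero => simpa using hg x right_mem_uIcc
  | succ n ih =>
    rw [Function.iterate_succ_apply']
    refine (norm_volterra_le (B := C * (α ^ n / n.factorial * (|x| ^ (n + 1) / (n + 1)))) hq hα
      (by positivity) fun t ht => ?_).trans_eq ?_
    · have ht' : t ∈ uIcc 0 x := uIoc_subset_uIcc ht
      have hsub : uIcc 0 t ⊆ uIcc 0 x := uIcc_subset_uIcc_left ht'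
      calc |x - t| * ‖(volterra q)^[n] g t‖
          ≤ |x - t| * (C * ((α * |t|) ^ n / n.factorial)) := by
            gcongr
            exact ih ((abs_integral_norm_le_of_uIcc_subset hq hsub).trans hα)
              fun s hs => hg s (hsub hs)
        _ = C * (α ^ n / n.factorial * (|x - t| * |t| ^ n)) := by rw [mul_pow]; ring
        _ ≤ _ := by gcongr; exact abs_sub_mul_abs_pow_le ht' n
    · rw [Nat.factorial_succ]
      push_cast
      field_simp
      rw [mul_pow]
      ring

lemma exists_norm_iterate_volterra_le {q g : ℝ → 𝕜} (hq : LocallyIntegrable q)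
    (hg : Continuous g) (R : ℝ) : ∃ C α : ℝ, ∀ n x, |x| ≤ R →
      ‖(volterra q)^[n] g x‖ ≤ C * ((α * R) ^ n / n.factorial) := by
  obtain ⟨C, hC⟩ := (isCompact_Icc (a := -R) (b := R)).exists_bound_of_continuousOn hg.continuousOn
  refine ⟨C, |∫ t in (-R)..R, ‖q t‖|, fun n x hx => ?_⟩
  have hR : 0 ≤ R := (abs_nonneg x).trans hx
  have hsub : uIcc 0 x ⊆ Icc (-R) R := uIcc_subset_Icc ⟨by linarith, hR⟩ (abs_le.1 hx)
  have hC0 : 0 ≤ C := (norm_nonneg _).trans (hC x (abs_le.1 hx))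
  refine (norm_iterate_volterra_le hq (abs_integral_norm_le_of_uIcc_subset hq
    (hsub.trans Icc_subset_uIcc)) (fun t ht => hC t (hsub ht)) n).trans ?_
  gcongr

lemma summable_iterate_volterra {q g : ℝ → 𝕜} (hq : LocallyIntegrable q) (hg : Continuous g)
    (x : ℝ) : Summable fun n => (volterra q)^[n] g x := by
  obtain ⟨C, α, h⟩ := exists_norm_iterate_volterra_le hq hg |x|
  exact .of_norm_bounded ((Real.summable_pow_div_factorial _).mul_left C) fun n => h n x le_rfl

lemma continuous_iterate_volterra {q g : ℝ → 𝕜} (hq : LocallyIntegrable q) (hg : Continuous g)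
    (n : ℕ) : Continuous ((volterra q)^[n] g) := by
  induction n with
  | zero => exact hg
  | succ n ih =>
    rw [Function.iterate_succ_apply']
    exact continuous_secondPrimitive (locallyIntegrable_mul_continuous hq ih)

/-- The Neumann series `∑ₙ Vⁿ g` of the Volterra operator `V` of `q`, the unique continuous
solution of `u = g + V u`. -/
def neumannSeries (q g : ℝ → 𝕜) (x : ℝ) : 𝕜 := ∑' n, (volterra q)^[n] g x

lemma continuous_neumannSeries {q g : ℝ → 𝕜} (hq : LocallyIntegrable q) (hg : Continuous g) :
    Continuous (neumannSeries q g) := by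
  refine continuous_iff_continuousAt.2 fun x => ?_
  obtain ⟨C, α, h⟩ := exists_norm_iterate_volterra_le hq hg (|x| + 1)
  refine (continuousOn_tsum (s := Icc (-(|x| + 1)) (|x| + 1))
    (fun n => (continuous_iterate_volterra hq hg n).continuousOn)
    ((Real.summable_pow_div_factorial _).mul_left C)
    fun n y hy => h n y (abs_le.2 hy)).continuousAt (Icc_mem_nhds ?_ ?_)
  · linarith [neg_abs_le x]
  · linarith [le_abs_self x]

lemma neumannSeries_eq {q g : ℝ → 𝕜} (hq : LocallyIntegrable q) (hg : Continuous g) (x : ℝ) :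
    neumannSeries q g x = g x + volterra q (neumannSeries q g) x := by
  obtain ⟨C, α, h⟩ := exists_norm_iterate_volterra_le hq hg |x|
  have hC := (Real.summable_pow_div_factorial (α * |x|)).mul_left C
  have hsum : HasSum (fun n => (volterra q)^[n + 1] g x) (volterra q (neumannSeries q g) x) := by
    simp only [Function.iterate_succ_apply', volterra, secondPrimitive]
    refine intervalIntegral.hasSum_integral_of_dominated_convergence
      (fun n t => |x - t| * (‖q t‖ * (C * ((α * |x|) ^ n / n.factorial))))
      (fun n => ?_) (fun n => .of_forall fun t ht => ?_)
      (.of_forall fun t _ => (hC.mul_left _).mul_left _) ?_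
      (.of_forall fun t _ => ((summable_iterate_volterra hq hg t).hasSum.mul_left _).mul_left _)
    · exact (intervalIntegrable_kernel_mul (locallyIntegrable_mul_continuous hq
        (continuous_iterate_volterra hq hg n)) x).def'.aestronglyMeasurable
    · rw [norm_mul, norm_mul, RCLike.norm_ofReal]
      gcongr
      exact h n t (by simpa using abs_sub_left_of_mem_uIcc (uIoc_subset_uIcc ht))
    · simp only [tsum_mul_left]
      exact intervalIntegrable_of_locallyIntegrable (locallyIntegrable_continuous_mul (𝕜 := ℝ)
        (u := fun t => |x - t|) (by fun_prop) (locallyIntegrable_mul_continuous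
          (locallyIntegrable_norm hq) continuous_const)) _ _
  rw [neumannSeries, (summable_iterate_volterra hq hg x).tsum_eq_zero_add, hsum.tsum_eq]
  rfl

lemma eq_neumannSeries {q g u : ℝ → 𝕜} (hq : LocallyIntegrable q) (hg : Continuous g)
    (hu : Continuous u) (h : ∀ x, u x = g x + volterra q u x) : u = neumannSeries q g := by
  set w := neumannSeries q g with hw
  have hwc : Continuous w := continuous_neumannSeries hq hg
  have hfix : volterra q (fun x => u x - w x) = fun x => u x - w x := by
    funext x
    simp only [volterra, mul_sub]
    rw [secondPrimitive_sub (locallyIntegrable_mul_continuous hq hu)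
      (locallyIntegrable_mul_continuous hq hwc), h x, hw, neumannSeries_eq hq hg x]
    simp only [volterra]
    ring
  funext x
  have hsum := summable_iterate_volterra hq (hu.sub hwc) x
  simp only [show ∀ n, (volterra q)^[n] (u - w) = u - w from Function.iterate_fixed hfix,
    summable_const_iff] at hsum
  exact sub_eq_zero.1 (hsum)

lemma norm_neumannSeries_le {q g : ℝ → 𝕜} (hq : LocallyIntegrable q) {x α C : ℝ}
    (hα : |∫ t in (0 : ℝ)..x, ‖q t‖| ≤ α) (hg : ∀ t ∈ uIcc 0 x, ‖g t‖ ≤ C) :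
    ‖neumannSeries q g x‖ ≤ C * Real.exp (α * |x|) := by
  have hexp : HasSum (fun n : ℕ => (α * |x|) ^ n / n.factorial) (Real.exp (α * |x|)) := by
    rw [Real.exp_eq_exp_ℝ]
    exact NormedSpace.expSeries_div_hasSum_exp _
  exact tsum_of_norm_bounded (hexp.mul_left C) (norm_iterate_volterra_le hq hα hg)

end Volterra

/-! ### The equation `-u'' + q u = f` -/

section Solutions

variable {𝕜 : Type*} [RCLike 𝕜]

/-- `u` is a Carathéodory solution of `-u'' + q u = f` on the line with derivative `v`, where `q`
and `f` are locally integrable. -/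
structure IsSol (q f u v : ℝ → 𝕜) : Prop where
  locallyIntegrable_potential : LocallyIntegrable q
  locallyIntegrable_forcing : LocallyIntegrable f
  continuous : Continuous u
  isPrimitive : IsPrimitive v u
  isPrimitive_deriv : IsPrimitive (fun t => q t * u t - f t) v

namespace IsSol

variable {q f u v q' f' u' v' : ℝ → 𝕜}

lemma locallyIntegrable_deriv_deriv (h : IsSol q f u v) :
    LocallyIntegrable (fun t => q t * u t - f t) :=
  (locallyIntegrable_mul_continuous h.locallyIntegrable_potential h.continuous).sub
    h.locallyIntegrable_forcing

lemma continuous_deriv (h : IsSol q f u v) : Continuous v :=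
  h.isPrimitive_deriv.continuous h.locallyIntegrable_deriv_deriv

lemma locallyIntegrable_deriv (h : IsSol q f u v) : LocallyIntegrable v :=
  h.continuous_deriv.locallyIntegrable

protected lemma add (h : IsSol q f u v) (h' : IsSol q f' u' v') :
    IsSol q (fun x => f x + f' x) (fun x => u x + u' x) (fun x => v x + v' x) where
  locallyIntegrable_potential := h.locallyIntegrable_potential
  locallyIntegrable_forcing := h.locallyIntegrable_forcing.add h'.locallyIntegrable_forcing
  continuous := h.continuous.add h'.continuous
  isPrimitive := h.isPrimitive.add h'.isPrimitive h.locallyIntegrable_deriv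
    h'.locallyIntegrable_deriv
  isPrimitive_deriv := by
    convert h.isPrimitive_deriv.add h'.isPrimitive_deriv h.locallyIntegrable_deriv_deriv
      h'.locallyIntegrable_deriv_deriv using 2
    ring

lemma const_mul (h : IsSol q f u v) (k : 𝕜) :
    IsSol q (fun x => k * f x) (fun x => k * u x) (fun x => k * v x) where
  locallyIntegrable_potential := h.locallyIntegrable_potential
  locallyIntegrable_forcing :=
    locallyIntegrable_continuous_mul continuous_const h.locallyIntegrable_forcing
  continuous := h.continuous.const_mul k
  isPrimitive := h.isPrimitive.const_mul k
  isPrimitive_deriv := by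
    convert h.isPrimitive_deriv.const_mul k using 2
    ring

protected lemma sub (h : IsSol q f u v) (h' : IsSol q f' u' v') :
    IsSol q (fun x => f x - f' x) (fun x => u x - u' x) (fun x => v x - v' x) := by
  simpa only [neg_one_mul, ← sub_eq_add_neg] using h.add (h'.const_mul (-1))

lemma comp_add_right (h : IsSol q f u v) (s : ℝ) :
    IsSol (fun x => q (x + s)) (fun x => f (x + s)) (fun x => u (x + s))
      (fun x => v (x + s)) where
  locallyIntegrable_potential := locallyIntegrable_comp_add_right h.locallyIntegrable_potential s
  locallyIntegrable_forcing := locallyIntegrable_comp_add_right h.locallyIntegrable_forcing s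
  continuous := h.continuous.comp (continuous_add_const s)
  isPrimitive := h.isPrimitive.comp_add_right h.locallyIntegrable_deriv s
  isPrimitive_deriv := h.isPrimitive_deriv.comp_add_right h.locallyIntegrable_deriv_deriv s

lemma change_potential (h : IsSol q f u v) (hq' : LocallyIntegrable q') :
    IsSol q' (fun t => f t + (q' t - q t) * u t) u v where
  locallyIntegrable_potential := hq'
  locallyIntegrable_forcing := h.locallyIntegrable_forcing.add
    (locallyIntegrable_mul_continuous (hq'.sub h.locallyIntegrable_potential) h.continuous)
  continuous := h.continuous
  isPrimitive := h.isPrimitive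
  isPrimitive_deriv := by
    convert h.isPrimitive_deriv using 2
    ring

lemma eq_affine_add_volterra (h : IsSol q f u v) (x : ℝ) :
    u x = (u 0 + v 0 * x - secondPrimitive f x) + volterra q u x := by
  rw [h.isPrimitive x, h.isPrimitive_deriv.integral_eq_secondPrimitive
    h.locallyIntegrable_deriv_deriv, secondPrimitive_sub (locallyIntegrable_mul_continuous
    h.locallyIntegrable_potential h.continuous) h.locallyIntegrable_forcing, volterra]
  ring

lemma of_eq_affine_add_volterra (hq : LocallyIntegrable q) (hf : LocallyIntegrable f)
    (hu : Continuous u) {α β : 𝕜}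
    (h : ∀ x : ℝ, u x = (α + β * x - secondPrimitive f x) + volterra q u x) :
    IsSol q f u (fun x => β + ∫ t in (0 : ℝ)..x, (q t * u t - f t)) := by
  have hqu := locallyIntegrable_mul_continuous hq hu
  have hprim : IsPrimitive (fun t => q t * u t - f t)
      (fun x => β + ∫ t in (0 : ℝ)..x, (q t * u t - f t)) := fun x => by simp
  refine ⟨hq, hf, hu, fun x => ?_, hprim⟩
  rw [hprim.integral_eq_secondPrimitive (hqu.sub hf), secondPrimitive_sub hqu hf, h x, h 0]
  simp only [volterra, secondPrimitive_zero_right, intervalIntegral.integral_same,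
    RCLike.ofReal_zero]
  ring

lemma norm_le (h : IsSol q f u v) (X : ℝ) {x : ℝ} (hx : x ∈ uIcc 0 X) :
    ‖u x‖ ≤ (‖u 0‖ + ‖v 0‖ * |X| + |∫ t in (0 : ℝ)..X, ‖f t‖| * |X|) *
      Real.exp (|∫ t in (0 : ℝ)..X, ‖q t‖| * |X|) := by
  have habs {s t : ℝ} (ht : t ∈ uIcc 0 s) : |t| ≤ |s| := by simpa using abs_sub_left_of_mem_uIcc ht
  have hf := continuous_secondPrimitive h.locallyIntegrable_forcing
  have hsub : uIcc 0 x ⊆ uIcc 0 X := uIcc_subset_uIcc_left hx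
  rw [congrFun (eq_neumannSeries h.locallyIntegrable_potential (by fun_prop) h.continuous
    h.eq_affine_add_volterra) x]
  refine (norm_neumannSeries_le h.locallyIntegrable_potential
    (abs_integral_norm_le_of_uIcc_subset h.locallyIntegrable_potential hsub)
    fun t ht => ?_).trans (mul_le_mul_of_nonneg_left (Real.exp_le_exp.2
      (mul_le_mul_of_nonneg_left (habs hx) (abs_nonneg _))) (by positivity))
  have htX : |t| ≤ |X| := habs (hsub ht)
  refine (norm_sub_le _ _).trans (add_le_add ((norm_add_le _ _).trans (add_le_add le_rfl ?_)) ?_)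
  · rw [norm_mul, RCLike.norm_ofReal]
    gcongr
  · have hvolt := norm_volterra_le (u := fun _ => (1 : 𝕜)) h.locallyIntegrable_forcing
      (abs_integral_norm_le_of_uIcc_subset h.locallyIntegrable_forcing
        ((uIcc_subset_uIcc_left ht).trans hsub)) (abs_nonneg X) fun s hs => by
      simpa using (abs_sub_right_of_mem_uIcc (uIoc_subset_uIcc hs)).trans
        (by simpa using htX)
    simpa [volterra] using hvolt

lemma eq_of_eq_at (h : IsSol q f u v) (h' : IsSol q f u' v') {s : ℝ} (hu : u s = u' s)
    (hv : v s = v' s) : u = u' ∧ v = v' := by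
  have hsub := (h.sub h').comp_add_right s
  have huu' : u = u' := funext fun x => by
    have hbound := hsub.norm_le (x - s) (x := x - s) (by simp)
    simpa [hu, hv, sub_eq_zero] using hbound
  have hv0 : IsPrimitive (fun _ => (0 : 𝕜)) (fun x => v x - v' x) := by
    simpa [huu'] using h.isPrimitive_deriv.sub h'.isPrimitive_deriv
      h.locallyIntegrable_deriv_deriv h'.locallyIntegrable_deriv_deriv
  refine ⟨huu', funext fun x => sub_eq_zero.1 ?_⟩
  have hs := hv0 s
  simp only [hv, sub_self, intervalIntegral.integral_zero, add_zero] at hs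
  simpa [← hs] using hv0 x

lemma isPrimitive_wronskian (h : IsSol q f u v) (h' : IsSol q' f' u' v') :
    IsPrimitive (fun t => (q t - q' t) * u t * u' t - f t * u' t + u t * f' t)
      (fun x => v x * u' x - u x * v' x) := by
  have hvu := h.isPrimitive_deriv.mul h'.isPrimitive h.locallyIntegrable_deriv_deriv
    h'.locallyIntegrable_deriv
  have huv := h.isPrimitive.mul h'.isPrimitive_deriv h.locallyIntegrable_deriv
    h'.locallyIntegrable_deriv_deriv
  have hvv : LocallyIntegrable (fun t => v t * v' t) :=
    (h.continuous_deriv.mul h'.continuous_deriv).locallyIntegrable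
  convert hvu.sub huv ((locallyIntegrable_mul_continuous h.locallyIntegrable_deriv_deriv
    h'.continuous).add hvv) (hvv.add (locallyIntegrable_continuous_mul h.continuous
      h'.locallyIntegrable_deriv_deriv)) using 2
  ring

end IsSol

/-- The solution of `-u'' + q u = f` with `u 0 = α` and `u' 0 = β`. -/
def cauchySol (q f : ℝ → 𝕜) (α β : 𝕜) : ℝ → 𝕜 :=
  neumannSeries q fun x => α + β * x - secondPrimitive f x

/-- The derivative of `cauchySol q f α β`. -/
def cauchySolDeriv (q f : ℝ → 𝕜) (α β : 𝕜) (x : ℝ) : 𝕜 :=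
  β + ∫ t in (0 : ℝ)..x, (q t * cauchySol q f α β t - f t)

lemma isSol_cauchySol {q f : ℝ → 𝕜} (hq : LocallyIntegrable q) (hf : LocallyIntegrable f)
    (α β : 𝕜) : IsSol q f (cauchySol q f α β) (cauchySolDeriv q f α β) := by
  have hcont : Continuous fun x : ℝ => α + β * x - secondPrimitive f x := by
    have := continuous_secondPrimitive hf
    fun_prop
  exact .of_eq_affine_add_volterra hq hf (continuous_neumannSeries hq hcont)
    (neumannSeries_eq hq hcont)

@[simp] lemma cauchySol_zero (q f : ℝ → 𝕜) (α β : 𝕜) : cauchySol q f α β 0 = α := by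
  rw [cauchySol, neumannSeries, tsum_eq_single 0]
  · simp
  · rintro (_ | n) hn
    · exact absurd rfl hn
    · rw [Function.iterate_succ_apply', volterra, secondPrimitive_zero_right]

@[simp] lemma cauchySolDeriv_zero (q f : ℝ → 𝕜) (α β : 𝕜) : cauchySolDeriv q f α β 0 = β := by
  simp [cauchySolDeriv]

end Solutions

/-! ### Transfer matrices and the discriminant -/

section Discriminant

variable {𝕜 : Type*} [RCLike 𝕜]

/-- `u` is a solution of the homogeneous equation `u'' = q u` with derivative `v`. -/
abbrev IsHomSol (q u v : ℝ → 𝕜) : Prop := IsSol q (fun _ => 0) u v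

namespace IsHomSol

variable {q u v q' u' v' : ℝ → 𝕜}

lemma linear_combination (h : IsHomSol q u v) (h' : IsHomSol q u' v') (k l : 𝕜) :
    IsHomSol q (fun x => k * u x + l * u' x) (fun x => k * v x + l * v' x) := by
  simpa only [mul_zero, add_zero] using (h.const_mul k).add (h'.const_mul l)

lemma wronskian_eq (h : IsHomSol q u v) (h' : IsHomSol q' u' v') (x : ℝ) :
    v x * u' x - u x * v' x = v 0 * u' 0 - u 0 * v' 0 +
      ∫ t in (0 : ℝ)..x, (q t - q' t) * u t * u' t := by
  simpa using h.isPrimitive_wronskian h' x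

lemma norm_le (h : IsHomSol q u v) {L : ℝ} (hL : 0 ≤ L) {x : ℝ} (hx : x ∈ Icc 0 L) :
    ‖u x‖ ≤ (‖u 0‖ + ‖v 0‖ * L) * Real.exp ((∫ t in (0 : ℝ)..L, ‖q t‖) * L) := by
  have hbound := IsSol.norm_le h L (x := x) (by rwa [uIcc_of_le hL])
  simpa [abs_of_nonneg hL, abs_of_nonneg (intervalIntegral.integral_nonneg hL
    fun t _ => norm_nonneg (q t))] using hbound

lemma norm_sub_le (h : IsHomSol q u v) (h' : IsHomSol q' u' v') (hu : u' 0 = u 0)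
    (hv : v' 0 = v 0) {L : ℝ} (hL : 0 ≤ L) {x : ℝ} (hx : x ∈ Icc 0 L) :
    ‖u' x - u x‖ ≤ (∫ t in (0 : ℝ)..L, ‖(q' t - q t) * u t‖) * L *
      Real.exp ((∫ t in (0 : ℝ)..L, ‖q' t‖) * L) := by
  have hdiff := (h'.sub (h.change_potential h'.locallyIntegrable_potential)).norm_le L (x := x)
    (by rwa [uIcc_of_le hL])
  have hnonneg : ∀ r : ℝ → 𝕜, |∫ t in (0 : ℝ)..L, ‖r t‖| = ∫ t in (0 : ℝ)..L, ‖r t‖ := fun r =>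
    abs_of_nonneg (intervalIntegral.integral_nonneg hL fun t _ => norm_nonneg (r t))
  simpa only [hu, hv, sub_self, norm_zero, zero_mul, zero_add, zero_sub, norm_neg, hnonneg,
    abs_of_nonneg hL] using hdiff

end IsHomSol

/-- The solution of `u'' = q u` with `u 0 = 1` and `u' 0 = 0`. -/
def cosSol (q : ℝ → 𝕜) : ℝ → 𝕜 := cauchySol q (fun _ => 0) 1 0

/-- The derivative of `cosSol q`. -/
def cosSolDeriv (q : ℝ → 𝕜) : ℝ → 𝕜 := cauchySolDeriv q (fun _ => 0) 1 0

/-- The solution of `u'' = q u` with `u 0 = 0` and `u' 0 = 1`. -/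
def sinSol (q : ℝ → 𝕜) : ℝ → 𝕜 := cauchySol q (fun _ => 0) 0 1

/-- The derivative of `sinSol q`. -/
def sinSolDeriv (q : ℝ → 𝕜) : ℝ → 𝕜 := cauchySolDeriv q (fun _ => 0) 0 1

/-- The discriminant of `q` over `[0, L]`, the trace of the transfer matrix of `u'' = q u`. -/
def discriminant (q : ℝ → 𝕜) (L : ℝ) : 𝕜 := cosSol q L + sinSolDeriv q L

@[simp] lemma cosSol_zero (q : ℝ → 𝕜) : cosSol q 0 = 1 := cauchySol_zero ..

@[simp] lemma cosSolDeriv_zero (q : ℝ → 𝕜) : cosSolDeriv q 0 = 0 := cauchySolDeriv_zero ..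

@[simp] lemma sinSol_zero (q : ℝ → 𝕜) : sinSol q 0 = 0 := cauchySol_zero ..

@[simp] lemma sinSolDeriv_zero (q : ℝ → 𝕜) : sinSolDeriv q 0 = 1 := cauchySolDeriv_zero ..

@[simp] lemma discriminant_zero (q : ℝ → 𝕜) : discriminant q 0 = 2 := by
  rw [discriminant, cosSol_zero, sinSolDeriv_zero, one_add_one_eq_two]

variable {q q' : ℝ → 𝕜}

lemma isHomSol_cauchySol (hq : LocallyIntegrable q) (α β : 𝕜) :
    IsHomSol q (cauchySol q (fun _ => 0) α β) (cauchySolDeriv q (fun _ => 0) α β) :=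
  isSol_cauchySol hq continuous_const.locallyIntegrable α β

lemma isHomSol_cosSol (hq : LocallyIntegrable q) : IsHomSol q (cosSol q) (cosSolDeriv q) :=
  isHomSol_cauchySol hq 1 0

lemma isHomSol_sinSol (hq : LocallyIntegrable q) : IsHomSol q (sinSol q) (sinSolDeriv q) :=
  isHomSol_cauchySol hq 0 1

lemma cosSol_mul_sinSolDeriv_sub (hq : LocallyIntegrable q) (x : ℝ) :
    cosSol q x * sinSolDeriv q x - sinSol q x * cosSolDeriv q x = 1 := by
  have hW := (isHomSol_cosSol hq).wronskian_eq (isHomSol_sinSol hq) x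
  simp only [sub_self, zero_mul, intervalIntegral.integral_zero, cosSol_zero, cosSolDeriv_zero,
    sinSol_zero, sinSolDeriv_zero] at hW
  linear_combination -hW

namespace IsHomSol

variable {u v : ℝ → 𝕜}

lemma eq_cosSol_add_sinSol (h : IsHomSol q u v) :
    u = (fun x => u 0 * cosSol q x + v 0 * sinSol q x) ∧
      v = (fun x => u 0 * cosSolDeriv q x + v 0 * sinSolDeriv q x) :=
  have hq := h.locallyIntegrable_potential
  h.eq_of_eq_at ((isHomSol_cosSol hq).linear_combination (isHomSol_sinSol hq) _ _) (s := 0)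
    (by simp) (by simp)

lemma transfer (h : IsHomSol q u v) (b x : ℝ) :
    u (x + b) = u b * cosSol (fun y => q (y + b)) x + v b * sinSol (fun y => q (y + b)) x ∧
    v (x + b) =
      u b * cosSolDeriv (fun y => q (y + b)) x + v b * sinSolDeriv (fun y => q (y + b)) x := by
  have heq := IsHomSol.eq_cosSol_add_sinSol (h.comp_add_right b)
  simpa only [zero_add] using And.intro (congrFun heq.1 x) (congrFun heq.2 x)

/-- The Cayley–Hamilton identity `M + M⁻¹ = (tr M) I` for the monodromy matrix `M`, applied to
the Cauchy data of a solution. -/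
lemma add_sub_eq_discriminant_mul (h : IsHomSol q u v) {L : ℝ} (hL : Function.Periodic q L)
    (x : ℝ) :
    u (x + L) + u (x - L) = discriminant q L * u x ∧
      v (x + L) + v (x - L) = discriminant q L * v x := by
  have hright : IsHomSol q (fun x => u (x + L)) (fun x => v (x + L)) := by
    simpa only [hL _] using h.comp_add_right L
  have hleft : IsHomSol q (fun x => u (x - L)) (fun x => v (x - L)) := by
    simpa only [← sub_eq_add_neg, hL.sub_eq] using h.comp_add_right (-L)
  have hcomb : IsHomSol q (fun x => u (x + L) + u (x - L)) (fun x => v (x + L) + v (x - L)) :=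
    by simpa only [one_mul] using hright.linear_combination hleft 1 1
  have hmul : IsHomSol q (fun x => discriminant q L * u x) (fun x => discriminant q L * v x) := by
    simpa only [zero_mul, add_zero] using h.linear_combination h (discriminant q L) 0
  have hW := cosSol_mul_sinSolDeriv_sub h.locallyIntegrable_potential L
  have h0 := h.eq_cosSol_add_sinSol
  have huL := congrFun h0.1 L
  have hvL := congrFun h0.2 L
  have hL2 := h.transfer L L
  simp only [hL _] at hL2
  have heq := hcomb.eq_of_eq_at hmul (s := L)
    (by
      rw [sub_self, hL2.1, discriminant, hvL, huL]
      linear_combination -(u 0) * hW)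
    (by
      rw [sub_self, hL2.2, discriminant, huL, hvL]
      linear_combination -(v 0) * hW)
  exact ⟨congrFun heq.1 x, congrFun heq.2 x⟩

end IsHomSol

lemma discriminant_add_add_discriminant_sub (hq : LocallyIntegrable q) {L : ℝ}
    (hL : Function.Periodic q L) (x : ℝ) :
    discriminant q (x + L) + discriminant q (x - L) = discriminant q L * discriminant q x := by
  have hcos := ((isHomSol_cosSol hq).add_sub_eq_discriminant_mul hL x).1
  have hsin := ((isHomSol_sinSol hq).add_sub_eq_discriminant_mul hL x).2
  simp only [discriminant] at *
  linear_combination hcos + hsin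

lemma discriminant_sub_discriminant (hq : LocallyIntegrable q) (hq' : LocallyIntegrable q')
    (L : ℝ) :
    discriminant q' L - discriminant q L =
      -cosSol q L * (∫ t in (0 : ℝ)..L, (q' t - q t) * cosSol q' t * sinSol q t)
      + sinSol q L * (∫ t in (0 : ℝ)..L, (q' t - q t) * cosSol q' t * cosSol q t)
      + sinSolDeriv q L * (∫ t in (0 : ℝ)..L, (q' t - q t) * sinSol q' t * cosSol q t)
      - cosSolDeriv q L * (∫ t in (0 : ℝ)..L, (q' t - q t) * sinSol q' t * sinSol q t) := by
  have hcc := (isHomSol_cosSol hq').wronskian_eq (isHomSol_cosSol hq) L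
  have hcs := (isHomSol_cosSol hq').wronskian_eq (isHomSol_sinSol hq) L
  have hsc := (isHomSol_sinSol hq').wronskian_eq (isHomSol_cosSol hq) L
  have hss := (isHomSol_sinSol hq').wronskian_eq (isHomSol_sinSol hq) L
  simp only [cosSol_zero, cosSolDeriv_zero, sinSol_zero, sinSolDeriv_zero] at hcc hcs hsc hss
  have hW := cosSol_mul_sinSolDeriv_sub hq L
  simp only [discriminant]
  linear_combination -cosSol q L * hcs + sinSol q L * hcc + sinSolDeriv q L * hsc
    - cosSolDeriv q L * hss - (cosSol q' L + sinSolDeriv q' L) * hW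

lemma norm_integral_mul_mul_le {r u w : ℝ → 𝕜} (hr : LocallyIntegrable r) {L B C : ℝ}
    (hL : 0 ≤ L) (hu : ∀ t ∈ Icc 0 L, ‖u t‖ ≤ B) (hw : ∀ t ∈ Icc 0 L, ‖w t‖ ≤ C) :
    ‖∫ t in (0 : ℝ)..L, r t * u t * w t‖ ≤ B * C * ∫ t in (0 : ℝ)..L, ‖r t‖ := by
  rw [← intervalIntegral.integral_const_mul]
  refine intervalIntegral.norm_integral_le_of_norm_le hL (.of_forall fun t ht => ?_)
    ((intervalIntegrable_of_locallyIntegrable (locallyIntegrable_norm hr) _ _).const_mul _)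
  have ht' : t ∈ Icc 0 L := Ioc_subset_Icc_self ht
  calc ‖r t * u t * w t‖ = ‖r t‖ * (‖u t‖ * ‖w t‖) := by rw [norm_mul, norm_mul, mul_assoc]
    _ ≤ ‖r t‖ * (B * C) := by
      gcongr
      · exact (norm_nonneg _).trans (hu t ht')
      · exact hu t ht'
      · exact hw t ht'
    _ = B * C * ‖r t‖ := mul_comm _ _

lemma exists_norm_discriminant_sub_le (hq : LocallyIntegrable q) {L : ℝ} (hL : 0 ≤ L) (A : ℝ) :
    ∃ K : ℝ, 0 ≤ K ∧ ∀ q' : ℝ → 𝕜, LocallyIntegrable q' → (∫ t in (0 : ℝ)..L, ‖q' t‖) ≤ A →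
      ‖discriminant q' L - discriminant q L‖ ≤ K * ∫ t in (0 : ℝ)..L, ‖q' t - q t‖ := by
  obtain ⟨C, hC⟩ := (isCompact_Icc (a := 0) (b := L)).exists_bound_of_continuousOn
    ((isHomSol_cosSol hq).continuous.prodMk (isHomSol_sinSol hq).continuous).continuousOn
  have hC0 : 0 ≤ C := (norm_nonneg _).trans (hC 0 ⟨le_rfl, hL⟩)
  have hcos : ∀ t ∈ Icc 0 L, ‖cosSol q t‖ ≤ C := fun t ht => (norm_fst_le _).trans (hC t ht)
  have hsin : ∀ t ∈ Icc 0 L, ‖sinSol q t‖ ≤ C := fun t ht => (norm_snd_le _).trans (hC t ht)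
  set B := (1 + L) * Real.exp (A * L)
  refine ⟨(‖cosSol q L‖ + ‖sinSol q L‖ + ‖sinSolDeriv q L‖ + ‖cosSolDeriv q L‖) * (B * C),
    by positivity, fun q' hq' hA => ?_⟩
  have hB {u v : ℝ → 𝕜} (h : IsHomSol q' u v) (h0 : ‖u 0‖ + ‖v 0‖ * L ≤ 1 + L) :
      ∀ t ∈ Icc 0 L, ‖u t‖ ≤ B := fun t ht => (h.norm_le hL ht).trans (by simp only [B]; gcongr)
  have hcos' := hB (isHomSol_cosSol hq') (by simp [hL])
  have hsin' := hB (isHomSol_sinSol hq') (by simp)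
  rw [discriminant_sub_discriminant hq hq']
  have hle {u w : ℝ → 𝕜} (hu : ∀ t ∈ Icc 0 L, ‖u t‖ ≤ B) (hw : ∀ t ∈ Icc 0 L, ‖w t‖ ≤ C) (k : 𝕜) :
      ‖k * ∫ t in (0 : ℝ)..L, (q' t - q t) * u t * w t‖ ≤
        ‖k‖ * (B * C * ∫ t in (0 : ℝ)..L, ‖q' t - q t‖) := by
    rw [norm_mul]
    gcongr
    exact norm_integral_mul_mul_le (hq'.sub hq) hL hu hw
  refine (norm_sub_le_of_le (norm_add_le_of_le (norm_add_le_of_le (hle hcos' hsin _)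
    (hle hcos' hcos _)) (hle hsin' hcos _)) (hle hsin' hsin _)).trans_eq ?_
  rw [norm_neg]
  ring

lemma discriminant_congr (hq : LocallyIntegrable q) (hq' : LocallyIntegrable q') {L : ℝ}
    (hL : 0 ≤ L) (h : ∀ᵐ t, t ∈ Ioo 0 L → q' t = q t) : discriminant q' L = discriminant q L := by
  obtain ⟨K, -, hK⟩ := exists_norm_discriminant_sub_le hq hL (∫ t in (0 : ℝ)..L, ‖q' t‖)
  have hzero : ∫ t in (0 : ℝ)..L, ‖q' t - q t‖ = 0 := by
    rw [intervalIntegral.integral_of_le hL, integral_Ioc_eq_integral_Ioo]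
    refine integral_eq_zero_of_ae ((ae_restrict_iff' measurableSet_Ioo).2 ?_)
    filter_upwards [h] with t ht hmem
    simp [ht hmem]
  simpa [hzero, sub_eq_zero] using hK q' hq' le_rfl

/-- Exponential growth of the solution of the recursion satisfied by the traces `tr (M ^ k)`, where
`det M = 1` and `tr M = D`. -/
lemma two_mul_pow_le_abs_of_recurrence {D δ : ℝ} {t : ℕ → ℝ} (h0 : t 0 = 2) (h1 : t 1 = D)
    (hrec : ∀ k, t (k + 2) + t k = D * t (k + 1)) (hδ : 0 ≤ δ) (hD : 2 * (1 + δ) ≤ |D|) (k : ℕ) :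
    2 * (1 + δ) ^ k ≤ |t k| := by
  have hgrowth (k : ℕ) : (1 + δ) * |t k| ≤ |t (k + 1)| := by
    induction k with
    | zero =>
      rw [h0, h1, abs_two]
      linarith
    | succ k ih =>
      have htri : |D| * |t (k + 1)| - |t k| ≤ |t (k + 2)| := by
        rw [eq_sub_of_add_eq (hrec k), ← abs_mul]
        exact abs_sub_abs_le_abs_sub _ _
      have hmono : |t k| ≤ |t (k + 1)| := by nlinarith [abs_nonneg (t k)]
      have hDt := mul_le_mul_of_nonneg_right hD (abs_nonneg (t (k + 1)))
      change (1 + δ) * |t (k + 1)| ≤ |t (k + 2)|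
      nlinarith [abs_nonneg (t (k + 1))]
  induction k with
  | zero => simp [h0]
  | succ k ih =>
    calc 2 * (1 + δ) ^ (k + 1) = (1 + δ) * (2 * (1 + δ) ^ k) := by ring
      _ ≤ (1 + δ) * |t k| := by gcongr
      _ ≤ |t (k + 1)| := hgrowth k

lemma two_mul_pow_le_abs_discriminant {q : ℝ → ℝ} (hq : LocallyIntegrable q) {L δ : ℝ}
    (hL : Function.Periodic q L) (hδ : 0 ≤ δ) (hD : 2 * (1 + δ) ≤ |discriminant q L|) (k : ℕ) :
    2 * (1 + δ) ^ k ≤ |discriminant q (k * L)| := by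
  refine two_mul_pow_le_abs_of_recurrence (t := fun k : ℕ => discriminant q (k * L)) (by simp)
    (by simp) (fun k => ?_) hδ hD k
  rw [← discriminant_add_add_discriminant_sub hq hL]
  push_cast
  congr 2 <;> ring

end Discriminant

/-! ### Dependence on the energy -/

section Energy

open Filter Topology

variable {𝕜 : Type*} [RCLike 𝕜]

/-- The potential `V - E`, for which `u'' = (V - E) u` is the eigenvalue equation at energy `E`. -/
abbrev energyShift (V : ℝ → 𝕜) (E : 𝕜) : ℝ → 𝕜 := fun x => V x - E

variable {V : ℝ → 𝕜} {L : ℝ}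

lemma locallyIntegrable_energyShift (hV : LocallyIntegrable V) (E : 𝕜) :
    LocallyIntegrable (energyShift V E) := hV.sub continuous_const.locallyIntegrable

lemma integral_norm_energyShift_le (hV : LocallyIntegrable V) (E : 𝕜) (hL : 0 ≤ L) :
    ∫ t in (0 : ℝ)..L, ‖energyShift V E t‖ ≤ (∫ t in (0 : ℝ)..L, ‖V t‖) + ‖E‖ * L := by
  have hVint := intervalIntegrable_of_locallyIntegrable (locallyIntegrable_norm hV) 0 L
  calc ∫ t in (0 : ℝ)..L, ‖energyShift V E t‖ ≤ ∫ t in (0 : ℝ)..L, (‖V t‖ + ‖E‖) :=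
        intervalIntegral.integral_mono_on hL (intervalIntegrable_of_locallyIntegrable
          (locallyIntegrable_norm (locallyIntegrable_energyShift hV E)) _ _)
          (hVint.add intervalIntegrable_const) fun t _ => norm_sub_le _ _
    _ = _ := by
      rw [intervalIntegral.integral_add hVint intervalIntegrable_const]
      simp [mul_comm]

lemma exists_norm_cauchySol_energyShift_sub_le (hV : LocallyIntegrable V) (E : 𝕜) (hL : 0 ≤ L)
    (α β : 𝕜) : ∃ K, ∀ E', ‖E' - E‖ ≤ 1 → ∀ x ∈ Icc 0 L,
      ‖cauchySol (energyShift V E') (fun _ => 0) α β x -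
        cauchySol (energyShift V E) (fun _ => 0) α β x‖ ≤ K * ‖E' - E‖ := by
  set u := cauchySol (energyShift V E) (fun _ => 0) α β
  have hu := isHomSol_cauchySol (locallyIntegrable_energyShift hV E) α β
  have hint : 0 ≤ ∫ t in (0 : ℝ)..L, ‖u t‖ :=
    intervalIntegral.integral_nonneg hL fun _ _ => norm_nonneg _
  refine ⟨(∫ t in (0 : ℝ)..L, ‖u t‖) * L *
    Real.exp (((∫ t in (0 : ℝ)..L, ‖V t‖) + (‖E‖ + 1) * L) * L), fun E' hE x hx => ?_⟩
  have hperturb : ∫ t in (0 : ℝ)..L, ‖(energyShift V E' t - energyShift V E t) * u t‖ =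
      ‖E' - E‖ * ∫ t in (0 : ℝ)..L, ‖u t‖ := by
    simp only [energyShift, sub_sub_sub_cancel_left, norm_mul, norm_sub_rev E E',
      intervalIntegral.integral_const_mul]
  have hE' : ‖E'‖ ≤ ‖E‖ + 1 := by
    linarith [norm_le_norm_add_norm_sub' E' E]
  have hpot : ∫ t in (0 : ℝ)..L, ‖energyShift V E' t‖ ≤
      (∫ t in (0 : ℝ)..L, ‖V t‖) + (‖E‖ + 1) * L :=
    (integral_norm_energyShift_le hV E' hL).trans (by gcongr)
  calc _ ≤ ‖E' - E‖ * (∫ t in (0 : ℝ)..L, ‖u t‖) * L *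
        Real.exp ((∫ t in (0 : ℝ)..L, ‖energyShift V E' t‖) * L) := by
        rw [← hperturb]
        exact hu.norm_sub_le (isHomSol_cauchySol (locallyIntegrable_energyShift hV E') α β)
          (by simp) (by simp) hL hx
    _ ≤ ‖E' - E‖ * (∫ t in (0 : ℝ)..L, ‖u t‖) * L *
        Real.exp (((∫ t in (0 : ℝ)..L, ‖V t‖) + (‖E‖ + 1) * L) * L) := by gcongr
    _ = _ := by ring

lemma continuous_integral_cauchySol_energyShift_mul (hV : LocallyIntegrable V) (hL : 0 ≤ L)
    (α β : 𝕜) {w : ℝ → 𝕜} (hw : Continuous w) :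
    Continuous fun E : 𝕜 =>
      ∫ t in (0 : ℝ)..L, cauchySol (energyShift V E) (fun _ => 0) α β t * w t := by
  refine continuous_iff_continuousAt.2 fun E => ?_
  obtain ⟨K, hK⟩ := exists_norm_cauchySol_energyShift_sub_le hV E hL α β
  obtain ⟨C, hC⟩ := (isCompact_Icc (a := 0) (b := L)).exists_bound_of_continuousOn hw.continuousOn
  have hint (E' : 𝕜) : IntervalIntegrable
      (fun t => cauchySol (energyShift V E') (fun _ => 0) α β t * w t) volume 0 L :=
    ((isHomSol_cauchySol (locallyIntegrable_energyShift hV E') α β).continuous.fun_mul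
      hw).intervalIntegrable _ _
  have hlim : Tendsto (fun E' => K * ‖E' - E‖ * C * |L - 0|) (𝓝 E) (𝓝 0) := by
    have hcont : Continuous (fun E' => K * ‖E' - E‖ * C * |L - 0|) := by fun_prop
    simpa using hcont.tendsto E
  rw [ContinuousAt, tendsto_iff_norm_sub_tendsto_zero]
  refine squeeze_zero' (.of_forall fun _ => norm_nonneg _) ?_ hlim
  filter_upwards [Metric.closedBall_mem_nhds E one_pos] with E' hE'
  rw [← intervalIntegral.integral_sub (hint E') (hint E)]
  refine intervalIntegral.norm_integral_le_of_norm_le_const fun t ht => ?_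
  have ht' : t ∈ Icc 0 L := Ioc_subset_Icc_self (by rwa [uIoc_of_le hL] at ht)
  have hdiff := hK E' (by simpa [dist_eq_norm] using hE') t ht'
  rw [← sub_mul, norm_mul]
  exact mul_le_mul hdiff (hC t ht') (norm_nonneg _) ((norm_nonneg _).trans hdiff)

lemma hasDerivAt_discriminant_energyShift (hV : LocallyIntegrable V) (E : 𝕜) (hL : 0 ≤ L) :
    let q := energyShift V E
    HasDerivAt (fun E => discriminant (energyShift V E) L)
      ((cosSol q L - sinSolDeriv q L) * (∫ t in (0 : ℝ)..L, cosSol q t * sinSol q t)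
        - sinSol q L * (∫ t in (0 : ℝ)..L, cosSol q t * cosSol q t)
        + cosSolDeriv q L * (∫ t in (0 : ℝ)..L, sinSol q t * sinSol q t)) E := by
  intro q
  have hq : LocallyIntegrable q := locallyIntegrable_energyShift hV E
  let slopeFun : 𝕜 → 𝕜 := fun E' =>
    cosSol q L * (∫ t in (0 : ℝ)..L, cosSol (energyShift V E') t * sinSol q t)
    - sinSol q L * (∫ t in (0 : ℝ)..L, cosSol (energyShift V E') t * cosSol q t)
    - sinSolDeriv q L * (∫ t in (0 : ℝ)..L, sinSol (energyShift V E') t * cosSol q t)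
    + cosSolDeriv q L * (∫ t in (0 : ℝ)..L, sinSol (energyShift V E') t * sinSol q t)
  have hcont : Continuous slopeFun := by
    have hint (α β : 𝕜) {w : ℝ → 𝕜} (hw : Continuous w) :=
      continuous_integral_cauchySol_energyShift_mul hV hL α β hw
    have hcos := (isHomSol_cosSol hq).continuous
    have hsin := (isHomSol_sinSol hq).continuous
    exact ((((hint 1 0 hsin).const_mul _).sub ((hint 1 0 hcos).const_mul _)).sub
      ((hint 0 1 hcos).const_mul _)).add ((hint 0 1 hsin).const_mul _)
  have hvalue : (cosSol q L - sinSolDeriv q L) * (∫ t in (0 : ℝ)..L, cosSol q t * sinSol q t)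
      - sinSol q L * (∫ t in (0 : ℝ)..L, cosSol q t * cosSol q t)
      + cosSolDeriv q L * (∫ t in (0 : ℝ)..L, sinSol q t * sinSol q t) = slopeFun E := by
    simp only [slopeFun, mul_comm (sinSol (energyShift V E) _) (cosSol q _), q]
    ring
  rw [hvalue, hasDerivAt_iff_tendsto_slope]
  refine ((hcont.tendsto E).mono_left nhdsWithin_le_nhds).congr' ?_
  filter_upwards [self_mem_nhdsWithin] with E' hE'
  have hsub (t : ℝ) : energyShift V E' t - q t = -(E' - E) := by simp [q]
  rw [slope_def_field, eq_div_iff (sub_ne_zero.2 hE'),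
    discriminant_sub_discriminant hq (locallyIntegrable_energyShift hV E') L]
  simp only [hsub, mul_assoc, intervalIntegral.integral_const_mul, slopeFun]
  ring

end Energy

/-! ### Cauchy data and the `L²` norm -/

section CauchyData

variable {𝕜 : Type*} [RCLike 𝕜]

lemma sq_integral_mul_le {f g : ℝ → ℝ} {a b : ℝ} (hab : a ≤ b)
    (hf : IntervalIntegrable (fun t => f t ^ 2) volume a b)
    (hg : IntervalIntegrable (fun t => g t ^ 2) volume a b)
    (hfg : IntervalIntegrable (fun t => f t * g t) volume a b) :
    (∫ t in a..b, f t * g t) ^ 2 ≤ (∫ t in a..b, f t ^ 2) * ∫ t in a..b, g t ^ 2 := by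
  have hquad (x : ℝ) : 0 ≤ (∫ t in a..b, f t ^ 2) * (x * x) + -2 * (∫ t in a..b, f t * g t) * x +
      ∫ t in a..b, g t ^ 2 := by
    have hexpand (t : ℝ) :
        (x * f t - g t) ^ 2 = x ^ 2 * f t ^ 2 - 2 * x * (f t * g t) + g t ^ 2 := by ring
    have hnonneg : 0 ≤ ∫ t in a..b, (x * f t - g t) ^ 2 :=
      intervalIntegral.integral_nonneg hab fun _ _ => sq_nonneg _
    simp only [hexpand] at hnonneg
    rw [intervalIntegral.integral_add ((hf.const_mul _).sub (hfg.const_mul _)) hg,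
      intervalIntegral.integral_sub (hf.const_mul _) (hfg.const_mul _),
      intervalIntegral.integral_const_mul, intervalIntegral.integral_const_mul] at hnonneg
    linear_combination hnonneg
  have hdiscrim := discrim_le_zero hquad
  rw [discrim] at hdiscrim
  linear_combination hdiscrim / 4

lemma isPrimitive_ofReal {φ φ' : ℝ → ℝ} (hφ : ∀ x, HasDerivAt φ (φ' x) x) (hφ' : Continuous φ') :
    IsPrimitive (fun x => (φ' x : 𝕜)) (fun x => (φ x : 𝕜)) := fun x => by
  have hFTC := intervalIntegral.integral_eq_sub_of_hasDerivAt (a := 0) (b := x)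
    (fun t _ => (RCLike.ofRealCLM (K := 𝕜)).hasFDerivAt.comp_hasDerivAt t (hφ t))
    ((RCLike.continuous_ofReal.comp hφ').intervalIntegrable _ _)
  exact (sub_eq_iff_eq_add'.1 hFTC.symm)

lemma isSol_ofReal {φ φ' φ'' : ℝ → ℝ} (hφ : ∀ x, HasDerivAt φ (φ' x) x)
    (hφ' : ∀ x, HasDerivAt φ' (φ'' x) x) (hφ'' : Continuous φ'') :
    IsSol (fun _ => (0 : 𝕜)) (fun x => -(φ'' x : 𝕜)) (fun x => (φ x : 𝕜))
      (fun x => (φ' x : 𝕜)) where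
  locallyIntegrable_potential := continuous_const.locallyIntegrable
  locallyIntegrable_forcing := Continuous.locallyIntegrable (by fun_prop)
  continuous := RCLike.continuous_ofReal.comp
    (continuous_iff_continuousAt.2 fun x => (hφ x).continuousAt)
  isPrimitive := isPrimitive_ofReal hφ
    (continuous_iff_continuousAt.2 fun x => (hφ' x).continuousAt)
  isPrimitive_deriv := by simpa using isPrimitive_ofReal (𝕜 := 𝕜) hφ' hφ''

lemma IsHomSol.integral_mul_ofReal {q u v : ℝ → 𝕜} (h : IsHomSol q u v) {φ φ' φ'' : ℝ → ℝ}
    (hφ : ∀ x, HasDerivAt φ (φ' x) x) (hφ' : ∀ x, HasDerivAt φ' (φ'' x) x) (hφ'' : Continuous φ'')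
    {a : ℝ} (ha : φ a = 0) (ha' : φ' a = 0) :
    u 0 * (φ' 0 : 𝕜) - v 0 * (φ 0 : 𝕜) =
      ∫ t in (0 : ℝ)..a, u t * (q t * (φ t : 𝕜) - (φ'' t : 𝕜)) := by
  have hW := h.isPrimitive_wronskian (isSol_ofReal hφ hφ' hφ'') a
  have hintegrand (t : ℝ) : (q t - 0) * u t * (φ t : 𝕜) - 0 * (φ t : 𝕜) + u t * -(φ'' t : 𝕜) =
      u t * (q t * (φ t : 𝕜) - (φ'' t : 𝕜)) := by ring
  simp only [hintegrand] at hW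
  simp only [ha, ha', RCLike.ofReal_zero, mul_zero, sub_zero] at hW
  linear_combination hW

lemma integral_norm_add_one_sq_le {q : ℝ → 𝕜} (hq : LocallyIntegrable q)
    (hq2 : LocallyIntegrable (fun t => ‖q t‖ ^ 2)) {a : ℝ} (ha : 0 ≤ a) :
    IntervalIntegrable (fun t => (‖q t‖ + 1) ^ 2) volume 0 a ∧
      ∫ t in (0 : ℝ)..a, (‖q t‖ + 1) ^ 2 ≤ 2 * (∫ t in (0 : ℝ)..a, ‖q t‖ ^ 2) + 2 * a := by
  have hq2' := (intervalIntegrable_of_locallyIntegrable hq2 0 a).const_mul 2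
  have hint : IntervalIntegrable (fun t => (‖q t‖ + 1) ^ 2) volume 0 a := by
    simp only [add_sq, one_pow, mul_one]
    exact (((intervalIntegrable_of_locallyIntegrable hq2 _ _).add
      ((intervalIntegrable_of_locallyIntegrable (locallyIntegrable_norm hq) _ _).const_mul 2)).add
        intervalIntegrable_const)
  refine ⟨hint, (intervalIntegral.integral_mono_on ha hint (hq2'.add intervalIntegrable_const)
    (g := fun t => 2 * ‖q t‖ ^ 2 + 2) fun t _ => ?_).trans_eq ?_⟩
  · linear_combination sq_nonneg (‖q t‖ - 1)
  · rw [intervalIntegral.integral_add hq2' intervalIntegrable_const,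
      intervalIntegral.integral_const_mul, intervalIntegral.integral_const, sub_zero, smul_eq_mul,
      mul_comm a]

lemma exists_norm_pairing_sq_le {a : ℝ} (ha : 0 ≤ a) {φ φ' φ'' : ℝ → ℝ}
    (hφ : ∀ x, HasDerivAt φ (φ' x) x) (hφ' : ∀ x, HasDerivAt φ' (φ'' x) x) (hφ'' : Continuous φ'')
    (hφa : φ a = 0) (hφa' : φ' a = 0) (Q : ℝ) :
    ∃ K : ℝ, 0 ≤ K ∧ ∀ q u v : ℝ → 𝕜, LocallyIntegrable (fun t => ‖q t‖ ^ 2) → IsHomSol q u v →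
      (∫ t in (0 : ℝ)..a, ‖q t‖ ^ 2) ≤ Q →
      ‖u 0 * (φ' 0 : 𝕜) - v 0 * (φ 0 : 𝕜)‖ ^ 2 ≤ K * ∫ t in (0 : ℝ)..a, ‖u t‖ ^ 2 := by
  have hφc : Continuous φ := continuous_iff_continuousAt.2 fun x => (hφ x).continuousAt
  obtain ⟨C, hC⟩ := (isCompact_Icc (a := 0) (b := a)).exists_bound_of_continuousOn
    (hφc.prodMk hφ'').continuousOn
  refine ⟨C ^ 2 * (2 * |Q| + 2 * a), by positivity, fun q u v hq2 h hQ => ?_⟩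
  have hq := h.locallyIntegrable_potential
  obtain ⟨hint, hle⟩ := integral_norm_add_one_sq_le hq hq2 ha
  have hprod : IntervalIntegrable (fun t => ‖u t‖ * (‖q t‖ + 1)) volume 0 a :=
    intervalIntegrable_of_locallyIntegrable (locallyIntegrable_continuous_mul (𝕜 := ℝ)
      h.continuous.norm ((locallyIntegrable_norm hq).add continuous_const.locallyIntegrable)) _ _
  have hpairing : ‖u 0 * (φ' 0 : 𝕜) - v 0 * (φ 0 : 𝕜)‖ ≤
      C * ∫ t in (0 : ℝ)..a, ‖u t‖ * (‖q t‖ + 1) := by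
    rw [h.integral_mul_ofReal hφ hφ' hφ'' hφa hφa', ← intervalIntegral.integral_const_mul]
    refine intervalIntegral.norm_integral_le_of_norm_le ha (.of_forall fun t ht => ?_)
      (hprod.const_mul _)
    have hCt := hC t (Ioc_subset_Icc_self ht)
    calc ‖u t * (q t * (φ t : 𝕜) - (φ'' t : 𝕜))‖ ≤ ‖u t‖ * (‖q t‖ * |φ t| + |φ'' t|) := by
          rw [norm_mul]
          gcongr
          refine (norm_sub_le _ _).trans_eq ?_
          rw [norm_mul, RCLike.norm_ofReal, RCLike.norm_ofReal]
      _ ≤ ‖u t‖ * (‖q t‖ * C + C) := by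
        gcongr
        exacts [(norm_fst_le _).trans hCt, (norm_snd_le _).trans hCt]
      _ = C * (‖u t‖ * (‖q t‖ + 1)) := by ring
  calc _ ≤ (C * ∫ t in (0 : ℝ)..a, ‖u t‖ * (‖q t‖ + 1)) ^ 2 := by gcongr
    _ = C ^ 2 * (∫ t in (0 : ℝ)..a, ‖u t‖ * (‖q t‖ + 1)) ^ 2 := mul_pow _ _ _
    _ ≤ C ^ 2 * ((∫ t in (0 : ℝ)..a, ‖u t‖ ^ 2) * (2 * |Q| + 2 * a)) := by
      gcongr
      refine (sq_integral_mul_le ha ((h.continuous.norm.pow 2).intervalIntegrable _ _) hint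
        hprod).trans (mul_le_mul_of_nonneg_left ?_
          (intervalIntegral.integral_nonneg ha fun _ _ => sq_nonneg _))
      linarith [le_abs_self Q]
    _ = _ := by ring

lemma exists_norm_cubic_pairing_sq_le (𝕜 : Type*) [RCLike 𝕜] {a : ℝ} (ha : 0 ≤ a) (c d Q : ℝ) :
    ∃ K : ℝ, 0 ≤ K ∧ ∀ q u v : ℝ → 𝕜, LocallyIntegrable (fun t => ‖q t‖ ^ 2) → IsHomSol q u v →
      (∫ t in (0 : ℝ)..a, ‖q t‖ ^ 2) ≤ Q →
      ‖u 0 * ((a ^ 2 * d - 2 * a * c : ℝ) : 𝕜) - v 0 * ((a ^ 2 * c : ℝ) : 𝕜)‖ ^ 2 ≤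
        K * ∫ t in (0 : ℝ)..a, ‖u t‖ ^ 2 := by
  have hφ (x : ℝ) : HasDerivAt (fun x => (a - x) ^ 2 * (c + d * x))
      ((a - x) ^ 2 * d - 2 * (a - x) * (c + d * x)) x := by
    refine ((((hasDerivAt_id x).const_sub a).pow 2).mul
      (((hasDerivAt_id x).const_mul d).const_add c)).congr_deriv ?_
    simp only [id_eq, Pi.pow_apply, Nat.cast_ofNat, Nat.add_one_sub_one, pow_one, mul_neg, mul_one]
    ring
  have hφ' (x : ℝ) : HasDerivAt (fun x => (a - x) ^ 2 * d - 2 * (a - x) * (c + d * x))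
      (2 * (c + d * x) - 4 * d * (a - x)) x := by
    refine (((((hasDerivAt_id x).const_sub a).pow 2).mul_const d).sub
      ((((hasDerivAt_id x).const_sub a).const_mul 2).mul
        (((hasDerivAt_id x).const_mul d).const_add c))).congr_deriv ?_
    simp only [id_eq, Nat.cast_ofNat, Nat.add_one_sub_one, pow_one, mul_neg, mul_one]
    ring
  simpa using exists_norm_pairing_sq_le (𝕜 := 𝕜) ha hφ hφ' (by fun_prop) (by simp) (by simp) Q

lemma exists_mul_norm_cauchyData_sq_le (𝕜 : Type*) [RCLike 𝕜] {a : ℝ} (ha : 0 < a) (Q : ℝ) :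
    ∃ κ : ℝ, 0 < κ ∧ ∀ q u v : ℝ → 𝕜, LocallyIntegrable (fun t => ‖q t‖ ^ 2) →
      IsHomSol q u v → ∀ b : ℝ, (∫ t in b..(b + a), ‖q t‖ ^ 2) ≤ Q →
      κ * (‖u b‖ ^ 2 + ‖v b‖ ^ 2) ≤ ∫ t in b..(b + a), ‖u t‖ ^ 2 := by
  -- The coefficients are chosen so that one pairing sees only `u 0` and the other only `v 0`.
  obtain ⟨K₁, hK₁, hu⟩ := exists_norm_cubic_pairing_sq_le 𝕜 ha.le 0 1 Q
  obtain ⟨K₂, hK₂, hv⟩ := exists_norm_cubic_pairing_sq_le 𝕜 ha.le a 2 Q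
  refine ⟨1 / (K₁ / a ^ 4 + K₂ / a ^ 6 + 1), by positivity, fun q u v hq2 h b hQ => ?_⟩
  have hcomp (r : ℝ → 𝕜) :
      ∫ t in (0 : ℝ)..a, ‖r (t + b)‖ ^ 2 = ∫ t in b..(b + a), ‖r t‖ ^ 2 := by
    rw [intervalIntegral.integral_comp_add_right (fun t => ‖r t‖ ^ 2), zero_add, add_comm a b]
  have hshift := h.comp_add_right b
  have hq2' := locallyIntegrable_comp_add_right hq2 b
  have hub := hu _ _ _ hq2' hshift ((hcomp q).trans_le hQ)
  have hvb := hv _ _ _ hq2' hshift ((hcomp q).trans_le hQ)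
  have hcubic : a ^ 2 * 2 - 2 * a * a = 0 := by ring
  simp only [hcomp, zero_add, hcubic, mul_zero, mul_one, sub_zero, zero_sub, RCLike.ofReal_zero,
    norm_neg, norm_mul, RCLike.norm_ofReal, mul_pow, sq_abs] at hub hvb
  have hU : 0 ≤ ∫ t in b..(b + a), ‖u t‖ ^ 2 :=
    intervalIntegral.integral_nonneg (by linarith) fun _ _ => sq_nonneg _
  have hu' : ‖u b‖ ^ 2 ≤ K₁ / a ^ 4 * ∫ t in b..(b + a), ‖u t‖ ^ 2 := by
    rw [div_mul_eq_mul_div, le_div_iff₀ (by positivity)]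
    linarith
  have hv' : ‖v b‖ ^ 2 ≤ K₂ / a ^ 6 * ∫ t in b..(b + a), ‖u t‖ ^ 2 := by
    rw [div_mul_eq_mul_div, le_div_iff₀ (by positivity)]
    linarith
  rw [div_mul_eq_mul_div, one_mul, div_le_iff₀ (by positivity)]
  linarith

end CauchyData

/-! ### Floquet multipliers and the discriminant at complex energies -/

section ComplexEnergies

open ComplexConjugate

lemma exists_ne_zero_eigenvector {𝕜 : Type*} [Field 𝕜] {a b c d μ : 𝕜}
    (h : (a - μ) * (d - μ) - b * c = 0) :
    ∃ x y : 𝕜, (x ≠ 0 ∨ y ≠ 0) ∧ a * x + b * y = μ * x ∧ c * x + d * y = μ * y := by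
  have hdet : (!![a - μ, b; c, d - μ] : Matrix (Fin 2) (Fin 2) 𝕜).det = 0 := by
    rwa [Matrix.det_fin_two_of]
  obtain ⟨v, hv, hker⟩ := Matrix.exists_mulVec_eq_zero_iff.2 hdet
  have hrow₀ := congrFun hker 0
  have hrow₁ := congrFun hker 1
  simp only [Matrix.mulVec, dotProduct, Fin.sum_univ_two, Matrix.of_apply, Matrix.cons_val_zero,
    Matrix.cons_val_one, Pi.zero_apply] at hrow₀ hrow₁
  refine ⟨v 0, v 1, ?_, by linear_combination hrow₀, by linear_combination hrow₁⟩
  by_contra! hzero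
  exact hv (funext <| Fin.forall_fin_two.2 hzero)

lemma exists_floquet_solution {𝕜 : Type*} [RCLike 𝕜] {q : ℝ → 𝕜} (hq : LocallyIntegrable q)
    {L : ℝ} {μ : 𝕜} (hμ : μ ^ 2 - discriminant q L * μ + 1 = 0) :
    ∃ u v, IsHomSol q u v ∧ (u 0 ≠ 0 ∨ v 0 ≠ 0) ∧ u L = μ * u 0 ∧ v L = μ * v 0 := by
  obtain ⟨x, y, hxy, hu, hv⟩ := exists_ne_zero_eigenvector (a := cosSol q L) (b := sinSol q L)
    (c := cosSolDeriv q L) (d := sinSolDeriv q L) (μ := μ) <| by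
      rw [discriminant] at hμ
      linear_combination cosSol_mul_sinSolDeriv_sub hq L + hμ
  exact ⟨_, _, (isHomSol_cosSol hq).linear_combination (isHomSol_sinSol hq) x y, by simpa using hxy,
    by simpa [mul_comm] using hu, by simpa [mul_comm] using hv⟩

lemma exists_floquetMultiplier (D : ℂ) : ∃ μ : ℂ, μ ^ 2 - D * μ + 1 = 0 ∧ 1 ≤ ‖μ‖ := by
  obtain ⟨s, hs⟩ := IsAlgClosed.exists_pow_nat_eq (D ^ 2 - 4) (n := 2) (by norm_num)
  rcases le_total 1 ‖(D + s) / 2‖ with h | h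
  · exact ⟨_, by linear_combination (1 / 4 : ℂ) * hs, h⟩
  · refine ⟨(D - s) / 2, by linear_combination (1 / 4 : ℂ) * hs, ?_⟩
    have hprod : ‖(D + s) / 2‖ * ‖(D - s) / 2‖ = 1 := by
      rw [← norm_mul, show (D + s) / 2 * ((D - s) / 2) = 1 by linear_combination -hs / 4, norm_one]
    nlinarith [norm_nonneg ((D - s) / 2)]

lemma sq_norm_floquetMultiplier_sub_one_le {μ D : ℂ} (h : μ ^ 2 - D * μ + 1 = 0) (hμ : 1 ≤ ‖μ‖)
    {τ : ℝ} (hτ : |τ| ≤ 2) : (‖μ‖ - 1) ^ 2 ≤ ‖D - τ‖ * ‖μ‖ := by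
  set θ := Real.arccos (τ / 2)
  have hcos : 2 * Complex.cos θ = τ := by
    rw [← Complex.ofReal_cos, Real.cos_arccos (by linarith [(abs_le.1 hτ).1])
      (by linarith [(abs_le.1 hτ).2])]
    push_cast
    ring
  have hfactor : (D - τ) * μ =
      (μ - Complex.exp (θ * Complex.I)) * (μ - Complex.exp ((-θ : ℝ) * Complex.I)) := by
    have hexp : Complex.exp (θ * Complex.I) * Complex.exp ((-θ : ℝ) * Complex.I) = 1 := by
      rw [← Complex.exp_add]
      simp
    rw [← hcos, Complex.cos]
    push_cast at hexp ⊢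
    linear_combination -h - hexp
  have hdist (φ : ℝ) : ‖μ‖ - 1 ≤ ‖μ - Complex.exp (φ * Complex.I)‖ := by
    simpa using norm_sub_norm_le μ (Complex.exp (φ * Complex.I))
  rw [← norm_mul, hfactor, norm_mul, sq]
  exact mul_le_mul (hdist _) (hdist _) (by linarith) (norm_nonneg _)

lemma IsPrimitive.comp_clm {𝕜 𝕜' : Type*} [RCLike 𝕜] [RCLike 𝕜'] (T : 𝕜 →L[ℝ] 𝕜') {f F : ℝ → 𝕜}
    (h : IsPrimitive f F) (hf : LocallyIntegrable f) :
    IsPrimitive (fun x => T (f x)) (fun x => T (F x)) := fun x => by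
  rw [T.intervalIntegral_comp_comm (intervalIntegrable_of_locallyIntegrable hf _ _), ← map_add,
    ← h x]

lemma locallyIntegrable_comp_clm {𝕜 𝕜' : Type*} [RCLike 𝕜] [RCLike 𝕜'] (T : 𝕜 →L[ℝ] 𝕜')
    {f : ℝ → 𝕜} (hf : LocallyIntegrable f) : LocallyIntegrable (fun x => T (f x)) := fun x => by
  obtain ⟨s, hs, hfs⟩ := hf x
  exact ⟨s, hs, T.integrable_comp hfs⟩

lemma locallyIntegrable_ofReal {q : ℝ → ℝ} (hq : LocallyIntegrable q) :
    LocallyIntegrable (fun x => (q x : ℂ)) := locallyIntegrable_comp_clm Complex.ofRealCLM hq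

lemma IsHomSol.comp_clm {𝕜 𝕜' : Type*} [RCLike 𝕜] [RCLike 𝕜'] (T : 𝕜 →L[ℝ] 𝕜')
    {q u v : ℝ → 𝕜} {q' : ℝ → 𝕜'} (h : IsHomSol q u v) (hq' : LocallyIntegrable q')
    (hT : ∀ x z, T (q x * z) = q' x * T z) :
    IsHomSol q' (fun x => T (u x)) (fun x => T (v x)) where
  locallyIntegrable_potential := hq'
  locallyIntegrable_forcing := continuous_const.locallyIntegrable
  continuous := T.continuous.comp h.continuous
  isPrimitive := h.isPrimitive.comp_clm T h.locallyIntegrable_deriv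
  isPrimitive_deriv := by
    simpa only [sub_zero, hT] using
      h.isPrimitive_deriv.comp_clm T h.locallyIntegrable_deriv_deriv

lemma discriminant_ofReal {q : ℝ → ℝ} (hq : LocallyIntegrable q) (L : ℝ) :
    discriminant (fun x => (q x : ℂ)) L = ((discriminant q L : ℝ) : ℂ) := by
  have hq' := locallyIntegrable_ofReal hq
  have hcast {u v : ℝ → ℝ} (h : IsHomSol q u v) := h.comp_clm Complex.ofRealCLM hq' (by simp)
  have hcos := (isHomSol_cosSol hq').eq_of_eq_at (hcast (isHomSol_cosSol hq)) (s := 0)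
    (by simp) (by simp)
  have hsin := (isHomSol_sinSol hq').eq_of_eq_at (hcast (isHomSol_sinSol hq)) (s := 0)
    (by simp) (by simp)
  rw [discriminant, discriminant, hcos.1, hsin.2]
  simp

lemma IsHomSol.wronskian_conj_eq {V : ℝ → ℝ} {z : ℂ} {u v : ℝ → ℂ}
    (h : IsHomSol (energyShift (fun x => (V x : ℂ)) z) u v) (x : ℝ) :
    v x * conj (u x) - u x * conj (v x) = v 0 * conj (u 0) - u 0 * conj (v 0) -
      2 * z.im * Complex.I * (∫ t in (0 : ℝ)..x, ‖u t‖ ^ 2 : ℝ) := by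
  have hconj : LocallyIntegrable fun x => conj (energyShift (fun x => (V x : ℂ)) z x) :=
    locallyIntegrable_comp_clm Complex.conjCLE.toContinuousLinearMap h.locallyIntegrable_potential
  have hW := h.wronskian_eq (h.comp_clm Complex.conjCLE.toContinuousLinearMap hconj (by simp)) x
  have hintegrand (t : ℝ) : (energyShift (fun x => (V x : ℂ)) z t -
      conj (energyShift (fun x => (V x : ℂ)) z t)) * u t * conj (u t) =
      -(2 * z.im * Complex.I) * (‖u t‖ ^ 2 : ℝ) := by
    rw [Complex.sub_conj, mul_assoc, Complex.mul_conj, Complex.normSq_eq_norm_sq]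
    simp
  simp only [ContinuousLinearEquiv.coe_coe, Complex.conjCLE_apply, hintegrand,
    intervalIntegral.integral_const_mul, intervalIntegral.integral_ofReal] at hW
  linear_combination hW

lemma IsHomSol.integral_sq_norm_le_of_floquet {V : ℝ → ℝ} {z : ℂ} {u v : ℝ → ℂ}
    (h : IsHomSol (energyShift (fun x => (V x : ℂ)) z) u v) {L : ℝ} (hL : 0 ≤ L) {μ : ℂ}
    (hμ : 1 ≤ ‖μ‖) (hu : u L = μ * u 0) (hv : v L = μ * v 0) :
    2 * |z.im| * ∫ t in (0 : ℝ)..L, ‖u t‖ ^ 2 ≤ (‖μ‖ ^ 2 - 1) * (‖u 0‖ ^ 2 + ‖v 0‖ ^ 2) := by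
  have hint : 0 ≤ ∫ t in (0 : ℝ)..L, ‖u t‖ ^ 2 :=
    intervalIntegral.integral_nonneg hL fun _ _ => sq_nonneg _
  have hμ' : 0 ≤ ‖μ‖ ^ 2 - 1 := by nlinarith
  have hμ_conj : μ * conj μ = (‖μ‖ ^ 2 : ℝ) := by
    rw [Complex.mul_conj, Complex.normSq_eq_norm_sq]
  have hW := h.wronskian_conj_eq L
  rw [hu, hv, map_mul, map_mul] at hW
  have hlagrange : ((‖μ‖ ^ 2 - 1 : ℝ) : ℂ) * (v 0 * conj (u 0) - u 0 * conj (v 0)) =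
      -(2 * z.im * Complex.I * (∫ t in (0 : ℝ)..L, ‖u t‖ ^ 2 : ℝ)) := by
    push_cast at hμ_conj ⊢
    linear_combination hW - (v 0 * conj (u 0) - u 0 * conj (v 0)) * hμ_conj
  have hnorm := congrArg norm hlagrange
  simp only [norm_neg, norm_mul, Complex.norm_real, Complex.norm_I, Complex.norm_ofNat,
    Real.norm_of_nonneg hint, Real.norm_of_nonneg hμ', Real.norm_eq_abs, mul_one] at hnorm
  rw [← hnorm]
  gcongr
  refine (_root_.norm_sub_le _ _).trans ?_
  rw [norm_mul, norm_mul, RCLike.norm_conj, RCLike.norm_conj]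
  nlinarith [sq_nonneg (‖u 0‖ - ‖v 0‖)]

lemma exists_le_norm_discriminant_sub {a : ℝ} (ha : 0 < a) {z : ℂ} (hz : z.im ≠ 0) (Q : ℝ) :
    ∃ δ : ℝ, 0 < δ ∧ ∀ V : ℝ → ℝ, LocallyIntegrable V →
      LocallyIntegrable (fun t => ‖energyShift (fun x => (V x : ℂ)) z t‖ ^ 2) →
      (∫ t in (0 : ℝ)..a, ‖energyShift (fun x => (V x : ℂ)) z t‖ ^ 2) ≤ Q →
      ∀ L, a ≤ L → ∀ τ : ℝ, |τ| ≤ 2 →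
        δ ≤ ‖discriminant (energyShift (fun x => (V x : ℂ)) z) L - τ‖ := by
  obtain ⟨κ, hκ, hcauchy⟩ := exists_mul_norm_cauchyData_sq_le ℂ ha Q
  have him : 0 < |z.im| := abs_pos.2 hz
  set r := Real.sqrt (1 + 2 * |z.im| * κ)
  have hr : 1 < r := Real.lt_sqrt_of_sq_lt (by nlinarith [mul_pos him hκ])
  refine ⟨(r - 1) ^ 2 / r, div_pos (pow_pos (sub_pos.2 hr) 2) (by linarith),
    fun V hV hV2 hQ L hL τ hτ => ?_⟩
  have hq := locallyIntegrable_energyShift (locallyIntegrable_ofReal hV) z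
  obtain ⟨μ, hμ, hμ1⟩ := exists_floquetMultiplier
    (discriminant (energyShift (fun x => (V x : ℂ)) z) L)
  obtain ⟨u, v, huv, hne, huL, hvL⟩ := exists_floquet_solution hq hμ
  have hpos : 0 < ‖u 0‖ ^ 2 + ‖v 0‖ ^ 2 := by
    rcases hne with hne | hne <;> have := norm_pos_iff.2 hne <;> positivity
  have hμ2 : 2 * |z.im| * κ ≤ ‖μ‖ ^ 2 - 1 := by
    refine le_of_mul_le_mul_right ?_ hpos
    calc 2 * |z.im| * κ * (‖u 0‖ ^ 2 + ‖v 0‖ ^ 2)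
        = 2 * |z.im| * (κ * (‖u 0‖ ^ 2 + ‖v 0‖ ^ 2)) := by ring
      _ ≤ 2 * |z.im| * ∫ t in (0 : ℝ)..a, ‖u t‖ ^ 2 := by
        gcongr
        simpa using hcauchy _ u v hV2 huv 0 (by simpa using hQ)
      _ ≤ 2 * |z.im| * ∫ t in (0 : ℝ)..L, ‖u t‖ ^ 2 := by
        gcongr
        exact intervalIntegral.integral_mono_interval le_rfl ha.le hL
          (.of_forall fun _ => sq_nonneg _) ((huv.continuous.norm.pow 2).intervalIntegrable _ _)
      _ ≤ _ := huv.integral_sq_norm_le_of_floquet (ha.le.trans hL) hμ1 huL hvL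
  have hrμ : r ≤ ‖μ‖ := Real.sqrt_le_iff.2 ⟨norm_nonneg _, by linarith⟩
  have hμ_pos : 0 < ‖μ‖ := by linarith
  have hmono : (r - 1) ^ 2 / r ≤ (‖μ‖ - 1) ^ 2 / ‖μ‖ := by
    rw [div_le_div_iff₀ (by linarith) hμ_pos]
    nlinarith [mul_nonneg (sub_nonneg.2 hrμ) (sub_nonneg.2 (by nlinarith : 1 ≤ ‖μ‖ * r))]
  exact hmono.trans ((div_le_iff₀ hμ_pos).2 (sq_norm_floquetMultiplier_sub_one_le hμ hμ1 hτ))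

lemma norm_discriminant_le {𝕜 : Type*} [RCLike 𝕜] {q : ℝ → 𝕜} (hq : LocallyIntegrable q) {L A : ℝ}
    (hL : 0 ≤ L) (hA : ∫ t in (0 : ℝ)..L, ‖q t‖ ≤ A) :
    ‖discriminant q L‖ ≤ 2 * Real.exp (A + L + A * L) := by
  have hA0 : 0 ≤ A := (intervalIntegral.integral_nonneg hL fun _ _ => norm_nonneg _).trans hA
  have hcos : ‖cosSol q L‖ ≤ Real.exp (A * L) := by
    refine ((isHomSol_cosSol hq).norm_le hL ⟨hL, le_rfl⟩).trans ?_
    simp only [cosSol_zero, cosSolDeriv_zero, norm_one, norm_zero, zero_mul, add_zero, one_mul]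
    gcongr
  have hsin (t : ℝ) (ht : t ∈ Icc 0 L) : ‖sinSol q t‖ ≤ L * Real.exp (A * L) := by
    refine ((isHomSol_sinSol hq).norm_le hL ht).trans ?_
    simp only [sinSol_zero, sinSolDeriv_zero, norm_one, norm_zero, zero_add, one_mul]
    gcongr
  have hsinDeriv : ‖sinSolDeriv q L‖ ≤ 1 + L * Real.exp (A * L) * A := by
    have hint := norm_integral_mul_mul_le hq hL hsin (w := fun _ => 1) (fun _ _ => norm_one.le)
    simp only [mul_one] at hint
    rw [(isHomSol_sinSol hq).isPrimitive_deriv L, sinSolDeriv_zero]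
    simp only [sub_zero]
    refine (norm_add_le _ _).trans (add_le_add norm_one.le (hint.trans ?_))
    gcongr
  have hprod : 1 + A * L ≤ Real.exp (A + L) := by
    rw [Real.exp_add]
    nlinarith [Real.add_one_le_exp A, Real.add_one_le_exp L]
  calc ‖discriminant q L‖ ≤ Real.exp (A * L) + (1 + L * Real.exp (A * L) * A) :=
        (norm_add_le _ _).trans (add_le_add hcos hsinDeriv)
    _ = (1 + A * L) * Real.exp (A * L) + 1 := by ring
    _ ≤ Real.exp (A + L) * Real.exp (A * L) + Real.exp (A + L + A * L) := by
      gcongr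
      exact Real.one_le_exp (by positivity)
    _ = 2 * Real.exp (A + L + A * L) := by
      rw [← Real.exp_add]
      ring

end ComplexEnergies

/-! ### Counting zeros by Jensen's formula -/

section ZeroCount

lemma one_le_divisor {f : ℂ → ℂ} (hf : Differentiable ℂ f) {c z : ℂ} (hc : f c ≠ 0)
    (hz : f z = 0) {U : Set ℂ} (hzU : z ∈ U) : 1 ≤ MeromorphicOn.divisor f U z := by
  have hanalytic (U : Set ℂ) : AnalyticOnNhd ℂ f U := fun w _ => hf.analyticAt w
  have hne_zero : analyticOrderAt f z ≠ 0 := (hf.analyticAt z).analyticOrderAt_ne_zero.2 hz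
  have hne_top : analyticOrderAt f z ≠ ⊤ := by
    refine (hanalytic univ).analyticOrderAt_ne_top_of_isPreconnected isPreconnected_univ
      (mem_univ c) (mem_univ z) ?_
    rw [(hf.analyticAt c).analyticOrderAt_eq_zero.2 hc]
    exact ENat.zero_ne_top
  rw [MeromorphicOn.AnalyticOnNhd.divisor_apply (hanalytic U) hzU]
  lift analyticOrderAt f z to ℕ using hne_top with n
  simp only [ENat.map_natCast, WithTop.untop₀_coe, Nat.one_le_cast]
  exact Nat.one_le_iff_ne_zero.2 (by exact_mod_cast hne_zero)

lemma card_zeros_le_log {f : ℂ → ℂ} (hf : Differentiable ℂ f) {c : ℂ} {r M : ℝ} (hr : 0 < r)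
    (hM : 1 ≤ M) (hc : f c ≠ 0) (hbound : ∀ z ∈ Metric.sphere c (Real.exp 1 * r), ‖f z‖ ≤ M)
    {T : Finset ℂ} (hT : ∀ z ∈ T, z ∈ Metric.closedBall c r ∧ f z = 0) :
    (T.card : ℝ) ≤ Real.log (M / ‖f c‖) := by
  classical
  set div := MeromorphicOn.divisor f (Metric.closedBall c r)
  have hanalytic (U : Set ℂ) : AnalyticOnNhd ℂ f U := fun w _ => hf.analyticAt w
  have hR : 0 < Real.exp 1 * r := by positivity
  have hrR : r < Real.exp 1 * r := lt_mul_of_one_lt_left hr (Real.one_lt_exp_iff.2 one_pos)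
  have hjensen := AnalyticOnNhd.sum_divisor_le (c := c) (r := r) (R := Real.exp 1 * r) (M := M)
    (f := f) (by rwa [abs_of_pos hr]) (by rwa [abs_of_pos hr, abs_of_pos hR]) hM (hanalytic _) hc
    (by rwa [abs_of_pos hR])
  rw [mul_div_assoc, div_self hr.ne', mul_one, Real.log_exp, div_one, abs_of_pos hr] at hjensen
  have hfinite : div.support.Finite := div.finiteSupport (isCompact_closedBall c r)
  have hcard : (T.card : ℤ) ≤ ∑ᶠ z, div z := by
    have hsupport : Function.support div ⊆ ↑(T ∪ hfinite.toFinset) := fun z hz => by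
      simpa using Or.inr hz
    rw [finsum_eq_sum_of_support_subset _ hsupport]
    calc (T.card : ℤ) = ∑ z ∈ T, 1 := by simp
      _ ≤ ∑ z ∈ T, div z :=
        Finset.sum_le_sum fun z hz => one_le_divisor hf hc (hT z hz).2 (hT z hz).1
      _ ≤ _ := Finset.sum_le_sum_of_subset_of_nonneg Finset.subset_union_left fun z _ _ =>
        MeromorphicOn.AnalyticOnNhd.divisor_nonneg (hanalytic _) z
  exact le_trans (by exact_mod_cast hcard) hjensen

lemma exists_le_norm_discriminant_I_sub {a : ℝ} (ha : 0 < a) (Q : ℝ) :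
    ∃ δ : ℝ, 0 < δ ∧ ∀ V : ℝ → ℝ, LocallyIntegrable V → LocallyIntegrable (fun t => ‖V t‖ ^ 2) →
      (∫ t in (0 : ℝ)..a, ‖V t‖ ^ 2) ≤ Q → ∀ L, a ≤ L → ∀ τ : ℝ, |τ| ≤ 2 →
        δ ≤ ‖discriminant (energyShift (fun x => (V x : ℂ)) Complex.I) L - τ‖ := by
  obtain ⟨δ, hδ, hlower⟩ := exists_le_norm_discriminant_sub ha (z := Complex.I) (by simp) (Q + a)
  have hsq (V : ℝ → ℝ) (t : ℝ) :
      ‖energyShift (fun x => (V x : ℂ)) Complex.I t‖ ^ 2 = ‖V t‖ ^ 2 + 1 := by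
    rw [← Complex.normSq_eq_norm_sq, Complex.normSq_apply, Real.norm_eq_abs, sq_abs]
    simp [sq]
  refine ⟨δ, hδ, fun V hV hV2 hQ => hlower V hV ?_ ?_⟩
  · simp only [hsq]
    exact hV2.add continuous_const.locallyIntegrable
  · simp only [hsq]
    rw [intervalIntegral.integral_add (intervalIntegrable_of_locallyIntegrable hV2 _ _)
      intervalIntegrable_const]
    simpa using hQ

lemma norm_discriminant_energyShift_sub_le {V : ℝ → ℂ} (hV : LocallyIntegrable V) {L A ρ : ℝ}
    (hL : 0 ≤ L) (hA : (∫ t in (0 : ℝ)..L, ‖V t‖) + ρ * L ≤ A) {z τ : ℂ} (hz : ‖z‖ ≤ ρ)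
    (hτ : ‖τ‖ ≤ 2) :
    ‖discriminant (energyShift V z) L - τ‖ ≤ 4 * Real.exp (A + L + A * L) := by
  have hint : ∫ t in (0 : ℝ)..L, ‖energyShift V z t‖ ≤ A :=
    (integral_norm_energyShift_le hV z hL).trans (le_trans (by gcongr) hA)
  have hA0 : 0 ≤ A := (intervalIntegral.integral_nonneg hL fun _ _ => norm_nonneg _).trans hint
  have hD := norm_discriminant_le (locallyIntegrable_energyShift hV z) hL hint
  have hexp : 1 ≤ Real.exp (A + L + A * L) := Real.one_le_exp (by positivity)
  linarith [norm_sub_le (discriminant (energyShift V z) L) τ]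

/-- Jensen's formula applied on a disc centred at `i`, where the discriminant stays away from
`[-2, 2]`. -/
lemma exists_card_discriminant_eq_le {a : ℝ} (ha : 0 < a) (Q : ℝ) :
    ∃ C : ℝ, ∀ V : ℝ → ℝ, LocallyIntegrable V → LocallyIntegrable (fun t => ‖V t‖ ^ 2) →
      (∫ t in (0 : ℝ)..a, ‖V t‖ ^ 2) ≤ Q → ∀ L R A, a ≤ L → 0 ≤ R →
      (∫ t in (0 : ℝ)..L, ‖V t‖) + (Real.exp 1 * (R + 1) + 1) * L ≤ A → ∀ τ : ℝ, |τ| ≤ 2 →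
      ∀ T : Finset ℝ, (∀ E ∈ T, |E| ≤ R ∧ discriminant (energyShift V E) L = τ) →
        (T.card : ℝ) ≤ C + A + L + A * L := by
  obtain ⟨δ, hδ, hlower⟩ := exists_le_norm_discriminant_I_sub ha Q
  refine ⟨Real.log (4 / δ), fun V hV hV2 hQ L R A hL hR hA τ hτ T hT => ?_⟩
  have hL0 : 0 ≤ L := ha.le.trans hL
  have hV' := locallyIntegrable_ofReal hV
  set f : ℂ → ℂ := fun z => discriminant (energyShift (fun x => (V x : ℂ)) z) L - τ
  have hf : Differentiable ℂ f := fun z =>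
    ((hasDerivAt_discriminant_energyShift hV' z hL0).sub_const _).differentiableAt
  have hfI : δ ≤ ‖f Complex.I‖ := hlower V hV hV2 hQ L hL τ hτ
  have hfI_pos : 0 < ‖f Complex.I‖ := hδ.trans_le hfI
  have hA0 : 0 ≤ A := le_trans (add_nonneg
    (intervalIntegral.integral_nonneg hL0 fun _ _ => norm_nonneg _) (by positivity)) hA
  have hexp : 1 ≤ Real.exp (A + L + A * L) := Real.one_le_exp (by positivity)
  have hsphere : ∀ z ∈ Metric.sphere Complex.I (Real.exp 1 * (R + 1)),
      ‖f z‖ ≤ 4 * Real.exp (A + L + A * L) := fun z hz => by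
    refine norm_discriminant_energyShift_sub_le hV' hL0 (by simpa using hA) ?_ (by simpa using hτ)
    have htri := norm_le_norm_sub_add z Complex.I
    rwa [mem_sphere_iff_norm.1 hz, Complex.norm_I] at htri
  have hzeros : ∀ z ∈ T.map ⟨fun x : ℝ => (x : ℂ), Complex.ofReal_injective⟩,
      z ∈ Metric.closedBall Complex.I (R + 1) ∧ f z = 0 := by
    simp only [Finset.mem_map, Function.Embedding.coeFn_mk]
    rintro _ ⟨E, hE, rfl⟩
    obtain ⟨hER, hEτ⟩ := hT E hE
    have hshift : energyShift (fun x => (V x : ℂ)) E =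
        fun x => ((energyShift V E x : ℝ) : ℂ) := by simp
    refine ⟨mem_closedBall_iff_norm.2 ((norm_sub_le _ _).trans (by simpa using hER)), ?_⟩
    simp only [f, hshift, discriminant_ofReal (locallyIntegrable_energyShift hV E), hEτ, sub_self]
  have hcard := card_zeros_le_log hf (by linarith) (by linarith) (norm_pos_iff.1 hfI_pos) hsphere
    hzeros
  rw [Finset.card_map] at hcard
  calc (T.card : ℝ) ≤ Real.log (4 * Real.exp (A + L + A * L) / ‖f Complex.I‖) := hcard
    _ ≤ Real.log (4 * Real.exp (A + L + A * L) / δ) := by gcongr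
    _ = Real.log (4 / δ) + A + L + A * L := by
      rw [mul_div_right_comm, Real.log_mul (by positivity) (by positivity), Real.log_exp]
      ring

end ZeroCount

/-! ### The derivative of the discriminant inside a band -/

section BandDerivative

lemma sinSol_ne_zero {q : ℝ → ℝ} (hq : LocallyIntegrable q) {L : ℝ} (hD : |discriminant q L| < 2) :
    sinSol q L ≠ 0 := fun hzero => by
  have hW := cosSol_mul_sinSolDeriv_sub hq L
  have hD2 : discriminant q L ^ 2 < 2 ^ 2 := sq_lt_sq' (abs_lt.1 hD).1 (abs_lt.1 hD).2
  rw [hzero] at hW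
  rw [discriminant] at hD2
  nlinarith [sq_nonneg (cosSol q L - sinSolDeriv q L)]

lemma exists_isHomSol_pair {q : ℝ → ℝ} (hq : LocallyIntegrable q) {L : ℝ}
    (hD : |discriminant q L| ≤ 2) :
    ∃ u₁ v₁ u₂ v₂, IsHomSol q u₁ v₁ ∧ IsHomSol q u₂ v₂ ∧
      (∀ x, u₁ x * v₂ x - u₂ x * v₁ x =
        sinSol q L * (Real.sqrt (4 - discriminant q L ^ 2) / 2)) ∧
      ∀ x, u₁ x ^ 2 + u₂ x ^ 2 = -sinSol q L *
        ((cosSol q L - sinSolDeriv q L) * (cosSol q x * sinSol q x) -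
          sinSol q L * (cosSol q x * cosSol q x) +
          cosSolDeriv q L * (sinSol q x * sinSol q x)) := by
  set r := Real.sqrt (4 - discriminant q L ^ 2)
  have hr : r ^ 2 = 4 - discriminant q L ^ 2 :=
    Real.sq_sqrt (by nlinarith [abs_le.1 hD])
  rw [discriminant] at hr
  have hcos := isHomSol_cosSol hq
  have hsin := isHomSol_sinSol hq
  refine ⟨_, _, _, _,
    hcos.linear_combination hsin (sinSol q L) (-(cosSol q L - sinSolDeriv q L) / 2),
    hcos.linear_combination hsin 0 (r / 2), fun x => ?_, fun x => ?_⟩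
  · linear_combination sinSol q L * (r / 2) * cosSol_mul_sinSolDeriv_sub hq x
  · linear_combination
      sinSol q x ^ 2 * (1 / 4 * hr - cosSol_mul_sinSolDeriv_sub hq L)

/-- The quadratic form of the monodromy matrix is definite inside a band. Diagonalising it writes
the derivative of the discriminant as an integral of a sum of two squares. -/
lemma exists_isHomSol_pair_integral_eq {V : ℝ → ℝ} (hV : LocallyIntegrable V) (E : ℝ) {L : ℝ}
    (hL : 0 ≤ L) (hD : |discriminant (energyShift V E) L| ≤ 2) :
    ∃ u₁ v₁ u₂ v₂, IsHomSol (energyShift V E) u₁ v₁ ∧ IsHomSol (energyShift V E) u₂ v₂ ∧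
      (∀ x, u₁ x * v₂ x - u₂ x * v₁ x =
        sinSol (energyShift V E) L * (Real.sqrt (4 - discriminant (energyShift V E) L ^ 2) / 2)) ∧
      ∫ t in (0 : ℝ)..L, (u₁ t ^ 2 + u₂ t ^ 2) =
        -sinSol (energyShift V E) L * deriv (fun E => discriminant (energyShift V E) L) E := by
  have hq := locallyIntegrable_energyShift hV E
  obtain ⟨u₁, v₁, u₂, v₂, h₁, h₂, hW, hsq⟩ := exists_isHomSol_pair hq hD
  refine ⟨u₁, v₁, u₂, v₂, h₁, h₂, hW, ?_⟩
  have hcos := (isHomSol_cosSol hq).continuous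
  have hsin := (isHomSol_sinSol hq).continuous
  simp only [hsq, (hasDerivAt_discriminant_energyShift hV E hL).deriv,
    intervalIntegral.integral_const_mul]
  rw [intervalIntegral.integral_add, intervalIntegral.integral_sub]
  · simp only [intervalIntegral.integral_const_mul]
  all_goals exact Continuous.intervalIntegrable (by fun_prop) _ _

lemma IsHomSol.discriminant_mul_wronskian {𝕜 : Type*} [RCLike 𝕜] {q u₁ v₁ u₂ v₂ : ℝ → 𝕜}
    (h₁ : IsHomSol q u₁ v₁) (h₂ : IsHomSol q u₂ v₂) (b c : ℝ) :
    discriminant (fun x => q (x + b)) (c - b) * (u₁ b * v₂ b - u₂ b * v₁ b) =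
      u₁ c * v₂ b - u₂ c * v₁ b + u₁ b * v₂ c - u₂ b * v₁ c := by
  have ht₁ := h₁.transfer b (c - b)
  have ht₂ := h₂.transfer b (c - b)
  rw [sub_add_cancel] at ht₁ ht₂
  rw [ht₁.1, ht₁.2, ht₂.1, ht₂.2, discriminant]
  ring

lemma IsHomSol.abs_discriminant_mul_abs_wronskian_le {q u₁ v₁ u₂ v₂ : ℝ → ℝ}
    (h₁ : IsHomSol q u₁ v₁) (h₂ : IsHomSol q u₂ v₂) (b c : ℝ) :
    |discriminant (fun x => q (x + b)) (c - b)| * |u₁ b * v₂ b - u₂ b * v₁ b| ≤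
      ((u₁ b ^ 2 + v₁ b ^ 2 + (u₂ b ^ 2 + v₂ b ^ 2)) +
        (u₁ c ^ 2 + v₁ c ^ 2 + (u₂ c ^ 2 + v₂ c ^ 2))) / 2 := by
  rw [← abs_mul, h₁.discriminant_mul_wronskian h₂, abs_le]
  constructor
  · linarith [sq_nonneg (u₁ c + v₂ b), sq_nonneg (u₂ c - v₁ b), sq_nonneg (u₁ b + v₂ c),
      sq_nonneg (u₂ b - v₁ c)]
  · linarith [sq_nonneg (u₁ c - v₂ b), sq_nonneg (u₂ c + v₁ b), sq_nonneg (u₁ b - v₂ c),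
      sq_nonneg (u₂ b + v₁ c)]

lemma exists_mul_le_abs_deriv_discriminant {a : ℝ} (ha : 0 < a) (Q : ℝ) :
    ∃ κ : ℝ, 0 < κ ∧ ∀ V : ℝ → ℝ, LocallyIntegrable V → ∀ E : ℝ,
      LocallyIntegrable (fun t => ‖energyShift V E t‖ ^ 2) → ∀ L b c : ℝ,
      0 ≤ b → b + a ≤ L → 0 ≤ c → c + a ≤ L →
      (∫ t in b..(b + a), ‖energyShift V E t‖ ^ 2) ≤ Q →
      (∫ t in c..(c + a), ‖energyShift V E t‖ ^ 2) ≤ Q → |discriminant (energyShift V E) L| < 2 →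
      κ * |discriminant (fun x => energyShift V E (x + b)) (c - b)| *
          Real.sqrt (4 - discriminant (energyShift V E) L ^ 2) ≤
        |deriv (fun E => discriminant (energyShift V E) L) E| := by
  obtain ⟨κ, hκ, hcauchy⟩ := exists_mul_norm_cauchyData_sq_le ℝ ha Q
  refine ⟨κ / 2, half_pos hκ, fun V hV E hq2 L b c hb hbL hc hcL hQb hQc hD => ?_⟩
  obtain ⟨u₁, v₁, u₂, v₂, h₁, h₂, hW, hint⟩ :=
    exists_isHomSol_pair_integral_eq hV E (by linarith) hD.le
  set s := sinSol (energyShift V E) L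
  set r := Real.sqrt (4 - discriminant (energyShift V E) L ^ 2)
  set D' := deriv (fun E => discriminant (energyShift V E) L) E
  have hdata (x : ℝ) (hx : 0 ≤ x) (hxL : x + a ≤ L)
      (hQ : (∫ t in x..(x + a), ‖energyShift V E t‖ ^ 2) ≤ Q) :
      κ * (u₁ x ^ 2 + v₁ x ^ 2 + (u₂ x ^ 2 + v₂ x ^ 2)) ≤ |s| * |D'| := by
    have hle₁ := hcauchy _ u₁ v₁ hq2 h₁ x hQ
    have hle₂ := hcauchy _ u₂ v₂ hq2 h₂ x hQ
    simp only [Real.norm_eq_abs, sq_abs] at hle₁ hle₂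
    have hcont₁ := h₁.continuous.fun_pow 2
    have hcont₂ := h₂.continuous.fun_pow 2
    calc _ ≤ (∫ t in x..(x + a), u₁ t ^ 2) + ∫ t in x..(x + a), u₂ t ^ 2 := by linarith
      _ = ∫ t in x..(x + a), (u₁ t ^ 2 + u₂ t ^ 2) := (intervalIntegral.integral_add
          (hcont₁.intervalIntegrable _ _) (hcont₂.intervalIntegrable _ _)).symm
      _ ≤ ∫ t in (0 : ℝ)..L, (u₁ t ^ 2 + u₂ t ^ 2) :=
        intervalIntegral.integral_mono_interval hx (by linarith) hxL
          (.of_forall fun t => by positivity) ((hcont₁.add hcont₂).intervalIntegrable _ _)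
      _ ≤ |s| * |D'| := by
        rw [hint, ← abs_mul, neg_mul]
        exact neg_le_abs _
  have htrace := h₁.abs_discriminant_mul_abs_wronskian_le h₂ b c
  rw [hW, abs_mul, abs_of_nonneg (by positivity : 0 ≤ r / 2)] at htrace
  refine le_of_mul_le_mul_left ?_
    (abs_pos.2 (sinSol_ne_zero (locallyIntegrable_energyShift hV E) hD))
  linarith [mul_le_mul_of_nonneg_left htrace hκ.le, hdata b hb hbL hQb, hdata c hc hcL hQc]

end BandDerivative

/-! ### Measure of the bands -/

section BandMeasure

open Function
open scoped ENNReal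

lemma exists_partition_injOn {g g' : ℝ → ℝ} {S : Set ℝ}
    (hg : ∀ x ∈ S, HasDerivWithinAt g (g' x) S x) (hg' : ∀ x ∈ S, g' x ≠ 0) :
    ∃ t : ℕ → Set ℝ, Pairwise (Disjoint on t) ∧ (∀ k, MeasurableSet (t k)) ∧ S ⊆ ⋃ k, t k ∧
      ∀ k, InjOn g (S ∩ t k) := by
  rcases S.eq_empty_or_nonempty with rfl | hne
  · exact ⟨fun _ => ∅, fun _ _ _ => disjoint_bot_left, fun _ => .empty, empty_subset _, by simp⟩
  let r : (ℝ →L[ℝ] ℝ) → NNReal := fun A => if A 1 = 0 then 1 else ‖A 1‖₊ / 2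
  have hr (A : ℝ →L[ℝ] ℝ) : r A ≠ 0 := by
    unfold r
    split_ifs with h <;> simp [h]
  obtain ⟨t, A, hdisj, hmeas, hcover, happrox, hA⟩ :=
    exists_partition_approximatesLinearOn_of_hasFDerivWithinAt g S
      (fun x => ContinuousLinearMap.toSpanSingleton ℝ (g' x))
      (fun x hx => (hg x hx).hasFDerivWithinAt) r hr
  refine ⟨t, hdisj, hmeas, hcover, fun k x hx y hy hxy => ?_⟩
  obtain ⟨z, hz, hAz⟩ := hA hne k
  have hrk : (r (.toSpanSingleton ℝ (g' z)) : ℝ) = |g' z| / 2 := by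
    simp [r, hg' z hz]
  have hnorm : |x - y| * |g' z| ≤ |g' z| / 2 * |x - y| := by
    simpa [hAz, hrk, hxy, abs_mul] using happrox k x hx y hy
  by_contra hne'
  nlinarith [mul_pos (abs_pos.2 (sub_ne_zero.2 hne')) (abs_pos.2 (hg' z hz))]

lemma tsum_indicator_image_le {ι α β : Type*} {g : α → β} {P : ι → Set α}
    (hP : Pairwise (Disjoint on P)) {τ : β} {n : ℝ≥0∞}
    (hn : ∀ T : Finset α, (∀ x ∈ T, (∃ k, x ∈ P k) ∧ g x = τ) → (T.card : ℝ≥0∞) ≤ n) :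
    ∑' k, (g '' P k).indicator (fun _ => (1 : ℝ≥0∞)) τ ≤ n := by
  classical
  choose f hf using fun k : {k // τ ∈ g '' P k} => k.2
  have hf_inj : Injective f := fun i j hij => by
    by_contra hne
    exact disjoint_left.1 (hP (Subtype.coe_injective.ne hne)) (hf i).1 (hij ▸ (hf j).1)
  rw [ENNReal.tsum_eq_iSup_sum]
  refine iSup_le fun F => ?_
  have hcard := hn ((F.subtype (τ ∈ g '' P ·)).map ⟨f, hf_inj⟩) fun x hx => by
    obtain ⟨k, -, rfl⟩ := Finset.mem_map.1 hx
    exact ⟨⟨k, (hf k).1⟩, (hf k).2⟩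
  simpa only [Set.indicator_apply, Finset.sum_boole, Finset.card_map, Finset.card_subtype]
    using hcard

lemma ofReal_mul_volume_le_volume_image {g g' : ℝ → ℝ} {S : Set ℝ} (hS : MeasurableSet S)
    (hg : ∀ x ∈ S, HasDerivWithinAt g (g' x) S x) (hinj : InjOn g S) {m : ℝ}
    (hm : ∀ x ∈ S, m ≤ |g' x|) : ENNReal.ofReal m * volume S ≤ volume (g '' S) := by
  have harea := lintegral_image_eq_lintegral_abs_deriv_mul hS hg hinj (fun _ => 1)
  simp only [lintegral_const, one_mul, mul_one, Measure.restrict_apply_univ] at harea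
  rw [harea, ← setLIntegral_const]
  exact setLIntegral_mono' hS fun x hx => ENNReal.ofReal_le_ofReal (hm x hx)

lemma ofReal_mul_volume_le_of_card_fiber_le {g g' : ℝ → ℝ} {S I : Set ℝ} (hS : MeasurableSet S)
    (hI : MeasurableSet I) (hg : ∀ x ∈ S, HasDerivWithinAt g (g' x) S x) (hgI : MapsTo g S I)
    {m : ℝ} (hm : 0 < m) (hlow : ∀ x ∈ S, m ≤ |g' x|) {n : ℝ≥0∞}
    (hn : ∀ τ, ∀ T : Finset ℝ, (∀ x ∈ T, x ∈ S ∧ g x = τ) → (T.card : ℝ≥0∞) ≤ n) :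
    ENNReal.ofReal m * volume S ≤ n * volume I := by
  obtain ⟨t, hdisj, hmeas, hcover, hinj⟩ :=
    exists_partition_injOn hg fun x hx => abs_pos.1 (hm.trans_le (hlow x hx))
  have hSt (k : ℕ) : MeasurableSet (S ∩ t k) := hS.inter (hmeas k)
  have hderiv (k : ℕ) : ∀ x ∈ S ∩ t k, HasDerivWithinAt g (g' x) (S ∩ t k) x := fun x hx =>
    (hg x hx.1).mono inter_subset_left
  have himage (k : ℕ) : MeasurableSet (g '' (S ∩ t k)) :=
    (hSt k).image_of_continuousOn_injOn (fun x hx => (hderiv k x hx).continuousWithinAt) (hinj k)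
  have hdisjS : Pairwise (Disjoint on fun k => S ∩ t k) := fun i j hij =>
    (hdisj hij).mono inter_subset_right inter_subset_right
  have hfibre (τ : ℝ) : ∑' k, (g '' (S ∩ t k)).indicator (fun _ => (1 : ℝ≥0∞)) τ ≤
      I.indicator (fun _ => n) τ := by
    by_cases hτ : τ ∈ I
    · rw [indicator_of_mem hτ]
      exact tsum_indicator_image_le hdisjS fun T hT =>
        hn τ T fun x hx => ⟨(hT x hx).1.choose_spec.1, (hT x hx).2⟩
    · rw [indicator_of_notMem hτ, nonpos_iff_eq_zero, ENNReal.tsum_eq_zero]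
      refine fun k => indicator_of_notMem ?_ _
      rintro ⟨x, hx, rfl⟩
      exact hτ (hgI hx.1)
  calc ENNReal.ofReal m * volume S = ENNReal.ofReal m * volume (⋃ k, S ∩ t k) := by
        rw [← inter_iUnion, inter_eq_left.2 hcover]
    _ = ∑' k, ENNReal.ofReal m * volume (S ∩ t k) := by
        rw [measure_iUnion hdisjS hSt, ENNReal.tsum_mul_left]
    _ ≤ ∑' k, volume (g '' (S ∩ t k)) := ENNReal.tsum_le_tsum fun k =>
        ofReal_mul_volume_le_volume_image (hSt k) (hderiv k) (hinj k) fun x hx => hlow x hx.1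
    _ = ∫⁻ τ, ∑' k, (g '' (S ∩ t k)).indicator (fun _ => (1 : ℝ≥0∞)) τ := by
        rw [lintegral_tsum fun k => (measurable_const.indicator (himage k)).aemeasurable]
        simp only [lintegral_indicator_const (himage _), one_mul]
    _ ≤ ∫⁻ τ, I.indicator (fun _ => n) τ := lintegral_mono hfibre
    _ = n * volume I := lintegral_indicator_const hI n

lemma hasDerivAt_arcsin_half {D : ℝ → ℝ} {D' E : ℝ} (hD : HasDerivAt D D' E) (hE : |D E| < 2) :
    HasDerivAt (fun x => Real.arcsin (D x / 2)) (D' / √(4 - D E ^ 2)) E := by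
  obtain ⟨hlo, hhi⟩ := abs_lt.1 hE
  refine ((Real.hasDerivAt_arcsin (x := D E / 2) (by linarith) (by linarith)).comp E
    (hD.div_const 2)).congr_deriv ?_
  rw [show 4 - D E ^ 2 = 2 ^ 2 * (1 - (D E / 2) ^ 2) by ring, Real.sqrt_mul (by norm_num),
    Real.sqrt_sq (by norm_num), one_div_mul_eq_div, div_div]

lemma measure_inter_abs_le_le {α : Type*} [MeasurableSpace α] {μ : Measure α} {f : α → ℝ}
    {S : Set α} {c : ℝ} (hc : 0 ≤ c) (hpos : μ (S ∩ {x | f x = c}) = 0)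
    (hneg : μ (S ∩ {x | f x = -c}) = 0) :
    μ (S ∩ {x | |f x| ≤ c}) ≤ μ (S ∩ {x | |f x| < c}) := by
  have hsubset : S ∩ {x | |f x| ≤ c} ⊆
      (S ∩ {x | |f x| < c}) ∪ (S ∩ {x | f x = c} ∪ S ∩ {x | f x = -c}) := by
    rintro x ⟨hx, hfx⟩
    rcases lt_or_eq_of_le (show |f x| ≤ c from hfx) with h | h
    · exact .inl ⟨hx, h⟩
    · exact .inr (((abs_eq hc).1 h).imp (⟨hx, ·⟩) (⟨hx, ·⟩))
  refine (measure_mono hsubset).trans ((measure_union_le _ _).trans_eq ?_)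
  rw [measure_union_null hpos hneg, add_zero]

lemma volume_inter_abs_le_two_le {D D' : ℝ → ℝ} (hD : ∀ E, HasDerivAt D (D' E) E) {S : Set ℝ}
    (hS : MeasurableSet S) {m : ℝ} (hm : 0 < m)
    (hlow : ∀ E ∈ S, |D E| < 2 → m * √(4 - D E ^ 2) ≤ |D' E|) {n : ℝ}
    (hn : ∀ τ, |τ| ≤ 2 → ∀ T : Finset ℝ, (∀ E ∈ T, E ∈ S ∧ D E = τ) → (T.card : ℝ) ≤ n) :
    volume (S ∩ {E | |D E| ≤ 2}) ≤ ENNReal.ofReal (Real.pi * n / m) := by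
  have hDc : Continuous D := continuous_iff_continuousAt.2 fun E => (hD E).continuousAt
  have hfibre (τ : ℝ) (hτ : |τ| ≤ 2) : volume (S ∩ {E | D E = τ}) = 0 := by
    refine Set.Finite.measure_zero (not_infinite.1 fun hinf => ?_) _
    obtain ⟨k, hk⟩ := exists_nat_gt n
    obtain ⟨T, hT, rfl⟩ := hinf.exists_subset_card_eq k
    exact (hn τ hτ T fun E hE => hT hE).not_gt hk
  have hsqrt (E : ℝ) (hE : |D E| < 2) : 0 < √(4 - D E ^ 2) := by
    have hE' := abs_lt.1 hE
    exact Real.sqrt_pos.2 (by nlinarith)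
  have harea := ofReal_mul_volume_le_of_card_fiber_le
    (hS.inter (isOpen_lt hDc.abs continuous_const).measurableSet)
    measurableSet_Icc (fun E hE => (hasDerivAt_arcsin_half (hD E) hE.2).hasDerivWithinAt)
    (fun E _ => Real.arcsin_mem_Icc _) hm
    (fun E hE => by
      rw [abs_div, abs_of_pos (hsqrt E hE.2), le_div_iff₀ (hsqrt E hE.2)]
      exact hlow E hE.1 hE.2)
    (n := ENNReal.ofReal n) fun τ T hT => by
      rw [← ENNReal.ofReal_natCast]
      refine ENNReal.ofReal_le_ofReal (hn (2 * Real.sin τ) ?_ T fun E hE => ?_)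
      · rw [abs_mul, abs_two]
        linarith [Real.abs_sin_le_one τ]
      · obtain ⟨hlo, hhi⟩ := abs_lt.1 (show |D E| < 2 from (hT E hE).1.2)
        refine ⟨(hT E hE).1.1, ?_⟩
        rw [← (hT E hE).2, Real.sin_arcsin (by linarith) (by linarith)]
        ring
  refine (measure_inter_abs_le_le zero_le_two (hfibre 2 (by simp)) (hfibre (-2) (by simp))).trans ?_
  rw [ENNReal.ofReal_div_of_pos hm, ENNReal.le_div_iff_mul_le (by simp [hm]) (by simp), mul_comm]
  refine harea.trans_eq ?_
  rw [Real.volume_Icc, show Real.pi / 2 - -(Real.pi / 2) = Real.pi by ring, mul_comm,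
    ENNReal.ofReal_mul Real.pi_pos.le]

end BandMeasure

/-! ### Distributional solutions -/

section WeakSolutions

open Function

/-- Real test functions on the line: smooth functions with compact support. -/
structure IsTestFunction (φ : ℝ → ℝ) : Prop where
  contDiff : ContDiff ℝ (⊤ : ℕ∞) φ
  hasCompactSupport : HasCompactSupport φ

namespace IsTestFunction

variable {φ η : ℝ → ℝ}

protected lemma continuous (hφ : IsTestFunction φ) : Continuous φ := hφ.contDiff.continuous

protected lemma differentiable (hφ : IsTestFunction φ) : Differentiable ℝ φ :=
  (contDiff_infty_iff_deriv.1 hφ.contDiff).1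

protected lemma deriv (hφ : IsTestFunction φ) : IsTestFunction (deriv φ) :=
  ⟨(contDiff_infty_iff_deriv.1 hφ.contDiff).2, hφ.hasCompactSupport.deriv⟩

lemma sub_const_mul (hφ : IsTestFunction φ) (hη : IsTestFunction η) (k : ℝ) :
    IsTestFunction (fun x => φ x - k * η x) :=
  ⟨hφ.contDiff.sub (contDiff_const.mul hη.contDiff),
    hφ.hasCompactSupport.sub hη.hasCompactSupport.mul_left⟩

lemma deriv_sub_const_mul (hφ : IsTestFunction φ) (hη : IsTestFunction η) (k x : ℝ) :
    deriv (fun x => φ x - k * η x) x = deriv φ x - k * deriv η x :=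
  ((hφ.differentiable x).hasDerivAt.sub ((hη.differentiable x).hasDerivAt.const_mul k)).deriv

protected lemma integrable (hφ : IsTestFunction φ) : Integrable φ :=
  hφ.continuous.integrable_of_hasCompactSupport hφ.hasCompactSupport

lemma integrable_mul (hφ : IsTestFunction φ) {w : ℝ → ℝ} (hw : LocallyIntegrable w) :
    Integrable (fun x => w x * φ x) :=
  hw.integrable_smul_right_of_hasCompactSupport hφ.continuous hφ.hasCompactSupport

lemma isPrimitive (hφ : IsTestFunction φ) : IsPrimitive (deriv φ) φ := fun x => by
  rw [intervalIntegral.integral_deriv_eq_sub (fun t _ => hφ.differentiable t)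
    (hφ.deriv.continuous.intervalIntegrable _ _), add_sub_cancel]

lemma exists_tsupport_subset_Ioo (hφ : IsTestFunction φ) :
    ∃ R > 0, tsupport φ ⊆ Ioo (-R) R := by
  obtain ⟨R, hR0, hR⟩ := hφ.hasCompactSupport.isCompact.isBounded.subset_ball_lt 0 0
  exact ⟨R, hR0, by simpa [Real.ball_eq_Ioo] using hR⟩

lemma exists_deriv_eq (hφ : IsTestFunction φ) (h0 : ∫ x, φ x = 0) :
    ∃ Φ, IsTestFunction Φ ∧ deriv Φ = φ := by
  obtain ⟨R, -, hR⟩ := hφ.exists_tsupport_subset_Ioo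
  have hsupp : support φ ⊆ Ioo (-R) R := (subset_tsupport φ).trans hR
  have hderiv (x : ℝ) : HasDerivAt (fun x => ∫ t in (-R)..x, φ t) (φ x) x :=
    hφ.continuous.integral_hasStrictDerivAt (-R) x |>.hasDerivAt
  have hderiv_eq : deriv (fun x => ∫ t in (-R)..x, φ t) = φ := funext fun x => (hderiv x).deriv
  refine ⟨_, ⟨contDiff_infty_iff_deriv.2 ⟨fun x => (hderiv x).differentiableAt, ?_⟩, ?_⟩,
    hderiv_eq⟩
  · rw [hderiv_eq]
    exact hφ.contDiff
  refine .intro (isCompact_Icc (a := -R) (b := R)) fun x hx => ?_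
  rcases lt_or_ge x (-R) with hlt | hge
  · rw [← intervalIntegral.integral_zero (a := -R) (b := x)]
    refine intervalIntegral.integral_congr fun t ht => notMem_support.1 fun ht' => ?_
    rw [uIcc_of_ge hlt.le] at ht
    exact (hsupp ht').1.not_ge ht.2
  · have hRx : R ≤ x := le_of_not_ge fun hle => hx ⟨hge, hle⟩
    rw [intervalIntegral.integral_eq_integral_of_support_subset, h0]
    exact hsupp.trans fun t ht => ⟨ht.1, ht.2.le.trans hRx⟩

lemma exists_deriv_eq_sub (hφ : IsTestFunction φ) (hη : IsTestFunction η) (h1 : ∫ x, η x = 1) :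
    ∃ Φ, IsTestFunction Φ ∧ deriv Φ = fun x => φ x - (∫ t, φ t) * η x :=
  (hφ.sub_const_mul hη _).exists_deriv_eq <| by
    rw [integral_sub hφ.integrable (hη.integrable.const_mul _), integral_const_mul, h1, mul_one,
      sub_self]

end IsTestFunction

lemma exists_isTestFunction_integral_eq_one :
    ∃ η : ℝ → ℝ, IsTestFunction η ∧ ∫ x, η x = 1 := by
  let b : ContDiffBump (0 : ℝ) := ⟨1, 2, by norm_num, by norm_num⟩
  exact ⟨b.normed volume, ⟨b.contDiff_normed, b.hasCompactSupport_normed⟩, b.integral_normed⟩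

lemma IsPrimitive.integral_mul_deriv {f F φ : ℝ → ℝ} (h : IsPrimitive f F)
    (hf : LocallyIntegrable f) (hφ : IsTestFunction φ) :
    ∫ x, F x * deriv φ x = -∫ x, f x * φ x := by
  obtain ⟨R, -, hR⟩ := hφ.exists_tsupport_subset_Ioo
  have hdφ := hφ.deriv.continuous.locallyIntegrable (μ := volume)
  have hsum := (h.mul hφ.isPrimitive hf hdφ).sub_eq_integral
    ((locallyIntegrable_mul_continuous hf hφ.continuous).add
      (locallyIntegrable_continuous_mul (h.continuous hf) hdφ)) (-R) R
  have hφ0 {x : ℝ} (hx : x ∉ Ioo (-R) R) : φ x = 0 :=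
    image_eq_zero_of_notMem_tsupport fun hx' => hx (hR hx')
  rw [hφ0 (by simp), hφ0 (by simp), mul_zero, mul_zero, sub_zero,
    intervalIntegral.integral_eq_integral_of_support_subset, integral_add (hφ.integrable_mul hf)
      (hφ.deriv.integrable_mul (h.continuous hf).locallyIntegrable)] at hsum
  · linarith
  · refine support_subset_iff'.2 fun x hx => ?_
    have hx' : x ∉ tsupport φ := fun hmem => hx (Ioo_subset_Ioc_self (hR hmem))
    rw [image_eq_zero_of_notMem_tsupport hx',
      notMem_support.1 fun hmem => hx' (support_deriv_subset hmem), mul_zero, mul_zero, add_zero]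

lemma integral_mul_neg_deriv_deriv_add {q g φ : ℝ → ℝ} (hg : LocallyIntegrable g)
    (hqg : LocallyIntegrable (fun x => q x * g x)) (hφ : IsTestFunction φ) :
    ∫ x, g x * (-(deriv (deriv φ) x) + q x * φ x) =
      (∫ x, q x * g x * φ x) - ∫ x, g x * deriv (deriv φ) x := by
  rw [← integral_sub (hφ.integrable_mul hqg) (hφ.deriv.deriv.integrable_mul hg)]
  exact integral_congr_ae (.of_forall fun x => by ring)

lemma IsSol.integral_mul_eq {q f u v φ : ℝ → ℝ} (h : IsSol q f u v) (hφ : IsTestFunction φ) :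
    ∫ x, u x * (-(deriv (deriv φ) x) + q x * φ x) = ∫ x, f x * φ x := by
  have hqu := locallyIntegrable_mul_continuous h.locallyIntegrable_potential h.continuous
  have hu := h.isPrimitive.integral_mul_deriv h.locallyIntegrable_deriv hφ.deriv
  have hv := h.isPrimitive_deriv.integral_mul_deriv h.locallyIntegrable_deriv_deriv hφ
  simp only [sub_mul] at hv
  rw [integral_sub (hφ.integrable_mul hqu) (hφ.integrable_mul h.locallyIntegrable_forcing)] at hv
  rw [integral_mul_neg_deriv_deriv_add h.continuous.locallyIntegrable hqu hφ]
  linarith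

lemma exists_ae_eq_const_of_integral_mul_deriv {w : ℝ → ℝ} (hw : LocallyIntegrable w)
    (h : ∀ φ, IsTestFunction φ → ∫ x, w x * deriv φ x = 0) : ∃ k, ∀ᵐ x, w x = k := by
  obtain ⟨η, hη, hη1⟩ := exists_isTestFunction_integral_eq_one
  set k := ∫ x, w x * η x with hk
  suffices hzero : ∀ᵐ x, w x - k = 0 from ⟨k, hzero.mono fun x hx => sub_eq_zero.1 hx⟩
  refine ae_eq_zero_of_integral_contDiff_smul_eq_zero
    (hw.sub continuous_const.locallyIntegrable) fun φ hsmooth hsupp => ?_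
  have hφ : IsTestFunction φ := ⟨hsmooth, hsupp⟩
  obtain ⟨Φ, hΦ, hdΦ⟩ := hφ.exists_deriv_eq_sub hη hη1
  have hpair := h Φ hΦ
  simp only [hdΦ, mul_sub, mul_left_comm (w _)] at hpair
  rw [integral_sub (hφ.integrable_mul hw) ((hη.integrable_mul hw).const_mul _),
    integral_const_mul, ← hk] at hpair
  simp only [smul_eq_mul, mul_comm (φ _), sub_mul]
  rw [integral_sub (hφ.integrable_mul hw) (hφ.integrable.const_mul k), integral_const_mul]
  linarith

lemma exists_isPrimitive_of_integral_mul_deriv {f w : ℝ → ℝ} (hf : LocallyIntegrable f)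
    (hw : LocallyIntegrable w)
    (h : ∀ φ, IsTestFunction φ → ∫ x, w x * deriv φ x = -∫ x, f x * φ x) :
    ∃ F, IsPrimitive f F ∧ ∀ᵐ x, w x = F x := by
  have hP : IsPrimitive f (fun x => ∫ t in (0 : ℝ)..x, f t) := fun x => by simp
  have hPc := (hP.continuous hf).locallyIntegrable (μ := volume)
  obtain ⟨k, hk⟩ := exists_ae_eq_const_of_integral_mul_deriv (hw.sub hPc) fun φ hφ => by
    simp only [Pi.sub_apply, sub_mul]
    rw [integral_sub (hφ.deriv.integrable_mul hw) (hφ.deriv.integrable_mul hPc), h φ hφ,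
      hP.integral_mul_deriv hf hφ, sub_self]
  refine ⟨fun x => k + ∫ t in (0 : ℝ)..x, f t, fun x => by simp, ?_⟩
  filter_upwards [hk] with x hx
  exact sub_eq_iff_eq_add.1 hx

lemma exists_isPrimitive_of_integral_mul_deriv_deriv {f g : ℝ → ℝ} (hf : LocallyIntegrable f)
    (hg : LocallyIntegrable g)
    (h : ∀ φ, IsTestFunction φ → ∫ x, g x * deriv (deriv φ) x = ∫ x, f x * φ x) :
    ∃ v, IsPrimitive f v ∧ ∀ φ, IsTestFunction φ → ∫ x, g x * deriv φ x = -∫ x, v x * φ x := by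
  obtain ⟨η, hη, hη1⟩ := exists_isTestFunction_integral_eq_one
  have hP : IsPrimitive f (fun x => ∫ t in (0 : ℝ)..x, f t) := fun x => by simp
  set P := fun x => ∫ t in (0 : ℝ)..x, f t
  have hPc := (hP.continuous hf).locallyIntegrable (μ := volume)
  set c := (∫ x, g x * deriv η x) + ∫ x, P x * η x
  refine ⟨fun x => P x - c, fun x => by beta_reduce; rw [hP x]; ring, fun φ hφ => ?_⟩
  obtain ⟨Φ, hΦ, hdΦ⟩ := hφ.exists_deriv_eq_sub hη hη1
  have hleft := h Φ hΦ
  have hright := hP.integral_mul_deriv hf hΦ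
  simp only [hdΦ, hφ.deriv_sub_const_mul hη, mul_sub, mul_left_comm _ (∫ t, φ t)] at hleft hright
  rw [integral_sub (hφ.deriv.integrable_mul hg) ((hη.deriv.integrable_mul hg).const_mul _),
    integral_const_mul] at hleft
  rw [integral_sub (hφ.integrable_mul hPc) ((hη.integrable_mul hPc).const_mul _),
    integral_const_mul] at hright
  simp only [sub_mul]
  rw [integral_sub (hφ.integrable_mul hPc) (hφ.integrable.const_mul _), integral_const_mul]
  simp only [c]
  linarith

lemma exists_isSol_of_integral_mul_eq {q f g : ℝ → ℝ} (hq : LocallyIntegrable q)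
    (hf : LocallyIntegrable f) (hg : LocallyIntegrable g)
    (hqg : LocallyIntegrable (fun x => q x * g x))
    (h : ∀ φ, IsTestFunction φ →
      ∫ x, g x * (-(deriv (deriv φ) x) + q x * φ x) = ∫ x, f x * φ x) :
    ∃ u v, IsSol q f u v ∧ ∀ᵐ x, g x = u x := by
  have hqgf : LocallyIntegrable (fun x => q x * g x - f x) := hqg.sub hf
  obtain ⟨v, hv, hgv⟩ := exists_isPrimitive_of_integral_mul_deriv_deriv hqgf hg fun φ hφ => by
    have hpair := h φ hφ
    rw [integral_mul_neg_deriv_deriv_add hg hqg hφ] at hpair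
    simp only [sub_mul]
    rw [integral_sub (hφ.integrable_mul hqg) (hφ.integrable_mul hf)]
    linarith
  have hvc := hv.continuous hqgf
  obtain ⟨u, hu, hgu⟩ := exists_isPrimitive_of_integral_mul_deriv hvc.locallyIntegrable hg hgv
  refine ⟨u, v, ⟨hq, hf, hu.continuous hvc.locallyIntegrable, hu, fun x => ?_⟩, hgu⟩
  rw [hv x]
  congr 1
  refine intervalIntegral.integral_congr_ae ?_
  filter_upwards [hgu] with t ht _
  rw [ht]

end WeakSolutions

/-! ### Delay equations and distributional solutions -/

section DelayEquation

lemma norm_sq_Lp {α : Type*} [MeasurableSpace α] {μ : Measure α} (f : Lp ℝ 2 μ) :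
    ‖f‖ ^ 2 = ∫ x, f x ^ 2 ∂μ := by
  rw [← real_inner_self_eq_norm_sq, L2.inner_def]
  simp [sq]

lemma locallyIntegrable_Lp (f : L2R) : LocallyIntegrable f :=
  (Lp.memLp f).locallyIntegrable one_le_two

lemma locallyIntegrable_mul_of_sq {q g : ℝ → ℝ} (hq : LocallyIntegrable q)
    (hg : LocallyIntegrable g) (hq2 : LocallyIntegrable (fun x => ‖q x‖ ^ 2))
    (hg2 : LocallyIntegrable (fun x => ‖g x‖ ^ 2)) : LocallyIntegrable (fun x => q x * g x) := by
  refine (hq2.add hg2).mono (hq.aestronglyMeasurable.mul hg.aestronglyMeasurable)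
    (.of_forall fun x => ?_)
  rw [Pi.add_apply, norm_mul, Real.norm_of_nonneg (by positivity : 0 ≤ ‖q x‖ ^ 2 + ‖g x‖ ^ 2)]
  nlinarith [sq_nonneg (‖q x‖ - ‖g x‖), sq_nonneg ‖q x‖, sq_nonneg ‖g x‖]

lemma memLp_comp_add_right {g : ℝ → ℝ} (hg : MemLp g 2) (s : ℝ) :
    MemLp (fun x => g (x + s)) 2 :=
  hg.comp_measurePreserving (measurePreserving_add_right volume s)

lemma abs_integral_mul_le {α : Type*} [MeasurableSpace α] {μ : Measure α} {g ψ : α → ℝ}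
    (hg : MemLp g 2 μ) (hψ : MemLp ψ 2 μ) :
    |∫ x, g x * ψ x ∂μ| ≤ ((∫ x, g x ^ 2 ∂μ) + ∫ x, ψ x ^ 2 ∂μ) / 2 := by
  rw [← integral_add hg.integrable_sq hψ.integrable_sq, ← integral_div]
  refine abs_integral_le_integral_abs.trans (integral_mono (hg.integrable_mul hψ).abs
    ((hg.integrable_sq.add hψ.integrable_sq).div_const 2) fun x => ?_)
  rw [abs_mul]
  nlinarith [sq_nonneg (|g x| - |ψ x|), sq_abs (g x), sq_abs (ψ x)]

lemma abs_integral_comp_add_right_mul_le {g ψ : ℝ → ℝ} (hg : MemLp g 2) (hψ : MemLp ψ 2) (s : ℝ) :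
    |∫ x, g (x + s) * ψ x| ≤ ((∫ x, g x ^ 2) + ∫ x, ψ x ^ 2) / 2 := by
  simpa only [integral_add_right_eq_self (fun x => g x ^ 2)] using
    abs_integral_mul_le (memLp_comp_add_right hg s) hψ

namespace IsTestFunction

variable {φ q : ℝ → ℝ}

protected lemma memLp (hφ : IsTestFunction φ) : MemLp φ 2 :=
  hφ.continuous.memLp_of_hasCompactSupport hφ.hasCompactSupport

lemma memLp_neg_deriv_deriv_add (hφ : IsTestFunction φ) (hq : LocallyIntegrable q)
    (hq2 : LocallyIntegrable (fun x => ‖q x‖ ^ 2)) :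
    MemLp (fun x => -(deriv (deriv φ) x) + q x * φ x) 2 := by
  refine hφ.deriv.deriv.memLp.neg.add ?_
  rw [memLp_two_iff_integrable_sq
    (locallyIntegrable_mul_continuous hq hφ.continuous).aestronglyMeasurable]
  have hsupp : HasCompactSupport (fun x => φ x ^ 2) :=
    hφ.hasCompactSupport.comp_left (g := (· ^ 2)) (zero_pow two_ne_zero)
  refine (hq2.integrable_smul_right_of_hasCompactSupport (hφ.continuous.pow 2) hsupp).congr
    (.of_forall fun x => ?_)
  simp [mul_pow]

end IsTestFunction

lemma eq_zero_of_bounded_of_recurrence {r : ℤ → ℝ} {M D : ℝ} (hM : ∀ n, |r n| ≤ M)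
    (hD : 2 < |D|) (hr : ∀ n, r (n + 1) + r (n - 1) = D * r n) (n : ℤ) : r n = 0 := by
  have hD0 : 0 < |D| := two_pos.trans hD
  have hdecay (k : ℕ) : ∀ n, |r n| ≤ M * (2 / |D|) ^ k := by
    induction k with
    | zero => simpa using hM
    | succ k ih =>
      intro n
      have hstep : |D| * |r n| ≤ |r (n + 1)| + |r (n - 1)| := by
        rw [← abs_mul, ← hr]
        exact abs_add_le _ _
      rw [pow_succ, ← mul_assoc, mul_div_assoc', le_div_iff₀ hD0]
      linarith [ih (n + 1), ih (n - 1)]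
  have hlim := (tendsto_pow_atTop_nhds_zero_of_lt_one (by positivity)
    ((div_lt_one hD0).2 hD)).const_mul M
  rw [mul_zero] at hlim
  exact abs_nonpos_iff.1 (ge_of_tendsto' hlim fun k => hdecay k n)

variable {q f u v g φ : ℝ → ℝ} {L : ℝ}

lemma IsSol.integral_comp_add_int_mul_eq (hL : Function.Periodic q L) (hu : IsSol q f u v)
    (hφ : IsTestFunction φ) (n : ℤ) :
    ∫ x, u (x + n * L) * (-(deriv (deriv φ) x) + q x * φ x) = ∫ x, f (x + n * L) * φ x := by
  have hshift := hu.comp_add_right (n * L)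
  rw [funext (hL.int_mul n)] at hshift
  exact hshift.integral_mul_eq hφ

/-- Pairing the difference `g - u` with the translates of a test function gives a bounded solution
of `r (n + 1) + r (n - 1) = D r n`, which vanishes because `2 < |D|`. -/
lemma integral_mul_eq_of_delay_eq (hL : Function.Periodic q L)
    (hq2 : LocallyIntegrable (fun x => ‖q x‖ ^ 2)) (hf : MemLp f 2) (hg : MemLp g 2)
    (hu : IsSol q f u v) {D : ℝ} (hD : 2 < |D|)
    (hdelay : ∀ᵐ x, g (x + L) + g (x - L) - D * g x = u (x + L) + u (x - L) - D * u x)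
    (hφ : IsTestFunction φ) :
    ∫ x, g x * (-(deriv (deriv φ) x) + q x * φ x) = ∫ x, f x * φ x := by
  have hψ := hφ.memLp_neg_deriv_deriv_add hu.locallyIntegrable_potential hq2
  have hint (n : ℤ) := hu.integral_comp_add_int_mul_eq hL hφ n
  have hqu (s : ℝ) : Integrable fun x => u (x + s) * (-(deriv (deriv φ) x) + q x * φ x) := by
    have hus : Continuous (fun x => u (x + s)) := hu.continuous.comp (continuous_add_const s)
    refine ((hφ.integrable_mul (locallyIntegrable_mul_continuous
      hu.locallyIntegrable_potential hus)).sub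
      (hφ.deriv.deriv.integrable_mul hus.locallyIntegrable)).congr (.of_forall fun x => ?_)
    simp only [Pi.sub_apply]
    ring
  set ψ := fun x => -(deriv (deriv φ) x) + q x * φ x
  have hgψ (s : ℝ) : Integrable fun x => g (x + s) * ψ x :=
    (memLp_comp_add_right hg s).integrable_mul hψ
  let w (n : ℤ) (x : ℝ) := g (x + n * L) * ψ x - u (x + n * L) * ψ x
  have hw (n : ℤ) : Integrable (w n) := (hgψ _).sub (hqu _)
  have hr (n : ℤ) : ∫ x, w n x = (∫ x, g (x + n * L) * ψ x) - ∫ x, f (x + n * L) * φ x := by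
    rw [← hint n, ← integral_sub (hgψ _) (hqu _)]
  have hzero := eq_zero_of_bounded_of_recurrence (r := fun n => ∫ x, w n x)
    (fun n => by
      rw [hr]
      exact (abs_sub _ _).trans (add_le_add (abs_integral_comp_add_right_mul_le hg hψ _)
        (abs_integral_comp_add_right_mul_le hf hφ.memLp _))) hD
    (fun n => by
      rw [← integral_add (hw _) (hw _), ← integral_const_mul]
      refine integral_congr_ae ?_
      filter_upwards [(measurePreserving_add_right volume (n * L)).quasiMeasurePreserving.ae
        hdelay] with x hx
      simp only [w, Int.cast_add, Int.cast_sub, Int.cast_one, add_mul, sub_mul, one_mul,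
        ← add_assoc, ← add_sub_assoc]
      linear_combination ψ x * hx) 0
  rw [hr] at hzero
  simpa [sub_eq_zero] using hzero

end DelayEquation

/-! ### Energies outside the bands lie in the resolvent set -/

section ResolventSet

variable {q f u v : ℝ → ℝ} {L : ℝ}

lemma IsSol.norm_le_of_eq_zero_at {𝕜 : Type*} [RCLike 𝕜] {q f u v : ℝ → 𝕜} (h : IsSol q f u v)
    {s ℓ x : ℝ} (hℓ : 0 ≤ ℓ) (hu : u s = 0) (hv : v s = 0) (hx : x ∈ Icc s (s + ℓ)) :
    ‖u x‖ ≤ ℓ * Real.exp ((∫ t in s..s + ℓ, ‖q t‖) * ℓ) * ∫ t in s..s + ℓ, ‖f t‖ := by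
  have hnonneg (g : ℝ → 𝕜) : 0 ≤ ∫ t in s..s + ℓ, ‖g t‖ :=
    intervalIntegral.integral_nonneg (by linarith) fun _ _ => norm_nonneg _
  have hshift (g : ℝ → 𝕜) : ∫ t in (0 : ℝ)..ℓ, ‖g (t + s)‖ = ∫ t in s..s + ℓ, ‖g t‖ := by
    rw [intervalIntegral.integral_comp_add_right (fun t => ‖g t‖), zero_add, add_comm ℓ]
  have hbound := (h.comp_add_right s).norm_le ℓ (x := x - s)
    (by rw [uIcc_of_le hℓ]; constructor <;> linarith [hx.1, hx.2])
  simp only [sub_add_cancel, zero_add, hu, hv, norm_zero, zero_mul, hshift,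
    abs_of_nonneg (hnonneg _), abs_of_nonneg hℓ] at hbound
  linarith

/-- The combination `u (x + L) + u (x - L) - D u x` does not change when a homogeneous solution is
added to `u`, so the Cauchy data of `u` at `x - L` may be taken to be zero. -/
lemma exists_abs_delay_le (hq : LocallyIntegrable q) (hL0 : 0 < L) (hL : Function.Periodic q L) :
    ∃ C, 0 ≤ C ∧ ∀ f u v : ℝ → ℝ, IsSol q f u v → ∀ x,
      |u (x + L) + u (x - L) - discriminant q L * u x| ≤ C * ∫ s in (-L)..L, |f (x + s)| := by
  set A := ∫ t in (0 : ℝ)..2 * L, ‖q t‖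
  refine ⟨(1 + |discriminant q L|) * (2 * L * Real.exp (A * (2 * L))), by positivity,
    fun f u v h x => ?_⟩
  have hsol := isSol_cauchySol (locallyIntegrable_comp_add_right hq (x - L))
    (locallyIntegrable_comp_add_right h.locallyIntegrable_forcing (x - L)) (0 : ℝ) 0
  have hw := hsol.comp_add_right (-(x - L))
  simp only [neg_add_cancel_right] at hw
  set w := fun y => cauchySol (fun y => q (y + (x - L))) (fun y => f (y + (x - L))) 0 0
    (y + -(x - L))
  have hw0 : w (x - L) = 0 := by simp [w]
  have hbound {y : ℝ} (hy : y ∈ Icc (x - L) (x + L)) :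
      |w y| ≤ 2 * L * Real.exp (A * (2 * L)) * ∫ s in (-L)..L, |f (x + s)| := by
    have hnorm := hw.norm_le_of_eq_zero_at (s := x - L) (ℓ := 2 * L) (x := y) (by positivity) hw0
      (by simp) (by convert hy using 2; ring)
    have hper : Function.Periodic (fun t => ‖q t‖) (2 * L) := fun t => by
      simp only [two_mul, ← add_assoc, hL _]
    have hA := hper.intervalIntegral_add_eq (x - L) 0
    rw [zero_add] at hA
    rwa [hA, show x - L + 2 * L = x + L by ring, sub_eq_add_neg,
      ← intervalIntegral.integral_comp_add_left (fun t => ‖f t‖)] at hnorm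
  have hhom := h.sub hw
  simp only [sub_self] at hhom
  have hdelay := (IsHomSol.add_sub_eq_discriminant_mul hhom hL x).1
  have heq : u (x + L) + u (x - L) - discriminant q L * u x =
      w (x + L) - discriminant q L * w x := by
    linear_combination hdelay + hw0
  calc |u (x + L) + u (x - L) - discriminant q L * u x|
      ≤ |w (x + L)| + |discriminant q L| * |w x| := by
        rw [heq, ← abs_mul]
        exact abs_sub _ _
    _ ≤ _ := add_le_add (hbound ⟨by linarith, le_rfl⟩)
      (mul_le_mul_of_nonneg_left (hbound ⟨by linarith, by linarith⟩) (abs_nonneg _))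
    _ = _ := by ring

lemma integrable_integral_comp_add {g : ℝ → ℝ} (hg : Integrable g) {a b : ℝ} (hab : a ≤ b) :
    Integrable (fun x => ∫ s in a..b, g (x + s)) ∧
      ∫ x, ∫ s in a..b, g (x + s) = (b - a) * ∫ x, g x := by
  have hprod : Integrable (fun z : ℝ × ℝ => g (z.1 + z.2))
      (volume.prod (volume.restrict (Ioc a b))) :=
    (measurePreserving_add_prod volume (volume.restrict (Ioc a b))).integrable_comp_of_integrable
      (hg.comp_fst _)
  simp only [intervalIntegral.integral_of_le hab]
  refine ⟨hprod.integral_prod_left, ?_⟩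
  rw [integral_integral_swap hprod]
  simp only [integral_add_right_eq_self g, integral_const, smul_eq_mul, measureReal_restrict_apply,
    MeasurableSet.univ, univ_inter, Real.volume_real_Ioc_of_le hab]

lemma sq_integral_abs_comp_add_le (f : L2R) {a b : ℝ} (hab : a ≤ b) (x : ℝ) :
    (∫ s in a..b, |f (x + s)|) ^ 2 ≤ (b - a) * ∫ s in a..b, f (x + s) ^ 2 := by
  have hf : LocallyIntegrable (fun s => f (x + s)) := by
    simpa only [add_comm] using locallyIntegrable_comp_add_right (locallyIntegrable_Lp f) x
  have hf2 : Integrable (fun s => f (x + s) ^ 2) := by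
    simpa only [add_comm] using (memLp_comp_add_right (Lp.memLp f) x).integrable_sq
  have hCS := sq_integral_mul_le (f := fun _ => 1) (g := fun s => |f (x + s)|) hab (by simp)
    (by simpa only [sq_abs] using hf2.intervalIntegrable)
    (by simpa only [one_mul, Real.norm_eq_abs] using
      intervalIntegrable_of_locallyIntegrable (locallyIntegrable_norm hf) _ _)
  simpa only [one_mul, one_pow, sq_abs, intervalIntegral.integral_const, smul_eq_mul, mul_one]
    using hCS

lemma exists_norm_delay_le (hq : LocallyIntegrable q) (hL0 : 0 < L) (hL : Function.Periodic q L) :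
    ∃ C, ∀ (f : L2R) (u v : ℝ → ℝ), IsSol q f u v →
      ∃ F : L2R, (∀ᵐ x, F x = u (x + L) + u (x - L) - discriminant q L * u x) ∧
        ‖F‖ ≤ C * ‖f‖ := by
  obtain ⟨C, hC0, hC⟩ := exists_abs_delay_le hq hL0 hL
  refine ⟨C * (2 * L), fun f u v h => ?_⟩
  have hu := h.continuous
  set d : ℝ → ℝ := fun x => u (x + L) + u (x - L) - discriminant q L * u x
  have hd : Continuous d := by fun_prop
  obtain ⟨hint, hint_eq⟩ :=
    integrable_integral_comp_add (Lp.memLp f).integrable_sq (neg_le_self hL0.le)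
  have hsq (x : ℝ) : d x ^ 2 ≤ C ^ 2 * (2 * L) * ∫ s in (-L)..L, f (x + s) ^ 2 := by
    calc d x ^ 2 = |d x| ^ 2 := (sq_abs _).symm
      _ ≤ (C * ∫ s in (-L)..L, |f (x + s)|) ^ 2 := by
          gcongr
          exact hC f u v h x
      _ = C ^ 2 * (∫ s in (-L)..L, |f (x + s)|) ^ 2 := mul_pow _ _ _
      _ ≤ C ^ 2 * ((L - -L) * ∫ s in (-L)..L, f (x + s) ^ 2) := by
          gcongr
          exact sq_integral_abs_comp_add_le f (neg_le_self hL0.le) x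
      _ = _ := by ring
  have hd2 : Integrable (fun x => d x ^ 2) :=
    (hint.const_mul _).mono' (hd.pow 2).aestronglyMeasurable
      (.of_forall fun x => (Real.norm_of_nonneg (sq_nonneg _)).trans_le (hsq x))
  have hmem : MemLp d 2 := (memLp_two_iff_integrable_sq hd.aestronglyMeasurable).2 hd2
  refine ⟨hmem.toLp d, hmem.coeFn_toLp, (abs_le_of_sq_le_sq' ?_ (by positivity)).2⟩
  calc ‖hmem.toLp d‖ ^ 2 = ∫ x, d x ^ 2 := by
        rw [norm_sq_Lp]
        exact integral_congr_ae (hmem.coeFn_toLp.mono fun x hx => congrArg (· ^ 2) hx)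
    _ ≤ ∫ x, C ^ 2 * (2 * L) * ∫ s in (-L)..L, f (x + s) ^ 2 :=
        integral_mono hd2 (hint.const_mul _) hsq
    _ = (C * (2 * L) * ‖f‖) ^ 2 := by
        rw [integral_const_mul, hint_eq, mul_pow _ ‖f‖, norm_sq_Lp]
        ring

/-- Translation `g ↦ g (· + s)` on `L²(ℝ)`. -/
def translation (s : ℝ) : L2R →ₗᵢ[ℝ] L2R :=
  Lp.compMeasurePreservingₗᵢ ℝ (fun x : ℝ => x + s) (measurePreserving_add_right volume s)

lemma coeFn_translation (s : ℝ) (g : L2R) : ∀ᵐ x, translation s g x = g (x + s) :=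
  Lp.coeFn_compMeasurePreserving g (measurePreserving_add_right volume s)

/-- The operator `g ↦ g (· + L) + g (· - L) - D g` on `L²(ℝ)`. -/
def delayOp (L D : ℝ) : L2R →L[ℝ] L2R :=
  (translation L).toContinuousLinearMap + (translation (-L)).toContinuousLinearMap -
    algebraMap ℝ (L2R →L[ℝ] L2R) D

lemma delayOp_apply (L D : ℝ) (g : L2R) :
    delayOp L D g = translation L g + translation (-L) g - D • g := rfl

lemma coeFn_delayOp (L D : ℝ) (g : L2R) :
    ∀ᵐ x, delayOp L D g x = g (x + L) + g (x - L) - D * g x := by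
  rw [delayOp_apply]
  filter_upwards [Lp.coeFn_sub (translation L g + translation (-L) g) (D • g),
    Lp.coeFn_add (translation L g) (translation (-L) g), Lp.coeFn_smul D g, coeFn_translation L g,
    coeFn_translation (-L) g] with x hsub hadd hsmul hL hL'
  rw [hsub, Pi.sub_apply, hadd, Pi.add_apply, hsmul, Pi.smul_apply, smul_eq_mul, hL, hL',
    ← sub_eq_add_neg]

lemma mul_norm_le_norm_delayOp (L D : ℝ) (g : L2R) : (|D| - 2) * ‖g‖ ≤ ‖delayOp L D g‖ := by
  have hD : D • g = translation L g + translation (-L) g - delayOp L D g := by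
    rw [delayOp_apply, sub_sub_cancel]
  have hnorm : |D| * ‖g‖ ≤ ‖g‖ + ‖g‖ + ‖delayOp L D g‖ := by
    calc |D| * ‖g‖ = ‖translation L g + translation (-L) g - delayOp L D g‖ := by
          rw [← hD, norm_smul, Real.norm_eq_abs]
      _ ≤ ‖translation L g‖ + ‖translation (-L) g‖ + ‖delayOp L D g‖ :=
          (norm_sub_le _ _).trans (add_le_add_left (norm_add_le _ _) _)
      _ = _ := by rw [LinearIsometry.norm_map, LinearIsometry.norm_map]
  linarith

lemma surjective_delayOp (L : ℝ) {D : ℝ} (hD : 2 < |D|) : Function.Surjective (delayOp L D) := by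
  set A := (translation L).toContinuousLinearMap + (translation (-L)).toContinuousLinearMap
  have hA : ‖A‖ ≤ 2 := (norm_add_le _ _).trans <| by
    linarith [(translation L).norm_toContinuousLinearMap_le,
      (translation (-L)).norm_toContinuousLinearMap_le]
  have hres : D ∈ resolventSet ℝ A := spectrum.mem_resolventSet_of_norm_lt_mul <|
    (mul_le_mul hA ContinuousLinearMap.norm_id_le (norm_nonneg _) two_pos.le).trans_lt <| by
      simpa using hD
  have hunit : IsUnit (delayOp L D) := by
    simpa [delayOp, A] using (spectrum.mem_resolventSet_iff.1 hres).neg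
  obtain ⟨B, hB⟩ := hunit.exists_right_inv
  exact fun F => ⟨B F, congrArg (fun T : L2R →L[ℝ] L2R => T F) hB⟩

end ResolventSet

section ResolventSet

variable {V : ℝ → ℝ} {L E : ℝ}

lemma locallyIntegrable_sq_norm_energyShift (hV : LocallyIntegrable V)
    (hV2 : LocallyIntegrable fun x => ‖V x‖ ^ 2) (E : ℝ) :
    LocallyIntegrable fun x => ‖energyShift V E x‖ ^ 2 := by
  refine ((hV2.smul (2 : ℝ)).add (continuous_const (y := 2 * E ^ 2)).locallyIntegrable).mono
    ((locallyIntegrable_energyShift hV E).aestronglyMeasurable.norm.pow 2)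
    (.of_forall fun x => ?_)
  rw [Pi.add_apply, Pi.smul_apply, smul_eq_mul,
    Real.norm_of_nonneg (by positivity : 0 ≤ 2 * ‖V x‖ ^ 2 + 2 * E ^ 2),
    Real.norm_of_nonneg (by positivity), Real.norm_eq_abs, Real.norm_eq_abs, sq_abs, sq_abs]
  linarith [sq_nonneg (V x + E), add_sq (V x) E, sub_sq (V x) E]

lemma coeFn_smul_add_smul (k l : ℝ) (f g : L2R) :
    ∀ᵐ x, (k • f + l • g : L2R) x = k * f x + l * g x := by
  filter_upwards [Lp.coeFn_add (k • f) (l • g), Lp.coeFn_smul k f, Lp.coeFn_smul l g]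
    with x hadd hf hg
  simp only [hadd, Pi.add_apply, hf, hg, Pi.smul_apply, smul_eq_mul]

lemma weakSchrodingerEq_smul_add_smul (hV : LocallyIntegrable V)
    (hV2 : LocallyIntegrable fun x => ‖V x‖ ^ 2) {g h g' h' : L2R}
    (hg : WeakSchrodingerEq V E g h) (hg' : WeakSchrodingerEq V E g' h') (k l : ℝ) :
    WeakSchrodingerEq V E (k • g + l • g') (k • h + l • h') := by
  intro φ hφ hφ_supp
  have htest : IsTestFunction φ := ⟨hφ, hφ_supp⟩
  have hlin {ψ : ℝ → ℝ} (hψ : MemLp ψ 2) (f f' : L2R) :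
      ∫ x, (k • f + l • f' : L2R) x * ψ x = k * (∫ x, f x * ψ x) + l * ∫ x, f' x * ψ x := by
    have hint (f : L2R) : Integrable fun x => f x * ψ x := (Lp.memLp f).integrable_mul hψ
    rw [← integral_const_mul, ← integral_const_mul,
      ← integral_add ((hint f).const_mul k) ((hint f').const_mul l)]
    refine integral_congr_ae ?_
    filter_upwards [coeFn_smul_add_smul k l f f'] with x hx
    rw [hx]
    ring
  have hψ := htest.memLp_neg_deriv_deriv_add (locallyIntegrable_energyShift hV E)
    (locallyIntegrable_sq_norm_energyShift hV hV2 E)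
  simp only [energyShift] at hψ
  rw [hlin hψ, hlin htest.memLp, hg φ hφ hφ_supp, hg' φ hφ hφ_supp]

lemma exists_weakSchrodingerEq_norm_le (hV : LocallyIntegrable V)
    (hV2 : LocallyIntegrable fun x => ‖V x‖ ^ 2) (hL0 : 0 < L) (hL : Function.Periodic V L)
    (hD : 2 < |discriminant (energyShift V E) L|) :
    ∃ C, ∀ f : L2R, ∃ g : L2R, WeakSchrodingerEq V E g f ∧ ‖g‖ ≤ C * ‖f‖ := by
  have hq := locallyIntegrable_energyShift hV E
  have hqL : Function.Periodic (energyShift V E) L := fun x => by simp only [energyShift, hL x]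
  set D := discriminant (energyShift V E) L
  obtain ⟨C, hC⟩ := exists_norm_delay_le hq hL0 hqL
  refine ⟨C / (|D| - 2), fun f => ?_⟩
  have hu := isSol_cauchySol hq (locallyIntegrable_Lp f) 0 0
  obtain ⟨F, hF, hF_norm⟩ := hC f _ _ hu
  obtain ⟨g, rfl⟩ := surjective_delayOp L hD F
  refine ⟨g, fun φ hφ hφ_supp => integral_mul_eq_of_delay_eq hqL
    (locallyIntegrable_sq_norm_energyShift hV hV2 E) (Lp.memLp f) (Lp.memLp g) hu hD ?_
    ⟨hφ, hφ_supp⟩, ?_⟩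
  · filter_upwards [coeFn_delayOp L D g, hF] with x hx hx'
    rw [← hx, hx']
  · rw [div_mul_eq_mul_div, le_div_iff₀ (by linarith), mul_comm]
    exact (mul_norm_le_norm_delayOp L D g).trans hF_norm

lemma eq_zero_of_weakSchrodingerEq_zero (hV : LocallyIntegrable V)
    (hV2 : LocallyIntegrable fun x => ‖V x‖ ^ 2) (hL : Function.Periodic V L)
    (hD : 2 < |discriminant (energyShift V E) L|) {g : L2R} (hg : WeakSchrodingerEq V E g 0) :
    g = 0 := by
  have hq := locallyIntegrable_energyShift hV E
  have hg2 : LocallyIntegrable fun x => ‖g x‖ ^ 2 := by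
    simpa only [Real.norm_eq_abs, sq_abs] using (Lp.memLp g).integrable_sq.locallyIntegrable
  obtain ⟨u, v, hu, hgu⟩ := exists_isSol_of_integral_mul_eq hq
    (continuous_const (y := (0 : ℝ))).locallyIntegrable (locallyIntegrable_Lp g)
    (locallyIntegrable_mul_of_sq hq (locallyIntegrable_Lp g)
      (locallyIntegrable_sq_norm_energyShift hV hV2 E) hg2) fun φ hφ => by
    rw [hg φ hφ.contDiff hφ.hasCompactSupport]
    refine integral_congr_ae ?_
    filter_upwards [Lp.coeFn_zero ℝ 2 (volume : Measure ℝ)] with x hx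
    rw [hx, Pi.zero_apply]
  have hshift (s : ℝ) : ∀ᵐ x, g (x + s) = u (x + s) :=
    (measurePreserving_add_right volume s).quasiMeasurePreserving.ae hgu
  set D := discriminant (energyShift V E) L
  have hzero : delayOp L D g = 0 := by
    refine Lp.ext ?_
    filter_upwards [coeFn_delayOp L D g, Lp.coeFn_zero ℝ 2 (volume : Measure ℝ), hgu, hshift L,
      hshift (-L)] with x hx h0 hx0 hxL hxL'
    rw [hx, h0, hx0, hxL, sub_eq_add_neg x, hxL', ← sub_eq_add_neg,
      (IsHomSol.add_sub_eq_discriminant_mul hu (fun x => by simp only [energyShift, hL x]) x).1,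
      sub_self, Pi.zero_apply]
  have hle := mul_norm_le_norm_delayOp L D g
  rw [hzero, norm_zero] at hle
  exact norm_le_zero_iff.1 (nonpos_of_mul_nonpos_right hle (sub_pos.2 hD))

/-- The resolvent at `f` is obtained by solving `g (x + L) + g (x - L) - D g x = F` in `L²`, where
`F` is the left-hand side for any solution of the differential equation with source `f`. -/
theorem notMem_contSpectrum_of_two_lt_abs_discriminant (hV : LocallyIntegrable V)
    (hV2 : LocallyIntegrable fun x => ‖V x‖ ^ 2) (hL0 : 0 < L) (hL : Function.Periodic V L)
    (hD : 2 < |discriminant (energyShift V E) L|) : E ∉ ContSpectrum V := by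
  obtain ⟨C, hC⟩ := exists_weakSchrodingerEq_norm_le hV hV2 hL0 hL hD
  choose T hT hT_norm using hC
  have hunique {g g' h : L2R} (hg : WeakSchrodingerEq V E g h) (hg' : WeakSchrodingerEq V E g' h) :
      g = g' := by
    have hdiff := weakSchrodingerEq_smul_add_smul hV hV2 hg hg' 1 (-1)
    simp only [one_smul, neg_smul, add_neg_cancel] at hdiff
    rw [← sub_eq_zero, sub_eq_add_neg]
    exact eq_zero_of_weakSchrodingerEq_zero hV hV2 hL hD hdiff
  let R : L2R →ₗ[ℝ] L2R :=
    { toFun := T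
      map_add' := fun f f' => hunique (hT _) (by
        simpa only [one_smul] using weakSchrodingerEq_smul_add_smul hV hV2 (hT f) (hT f') 1 1)
      map_smul' := fun k f => hunique (hT _) (by
        simpa only [zero_smul, add_zero, RingHom.id_apply] using
          weakSchrodingerEq_smul_add_smul hV hV2 (hT f) (hT f) k 0) }
  exact fun hE => hE ⟨R.mkContinuous C hT_norm, hT, fun g h hgh => hunique (hT h) hgh⟩

end ResolventSet

/-! ### Energies in the bands lie in the spectrum -/

section Spectrum

variable {q f h u v χ φ V : ℝ → ℝ} {L E : ℝ}

lemma IsTestFunction.memLp_mul {w : ℝ → ℝ} (hχ : IsTestFunction χ) (hw : Continuous w) :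
    MemLp (fun x => χ x * w x) 2 :=
  (hχ.continuous.mul hw).memLp_of_hasCompactSupport hχ.hasCompactSupport.mul_right

lemma IsHomSol.testFunction_mul (hu : IsHomSol q u v) (hχ : IsTestFunction χ) :
    IsSol q (fun x => -(deriv (deriv χ) x * u x + 2 * (deriv χ x * v x))) (fun x => χ x * u x)
      (fun x => deriv χ x * u x + χ x * v x) := by
  have hu_cont := hu.continuous
  have hv_cont := hu.continuous_deriv
  have hχ0 := hχ.continuous
  have hχ1 := hχ.deriv.continuous
  have hχ2 := hχ.deriv.deriv.continuous
  have hqu := locallyIntegrable_mul_continuous hu.locallyIntegrable_potential hu_cont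
  have hv : IsPrimitive (fun t => q t * u t) v := by
    simpa only [sub_zero] using hu.isPrimitive_deriv
  refine ⟨hu.locallyIntegrable_potential, Continuous.locallyIntegrable (by fun_prop),
    by fun_prop, hχ.isPrimitive.mul hu.isPrimitive hχ1.locallyIntegrable hv_cont.locallyIntegrable,
    ?_⟩
  convert (hχ.deriv.isPrimitive.mul hu.isPrimitive hχ2.locallyIntegrable
    hv_cont.locallyIntegrable).add (hχ.isPrimitive.mul hv hχ1.locallyIntegrable hqu)
    (Continuous.locallyIntegrable (by fun_prop))
    ((hχ1.mul hv_cont).locallyIntegrable.add (locallyIntegrable_continuous_mul hχ0 hqu)) using 2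
  ring

lemma IsSol.weakSchrodingerEq (hu : IsSol (energyShift V E) h u v) (hu2 : MemLp u 2)
    (hh2 : MemLp h 2) : WeakSchrodingerEq V E (hu2.toLp u) (hh2.toLp h) := by
  intro φ hφ hφ_supp
  calc ∫ x, hu2.toLp u x * (-(deriv (deriv φ) x) + (V x - E) * φ x)
      = ∫ x, u x * (-(deriv (deriv φ) x) + (V x - E) * φ x) :=
        integral_congr_ae (hu2.coeFn_toLp.mono fun x hx => by simp only [hx])
    _ = ∫ x, h x * φ x := hu.integral_mul_eq ⟨hφ, hφ_supp⟩
    _ = ∫ x, hh2.toLp h x * φ x :=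
        integral_congr_ae (hh2.coeFn_toLp.mono fun x hx => by simp only [hx])

lemma norm_sq_toLp {α : Type*} [MeasurableSpace α] {μ : Measure α} {g : α → ℝ} (hg : MemLp g 2 μ) :
    ‖hg.toLp g‖ ^ 2 = ∫ x, g x ^ 2 ∂μ := by
  rw [norm_sq_Lp]
  exact integral_congr_ae (hg.coeFn_toLp.mono fun x hx => by simp only [hx])

lemma integral_sq_testFunction_mul_le {T : L2R →L[ℝ] L2R}
    (hT : ∀ g h, WeakSchrodingerEq V E g h → T h = g) (hu : IsHomSol (energyShift V E) u v)
    (hχ : IsTestFunction χ) :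
    ∫ x, (χ x * u x) ^ 2 ≤
      ‖T‖ ^ 2 * ∫ x, (deriv (deriv χ) x * u x + 2 * (deriv χ x * v x)) ^ 2 := by
  have hu2 := hχ.memLp_mul hu.continuous
  have hh2 : MemLp (fun x => -(deriv (deriv χ) x * u x + 2 * (deriv χ x * v x))) 2 :=
    ((hχ.deriv.deriv.memLp_mul hu.continuous).add
      ((hχ.deriv.memLp_mul hu.continuous_deriv).const_mul 2)).neg
  have hTu := hT _ _ ((hu.testFunction_mul hχ).weakSchrodingerEq hu2 hh2)
  have hle := T.le_opNorm (hh2.toLp _)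
  rw [hTu] at hle
  calc ∫ x, (χ x * u x) ^ 2 = ‖hu2.toLp _‖ ^ 2 := (norm_sq_toLp hu2).symm
    _ ≤ (‖T‖ * ‖hh2.toLp _‖) ^ 2 := by gcongr
    _ = _ := by
      rw [mul_pow, norm_sq_toLp hh2]
      simp only [neg_sq]

lemma deriv_deriv_comp_mul_left (c : ℝ) (φ : ℝ → ℝ) (x : ℝ) :
    deriv (deriv fun y => φ (c * y)) x = c ^ 2 * deriv (deriv φ) (c * x) := by
  have hderiv : (deriv fun y => φ (c * y)) = fun y => c * deriv φ (c * y) :=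
    funext fun y => deriv_comp_mul_left c φ y
  rw [hderiv, deriv_const_mul_field, deriv_comp_mul_left c (deriv φ), smul_eq_mul]
  ring

lemma IsTestFunction.exists_abs_deriv_le (hφ : IsTestFunction φ) :
    ∃ B, 0 ≤ B ∧ ∀ x, |deriv φ x| ≤ B ∧ |deriv (deriv φ) x| ≤ B := by
  obtain ⟨B₁, hB₁⟩ := hφ.deriv.hasCompactSupport.exists_bound_of_continuous hφ.deriv.continuous
  obtain ⟨B₂, hB₂⟩ :=
    hφ.deriv.deriv.hasCompactSupport.exists_bound_of_continuous hφ.deriv.deriv.continuous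
  exact ⟨max B₁ B₂, le_max_of_le_left ((norm_nonneg _).trans (hB₁ 0)),
    fun x => ⟨le_max_of_le_left (hB₁ x), le_max_of_le_right (hB₂ x)⟩⟩

lemma exists_cutoff : ∃ B, 0 ≤ B ∧ ∀ R, 1 ≤ R → ∃ χ, IsTestFunction χ ∧
    (∀ x ∈ Icc (-R) R, χ x = 1) ∧ (∀ x, |deriv χ x| ≤ B / R ∧ |deriv (deriv χ) x| ≤ B / R) ∧
    ∀ x ∉ Icc (-(2 * R)) (2 * R), deriv χ x = 0 ∧ deriv (deriv χ) x = 0 := by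
  let η : ContDiffBump (0 : ℝ) := ⟨1, 2, one_pos, one_lt_two⟩
  have hη : IsTestFunction η := ⟨η.contDiff, η.hasCompactSupport⟩
  obtain ⟨B, hB0, hB⟩ := hη.exists_abs_deriv_le
  refine ⟨B, hB0, fun R hR => ?_⟩
  have hR0 : 0 < R := by linarith
  have hball {r x : ℝ} : R⁻¹ * x ∈ Metric.closedBall 0 r ↔ x ∈ Icc (-(r * R)) (r * R) := by
    rw [mem_closedBall_zero_iff, norm_mul, norm_inv, Real.norm_of_nonneg hR0.le,
      inv_mul_le_iff₀ hR0, mul_comm, Real.norm_eq_abs, abs_le, mem_Icc]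
  have hderiv (x : ℝ) : deriv (fun y => η (R⁻¹ * y)) x = R⁻¹ * deriv η (R⁻¹ * x) :=
    deriv_comp_mul_left R⁻¹ η x
  refine ⟨fun x => η (R⁻¹ * x), ⟨hη.contDiff.comp (contDiff_const.mul contDiff_id),
    hη.hasCompactSupport.comp_homeomorph (Homeomorph.mulLeft₀ R⁻¹ (inv_ne_zero hR0.ne'))⟩,
    fun x hx => η.one_of_mem_closedBall ((hball (r := 1)).2 (by rwa [one_mul])),
    fun x => ?_, fun x hx => ?_⟩
  · rw [hderiv, deriv_deriv_comp_mul_left, abs_mul, abs_mul, abs_of_pos (inv_pos.2 hR0),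
      abs_of_nonneg (sq_nonneg R⁻¹), div_eq_inv_mul]
    refine ⟨by gcongr; exact (hB _).1, mul_le_mul ?_ (hB _).2 (abs_nonneg _) (by positivity)⟩
    exact pow_le_of_le_one (by positivity) (inv_le_one_of_one_le₀ hR) two_ne_zero
  · have hout : R⁻¹ * x ∉ tsupport η := fun hmem => hx (hball.1 (by rwa [η.tsupport_eq] at hmem))
    have hout' : R⁻¹ * x ∉ tsupport (deriv η) := fun hmem => hout (tsupport_deriv_subset hmem)
    rw [hderiv, deriv_deriv_comp_mul_left, image_eq_zero_of_notMem_tsupport hout',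
      Function.notMem_support.1 fun hmem => hout' (support_deriv_subset hmem)]
    simp only [mul_zero, and_self]

lemma integral_sq_le_of_abs_le {C r : ℝ} (hr : 0 ≤ r) (hC : ∀ x, |f x| ≤ C)
    (h0 : ∀ x ∉ Icc (-r) r, f x = 0) : ∫ x, f x ^ 2 ≤ C ^ 2 * (2 * r) := by
  have hC2 (x : ℝ) : ‖f x ^ 2‖ ≤ C ^ 2 := by
    rw [norm_pow]
    gcongr
    exact hC x
  calc ∫ x, f x ^ 2 = ∫ x in Icc (-r) r, f x ^ 2 :=
        (setIntegral_eq_integral_of_forall_compl_eq_zero fun x hx => by simp [h0 x hx]).symm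
    _ = ∫ x in (-r)..r, f x ^ 2 := by
        rw [intervalIntegral.integral_of_le (by linarith), integral_Icc_eq_integral_Ioc]
    _ ≤ C ^ 2 * |r - -r| := (le_abs_self _).trans
        (intervalIntegral.norm_integral_le_of_norm_le_const fun x _ => hC2 x)
    _ = C ^ 2 * (2 * r) := by rw [abs_of_nonneg (by linarith), sub_neg_eq_add, two_mul]

lemma integral_sq_le_div_of_abs_le {T : L2R →L[ℝ] L2R}
    (hT : ∀ g h, WeakSchrodingerEq V E g h → T h = g) (hu : IsHomSol (energyShift V E) u v)
    {W : ℝ} (huW : ∀ x, |u x| ≤ W) (hvW : ∀ x, |v x| ≤ W) :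
    ∃ C, ∀ R, 1 ≤ R → ∫ x in (-R)..R, u x ^ 2 ≤ C / R := by
  obtain ⟨B, hB0, hB⟩ := exists_cutoff
  have : 0 ≤ W := (abs_nonneg _).trans (huW 0)
  refine ⟨‖T‖ ^ 2 * (36 * (B * W) ^ 2), fun R hR => ?_⟩
  have : 0 < R := by linarith
  obtain ⟨χ, hχ, hχ1, hχB, hχ0⟩ := hB R hR
  set h : ℝ → ℝ := fun x => deriv (deriv χ) x * u x + 2 * (deriv χ x * v x)
  have hh_le (x : ℝ) : |h x| ≤ B / R * W + 2 * (B / R * W) := by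
    refine (abs_add_le _ _).trans ?_
    rw [abs_mul, abs_mul 2, abs_mul, abs_two]
    gcongr
    exacts [(hχB x).2, huW x, (hχB x).1, hvW x]
  have hh_zero (x : ℝ) (hx : x ∉ Icc (-(2 * R)) (2 * R)) : h x = 0 := by
    simp only [h, (hχ0 x hx).1, (hχ0 x hx).2, zero_mul, mul_zero, add_zero]
  calc ∫ x in (-R)..R, u x ^ 2 = ∫ x in (-R)..R, (χ x * u x) ^ 2 :=
        intervalIntegral.integral_congr fun x hx => by
          simp only [hχ1 x (by rwa [uIcc_of_le (by linarith)] at hx), one_mul]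
    _ ≤ ∫ x, (χ x * u x) ^ 2 := by
        rw [intervalIntegral.integral_of_le (by linarith)]
        exact setIntegral_le_integral (hχ.memLp_mul hu.continuous).integrable_sq
          (.of_forall fun x => sq_nonneg _)
    _ ≤ ‖T‖ ^ 2 * ∫ x, h x ^ 2 := integral_sq_testFunction_mul_le hT hu hχ
    _ ≤ ‖T‖ ^ 2 * ((B / R * W + 2 * (B / R * W)) ^ 2 * (2 * (2 * R))) := by
        gcongr
        exact integral_sq_le_of_abs_le (by linarith) hh_le hh_zero
    _ = _ := by
        field_simp
        ring

/-- Cutting off at scale `R` leaves a source term of size `O(1 / R)` on an interval of length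
`O(R)`: the truncations of a nonzero bounded solution form a Weyl sequence. -/
lemma eq_zero_of_notMem_contSpectrum_of_abs_le (hE : E ∉ ContSpectrum V)
    (hu : IsHomSol (energyShift V E) u v) {W : ℝ} (huW : ∀ x, |u x| ≤ W) (hvW : ∀ x, |v x| ≤ W)
    (x : ℝ) : u x = 0 := by
  obtain ⟨T, -, hT⟩ := not_not.1 hE
  obtain ⟨C, hC⟩ := integral_sq_le_div_of_abs_le hT hu huW hvW
  have hu2 : Continuous fun x => u x ^ 2 := hu.continuous.pow 2
  by_contra hne
  set r := |x| + 1
  have hr : 1 ≤ r := by linarith [abs_nonneg x]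
  have hpos : 0 < ∫ t in (-r)..r, u t ^ 2 :=
    intervalIntegral.integral_pos (by linarith) hu2.continuousOn (fun t _ => sq_nonneg _)
      ⟨x, abs_le.1 (by linarith), by positivity⟩
  obtain ⟨R, hR⟩ := exists_gt (max r (C / ∫ t in (-r)..r, u t ^ 2))
  have hrR : r ≤ R := ((le_max_left _ _).trans_lt hR).le
  have hCR := (div_lt_iff₀ hpos).1 ((le_max_right _ _).trans_lt hR)
  have hmono : ∫ t in (-r)..r, u t ^ 2 ≤ ∫ t in (-R)..R, u t ^ 2 :=
    intervalIntegral.integral_mono_interval (by linarith) (by linarith) hrR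
      (.of_forall fun _ => sq_nonneg _) (hu2.intervalIntegrable _ _)
  have hle := (le_div_iff₀ (by linarith)).1 (hmono.trans (hC R (hr.trans hrR)))
  linarith

lemma exists_bounded_floquet_solution (hq : LocallyIntegrable q) (hL0 : L ≠ 0)
    (hL : Function.Periodic q L) (hD : |discriminant q L| ≤ 2) :
    ∃ u v : ℝ → ℂ, IsHomSol (fun x => (q x : ℂ)) u v ∧ (u 0 ≠ 0 ∨ v 0 ≠ 0) ∧
      ∃ W, ∀ x, ‖u x‖ ≤ W ∧ ‖v x‖ ≤ W := by
  have hqc := locallyIntegrable_ofReal hq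
  obtain ⟨μ, hμ, hμ1⟩ := exists_floquetMultiplier ((discriminant q L : ℝ) : ℂ)
  have hμ_norm : ‖μ‖ = 1 := by
    have hsq := sq_norm_floquetMultiplier_sub_one_le hμ hμ1 hD
    rw [sub_self, norm_zero, zero_mul] at hsq
    exact sub_eq_zero.1 (pow_eq_zero_iff two_ne_zero |>.1 (hsq.antisymm (sq_nonneg _)))
  obtain ⟨u, v, huv, hne, huL, hvL⟩ :=
    exists_floquet_solution hqc (by rwa [discriminant_ofReal hq L])
  have hshift : IsHomSol (fun x => (q x : ℂ)) (fun x => u (x + L)) (fun x => v (x + L)) := by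
    simpa only [hL _] using huv.comp_add_right L
  have hμuv : IsHomSol (fun x => (q x : ℂ)) (fun x => μ * u x) (fun x => μ * v x) := by
    simpa only [mul_zero] using huv.const_mul μ
  obtain ⟨hu, hv⟩ := hshift.eq_of_eq_at hμuv (s := 0) (by simpa using huL) (by simpa using hvL)
  have hbdd {w : ℝ → ℂ} (hw : Continuous w) (hwL : (fun x => w (x + L)) = fun x => μ * w x) :
      ∃ W, ∀ x, ‖w x‖ ≤ W := by
    have hper : Function.Periodic (fun x => ‖w x‖) L := fun x => by
      simp only [congrFun hwL x, norm_mul, hμ_norm, one_mul]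
    obtain ⟨W, hW⟩ := (hper.isBounded_of_continuous hL0 hw.norm).exists_norm_le
    exact ⟨W, fun x => by simpa using hW _ (mem_range_self x)⟩
  obtain ⟨W₁, hW₁⟩ := hbdd huv.continuous hu
  obtain ⟨W₂, hW₂⟩ := hbdd huv.continuous_deriv hv
  exact ⟨u, v, huv, hne, max W₁ W₂,
    fun x => ⟨le_max_of_le_left (hW₁ x), le_max_of_le_right (hW₂ x)⟩⟩

theorem mem_contSpectrum_of_abs_discriminant_le_two (hV : LocallyIntegrable V) (hL0 : L ≠ 0)
    (hL : Function.Periodic V L) (hD : |discriminant (energyShift V E) L| ≤ 2) :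
    E ∈ ContSpectrum V := by
  have hq := locallyIntegrable_energyShift hV E
  obtain ⟨u, v, huv, hne, W, hW⟩ := exists_bounded_floquet_solution hq hL0
    (fun x => by simp only [energyShift, hL x]) hD
  by_contra hE
  have hre := huv.comp_clm Complex.reCLM hq (by simp)
  have him := huv.comp_clm Complex.imCLM hq (by simp)
  have hu : u = 0 := funext fun x => Complex.ext
    (eq_zero_of_notMem_contSpectrum_of_abs_le hE hre
      (fun x => (Complex.abs_re_le_norm _).trans (hW x).1)
      (fun x => (Complex.abs_re_le_norm _).trans (hW x).2) x)
    (eq_zero_of_notMem_contSpectrum_of_abs_le hE him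
      (fun x => (Complex.abs_im_le_norm _).trans (hW x).1)
      (fun x => (Complex.abs_im_le_norm _).trans (hW x).2) x)
  have hv_const (x : ℝ) : v x = v 0 := by simpa [hu] using huv.isPrimitive_deriv x
  have hv : v 0 = 0 := by simpa [hu, hv_const] using (huv.isPrimitive 1).symm
  exact hne.elim (fun h => h (congrFun hu 0)) (fun h => h hv)

end Spectrum

/-! ### Continuity of the discriminant in coupling and energy -/

section Continuity

lemma tendsto_discriminant {𝕜 ι : Type*} [RCLike 𝕜] {l : Filter ι} {q : ℝ → 𝕜}
    {Q : ι → ℝ → 𝕜} (hq : LocallyIntegrable q) (hQ : ∀ i, LocallyIntegrable (Q i)) {L : ℝ}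
    (hL : 0 ≤ L) (h : Filter.Tendsto (fun i => ∫ t in (0 : ℝ)..L, ‖Q i t - q t‖) l (nhds 0)) :
    Filter.Tendsto (fun i => discriminant (Q i) L) l (nhds (discriminant q L)) := by
  obtain ⟨K, -, hK⟩ := exists_norm_discriminant_sub_le hq hL ((∫ t in (0 : ℝ)..L, ‖q t‖) + 1)
  have hint {f : ℝ → 𝕜} (hf : LocallyIntegrable f) :=
    intervalIntegrable_of_locallyIntegrable (locallyIntegrable_norm hf) 0 L
  have hnorm (i : ι) : ∫ t in (0 : ℝ)..L, ‖Q i t‖ ≤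
      (∫ t in (0 : ℝ)..L, ‖q t‖) + ∫ t in (0 : ℝ)..L, ‖Q i t - q t‖ := by
    have hsub : IntervalIntegrable (fun t => ‖Q i t - q t‖) volume 0 L := hint ((hQ i).sub hq)
    rw [← intervalIntegral.integral_add (hint hq) hsub]
    exact intervalIntegral.integral_mono hL (hint (hQ i)) ((hint hq).add hsub)
      fun t => norm_le_insert' (Q i t) (q t)
  refine tendsto_iff_norm_sub_tendsto_zero.2 (squeeze_zero' (.of_forall fun _ => norm_nonneg _)
    ?_ (by simpa only [mul_zero] using h.const_mul K))
  filter_upwards [h.eventually (Iio_mem_nhds one_pos)] with i hi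
  exact hK (Q i) (hQ i) ((hnorm i).trans (by gcongr))

lemma continuous_discriminant_energyShift_mul {V : ℝ → ℝ} (hV : LocallyIntegrable V) {L : ℝ}
    (hL : 0 ≤ L) :
    Continuous fun s : ℝ × ℝ => discriminant (energyShift (fun t => s.1 * V t) s.2) L := by
  have hq (s : ℝ × ℝ) : LocallyIntegrable (energyShift (fun t => s.1 * V t) s.2) :=
    locallyIntegrable_energyShift (hV.smul s.1) s.2
  refine continuous_iff_continuousAt.2 fun s₀ => tendsto_discriminant (hq s₀) hq hL ?_
  have hint := intervalIntegrable_of_locallyIntegrable (locallyIntegrable_norm hV) 0 L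
  have hle (s : ℝ × ℝ) : ∫ t in (0 : ℝ)..L, ‖energyShift (fun t => s.1 * V t) s.2 t -
      energyShift (fun t => s₀.1 * V t) s₀.2 t‖ ≤
      |s.1 - s₀.1| * (∫ t in (0 : ℝ)..L, ‖V t‖) + |s.2 - s₀.2| * L := by
    calc _ ≤ ∫ t in (0 : ℝ)..L, (|s.1 - s₀.1| * ‖V t‖ + |s.2 - s₀.2|) := by
          refine intervalIntegral.integral_mono hL (intervalIntegrable_of_locallyIntegrable
            (locallyIntegrable_norm ((hq s).sub (hq s₀))) 0 L)
            ((hint.const_mul _).add (by simp)) fun t => ?_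
          calc _ = ‖(s.1 - s₀.1) * V t - (s.2 - s₀.2)‖ := by
                congr 1
                ring
            _ ≤ _ := (norm_sub_le _ _).trans_eq (by rw [norm_mul, Real.norm_eq_abs,
                Real.norm_eq_abs (s.2 - s₀.2)])
      _ = _ := by
          rw [intervalIntegral.integral_add (hint.const_mul _) (by simp),
            intervalIntegral.integral_const_mul, intervalIntegral.integral_const, smul_eq_mul]
          ring
  refine squeeze_zero (fun s => intervalIntegral.integral_nonneg hL fun _ _ => norm_nonneg _) hle ?_
  have hcont : Continuous fun s : ℝ × ℝ =>
      |s.1 - s₀.1| * (∫ t in (0 : ℝ)..L, ‖V t‖) + |s.2 - s₀.2| * L := by fun_prop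
  simpa using hcont.tendsto s₀

end Continuity

/-! ### Concatenated potentials -/

section Concatenation

variable {a : ℝ}

lemma aggC_add_int_mul (ha : 0 < a) (y : ℤ → L2I a) (t : ℝ) (k : ℤ) :
    aggC a y (t + k * a) = aggC a (fun j => y (j + k)) t := by
  have hfloor : ⌊(t + k * a) / a⌋ = ⌊t / a⌋ + k := by
    rw [add_div, mul_div_cancel_right₀ _ ha.ne', Int.floor_add_intCast]
  simp only [aggC, hfloor, Int.cast_add, add_mul, add_sub_add_right_eq_sub]

lemma floor_div_eq_iff_mem_Ico (ha : 0 < a) {t : ℝ} {j : ℤ} :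
    ⌊t / a⌋ = j ↔ t ∈ Ico (j * a) ((j + 1) * a) := by
  rw [Int.floor_eq_iff, le_div_iff₀ ha, div_lt_iff₀ ha, mem_Ico]

lemma aggC_of_mem_Ico (ha : 0 < a) (y : ℤ → L2I a) {t : ℝ} {j : ℤ}
    (ht : t ∈ Ico (j * a) ((j + 1) * a)) :
    aggC a y t = y j (t - j * a) := by
  simp only [aggC, (floor_div_eq_iff_mem_Ico ha).2 ht]

lemma measurable_aggC (y : ℤ → L2I a) : Measurable (aggC a y) := by
  have hpieces : Measurable fun z : ℤ × ℝ => (y z.1 : ℝ → ℝ) z.2 :=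
    measurable_from_prod_countable_right fun j => (Lp.stronglyMeasurable (y j)).measurable
  have hfloor : Measurable fun t : ℝ => ⌊t / a⌋ :=
    Int.measurable_floor.comp (measurable_id.div_const a)
  have hcast : Measurable fun t : ℝ => (⌊t / a⌋ : ℝ) := measurable_from_top.comp hfloor
  exact hpieces.comp (hfloor.prodMk (measurable_id.sub (hcast.mul_const a)))

lemma measurePreserving_sub_Ico (j : ℤ) :
    MeasurePreserving (fun t : ℝ => t - j * a) (volume.restrict (Ico (j * a) ((j + 1) * a)))
      (volume.restrict (Ico 0 a)) := by
  have h := (measurePreserving_sub_right (volume : Measure ℝ) (j * a)).restrict_preimage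
    (measurableSet_Ico (a := (0 : ℝ)) (b := a))
  rwa [preimage_sub_const_Ico, zero_add, show a + j * a = (j + 1) * a by ring] at h

lemma integrableOn_sq_aggC (ha : 0 < a) (y : ℤ → L2I a) (j : ℤ) :
    IntegrableOn (fun t => aggC a y t ^ 2) (Ico (j * a) ((j + 1) * a)) := by
  have hpiece := ((measurePreserving_sub_Ico (a := a) j).integrable_comp_emb
    (measurableEmbedding_subRight _)).2 (Lp.memLp (y j)).integrable_sq
  exact IntegrableOn.congr_fun hpiece
    (fun t ht => by simp only [Function.comp_apply, aggC_of_mem_Ico ha y ht]) measurableSet_Ico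

lemma integral_sq_aggC (ha : 0 < a) (y : ℤ → L2I a) (j : ℤ) :
    ∫ t in (j * a)..(j * a + a), aggC a y t ^ 2 = ‖y j‖ ^ 2 := by
  rw [norm_sq_Lp, ← (measurePreserving_sub_Ico j).integral_comp (measurableEmbedding_subRight _),
    intervalIntegral.integral_of_le (by linarith), ← integral_Ico_eq_integral_Ioc,
    show j * a + a = (j + 1) * a by ring]
  exact setIntegral_congr_fun measurableSet_Ico fun t ht => by simp only [aggC_of_mem_Ico ha y ht]

lemma locallyIntegrable_sq_aggC (ha : 0 < a) (y : ℤ → L2I a) :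
    LocallyIntegrable fun t => aggC a y t ^ 2 := by
  intro t
  obtain ⟨hj, hj'⟩ := (floor_div_eq_iff_mem_Ico ha).1 (rfl : ⌊t / a⌋ = ⌊t / a⌋)
  set j := ⌊t / a⌋
  have hcast : ((j - 1 : ℤ) + 1 : ℝ) * a = j * a := by push_cast; ring
  have hprev : ((j - 1 : ℤ) : ℝ) * a < j * a := by linarith
  refine ⟨Ioo ((j - 1 : ℤ) * a) ((j + 1) * a), Ioo_mem_nhds (hprev.trans_le hj) hj', ?_⟩
  refine ((integrableOn_sq_aggC ha y (j - 1)).union (integrableOn_sq_aggC ha y j)).mono_set ?_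
  rw [hcast, Ico_union_Ico_eq_Ico hprev.le (by linarith)]
  exact Ioo_subset_Ico_self

lemma locallyIntegrable_aggC (ha : 0 < a) (y : ℤ → L2I a) : LocallyIntegrable (aggC a y) := by
  refine ((locallyIntegrable_sq_aggC ha y).add
    (continuous_const (y := (1 : ℝ))).locallyIntegrable).mono
    (measurable_aggC y).aestronglyMeasurable (.of_forall fun t => ?_)
  rw [Pi.add_apply, ← sq_abs]
  refine le_trans ?_ (le_abs_self _)
  rw [Real.norm_eq_abs]
  nlinarith [sq_nonneg (|aggC a y t| - 1), abs_nonneg (aggC a y t)]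

lemma periodic_aggC (ha : 0 < a) {y : ℤ → L2I a} {l : ℕ} (hy : Function.Periodic y l) :
    Function.Periodic (aggC a y) (l * a) := fun t => by
  have h := aggC_add_int_mul ha y t l
  rwa [Int.cast_natCast, funext hy] at h

lemma ae_aggC_smul (ha : 0 < a) (y : ℤ → L2I a) (c : ℝ) :
    ∀ᵐ t, aggC a (fun j => c • y j) t = c * aggC a y t := by
  have hcell (j : ℤ) : ∀ᵐ t, t ∈ Ico (j * a) ((j + 1) * a) →
      aggC a (fun j => c • y j) t = c * aggC a y t := by
    rw [← ae_restrict_iff' measurableSet_Ico]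
    filter_upwards [(measurePreserving_sub_Ico j).quasiMeasurePreserving.ae
      (Lp.coeFn_smul c (y j)), ae_restrict_mem measurableSet_Ico] with t ht hmem
    rw [aggC_of_mem_Ico ha _ hmem, aggC_of_mem_Ico ha _ hmem, ht, Pi.smul_apply, smul_eq_mul]
  filter_upwards [ae_all_iff.2 hcell] with t ht
  exact ht _ ((floor_div_eq_iff_mem_Ico ha).1 rfl)

end Concatenation

/-! ### Words and periodic sequences -/

section Words

lemma periodic_perExt {α : Type*} [Zero α] {m : ℕ} (w : Fin m → α) :
    Function.Periodic (perExt w) m := fun j => by simp [perExt]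

lemma exists_perExt_eq {α : Type*} [Zero α] {m : ℕ} (hm : 0 < m) (w : Fin m → α) (j : ℤ) :
    ∃ i, perExt w j = w i := by
  simp only [perExt, hm, dif_pos, exists_apply_eq_apply']

lemma apply_emod_of_periodic {α : Type*} {x : ℤ → α} {p : ℤ} (hx : Function.Periodic x p) (j : ℤ) :
    x (j % p) = x j := by
  rw [Int.emod_def, mul_comm, ← smul_eq_mul, hx.sub_zsmul_eq]

lemma perExt_eq_of_periodic {α : Type*} [Zero α] {x : ℤ → α} {p : ℕ} (hp : 0 < p)
    (hx : Function.Periodic x p) : perExt (fun i : Fin p => x i) = x := by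
  ext j
  have hnonneg : 0 ≤ j % (p : ℤ) := Int.emod_nonneg j (by exact_mod_cast hp.ne')
  simp only [perExt, hp, dif_pos, Int.toNat_of_nonneg hnonneg, apply_emod_of_periodic hx]

lemma exists_norm_le_of_periodic_int {E : Type*} [NormedAddCommGroup E] {x : ℤ → E} {p : ℕ}
    (hp : 0 < p) (hx : Function.Periodic x p) : ∃ R, ∀ j, ‖x j‖ ≤ R := by
  obtain ⟨R, hR⟩ := ((finite_Ioc (0 : ℤ) (0 + p)).image x).isBounded.exists_norm_le
  rw [hx.image_Ioc (by exact_mod_cast hp)] at hR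
  exact ⟨R, fun j => hR _ (mem_range_self j)⟩

end Words

/-! ### Potentials with uniformly bounded energy on the cells -/

section Cells

/-- Uniform local square integrability, measured on the cells `[ja, (j + 1)a)` in the right
half-line by a constant `Q`: the only information on a potential entering the estimates. -/
structure IsCellBounded (a Q : ℝ) (V : ℝ → ℝ) : Prop where
  locallyIntegrable : LocallyIntegrable V
  locallyIntegrable_sq : LocallyIntegrable fun t => ‖V t‖ ^ 2
  integral_sq_le (j : ℕ) : ∫ t in (j * a)..(j * a + a), ‖V t‖ ^ 2 ≤ Q

variable {a Q R : ℝ} {V : ℝ → ℝ} {E : ℝ}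

lemma isCellBounded_mul_aggC (ha : 0 < a) {c Λ : ℝ} (hc : |c| ≤ Λ) {y : ℤ → L2I a}
    (hy : ∀ j, ‖y j‖ ≤ R) : IsCellBounded a (Λ ^ 2 * R ^ 2) fun t => c * aggC a y t := by
  have hsq (t : ℝ) : ‖c * aggC a y t‖ ^ 2 = c ^ 2 * aggC a y t ^ 2 := by
    rw [Real.norm_eq_abs, sq_abs, mul_pow]
  refine ⟨(locallyIntegrable_aggC ha y).smul c, ?_, fun j => ?_⟩
  · simp only [hsq]
    exact (locallyIntegrable_sq_aggC ha y).smul (c ^ 2)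
  · have hcell := integral_sq_aggC ha y j
    rw [Int.cast_natCast] at hcell
    simp only [hsq, intervalIntegral.integral_const_mul, hcell]
    rw [← sq_abs c]
    have := hy j
    gcongr

lemma IsCellBounded.integral_sq_norm_energyShift_le (ha : 0 ≤ a) (hV : IsCellBounded a Q V)
    (hE : |E| ≤ R) (j : ℕ) :
    ∫ t in (j * a)..(j * a + a), ‖energyShift V E t‖ ^ 2 ≤ 2 * Q + 2 * R ^ 2 * a := by
  have hint := intervalIntegrable_of_locallyIntegrable hV.locallyIntegrable_sq (j * a) (j * a + a)
  have hE2 : E ^ 2 ≤ R ^ 2 := by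
    rw [← sq_abs E]
    gcongr
  calc ∫ t in (j * a)..(j * a + a), ‖energyShift V E t‖ ^ 2
      ≤ ∫ t in (j * a)..(j * a + a), (2 * ‖V t‖ ^ 2 + 2 * R ^ 2) := by
        refine intervalIntegral.integral_mono (by linarith) (intervalIntegrable_of_locallyIntegrable
          (locallyIntegrable_sq_norm_energyShift hV.locallyIntegrable hV.locallyIntegrable_sq E)
          _ _) ((hint.const_mul 2).add (by simp)) fun t => ?_
        simp only [Real.norm_eq_abs, sq_abs]
        nlinarith [sq_nonneg (V t + E)]
    _ ≤ 2 * Q + 2 * R ^ 2 * a := by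
        rw [intervalIntegral.integral_add (hint.const_mul 2) (by simp),
          intervalIntegral.integral_const_mul, intervalIntegral.integral_const, smul_eq_mul,
          add_sub_cancel_left, mul_comm a]
        gcongr
        exact hV.integral_sq_le j

lemma IsCellBounded.integral_norm_le (ha : 0 ≤ a) (hV : IsCellBounded a Q V) (n : ℕ) :
    ∫ t in (0 : ℝ)..(n * a), ‖V t‖ ≤ n * (Q + a) := by
  have hint (b c : ℝ) := intervalIntegrable_of_locallyIntegrable hV.locallyIntegrable_sq b c
  have hna : 0 ≤ n * a := by positivity
  calc ∫ t in (0 : ℝ)..(n * a), ‖V t‖ ≤ ∫ t in (0 : ℝ)..(n * a), (‖V t‖ ^ 2 + 1) :=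
        intervalIntegral.integral_mono hna (intervalIntegrable_of_locallyIntegrable
          (locallyIntegrable_norm hV.locallyIntegrable) _ _) ((hint _ _).add (by simp))
          fun t => by nlinarith [sq_nonneg (‖V t‖ - 1), norm_nonneg (V t)]
    _ = (∑ j ∈ Finset.range n, ∫ t in (j * a)..(j * a + a), ‖V t‖ ^ 2) + n * a := by
        rw [intervalIntegral.integral_add (hint _ _) (by simp), intervalIntegral.integral_const,
          smul_eq_mul, mul_one, sub_zero]
        have hsum := intervalIntegral.sum_integral_adjacent_intervals
          (a := fun j : ℕ => (j : ℝ) * a) (n := n) fun j _ => hint _ _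
        simp only [Nat.cast_add, Nat.cast_one, add_mul, one_mul, Nat.cast_zero, zero_mul] at hsum
        rw [hsum]
    _ ≤ n * (Q + a) := by
        have hcells := Finset.sum_le_card_nsmul (Finset.range n)
          (fun j : ℕ => ∫ t in (j * a)..(j * a + a), ‖V t‖ ^ 2) Q fun j _ => hV.integral_sq_le j
        rw [Finset.card_range, nsmul_eq_mul] at hcells
        linarith

lemma exists_card_discriminant_eq_le_mul_sq (ha : 0 < a) (Q : ℝ) (hR : 0 ≤ R) :
    ∃ B, 0 ≤ B ∧ ∀ V, IsCellBounded a Q V → ∀ M : ℕ, 0 < M → ∀ τ, |τ| ≤ 2 → ∀ T : Finset ℝ,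
      (∀ E ∈ T, |E| ≤ R ∧ discriminant (energyShift V E) (M * a) = τ) →
        (T.card : ℝ) ≤ B * M ^ 2 := by
  obtain ⟨C, hC⟩ := exists_card_discriminant_eq_le ha Q
  set A := |Q| + a + (Real.exp 1 * (R + 1) + 1) * a with hA
  have : 0 ≤ A := by positivity
  refine ⟨|C| + A + a + A * a, by positivity, fun V hV M hM τ hτ T hT => ?_⟩
  have hM1 : (1 : ℝ) ≤ M := by exact_mod_cast hM
  have hfirst := hV.integral_sq_le 0
  rw [Nat.cast_zero, zero_mul, zero_add] at hfirst
  have hint := hV.integral_norm_le ha.le M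
  have hQM : M * Q ≤ M * |Q| := by gcongr; exact le_abs_self Q
  refine (hC V hV.locallyIntegrable hV.locallyIntegrable_sq hfirst (M * a) R (M * A)
    (le_mul_of_one_le_left ha.le hM1) hR (by rw [hA]; linarith) τ hτ T hT).trans ?_
  calc C + M * A + M * a + M * A * (M * a)
      ≤ |C| * M ^ 2 + M ^ 2 * A + M ^ 2 * a + M * A * (M * a) := by
        have hMM : (M : ℝ) ≤ M ^ 2 := by nlinarith
        gcongr
        exact (le_abs_self C).trans (le_mul_of_one_le_right (abs_nonneg C) (by nlinarith))
    _ = (|C| + A + a + A * a) * M ^ 2 := by ring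

/-- The factor `M ^ 2` comes from the number of energies at which the discriminant takes a given
value; the trace `G` across a stretch of the period makes each band thin. -/
theorem exists_volume_inter_contSpectrum_le (ha : 0 < a) (Q : ℝ) {K : Set ℝ}
    (hK : MeasurableSet K) (hKR : ∀ E ∈ K, |E| ≤ R) :
    ∃ B, 0 ≤ B ∧ ∀ V, IsCellBounded a Q V → ∀ M : ℕ, 0 < M → Function.Periodic V (M * a) →
      ∀ G, 0 < G → (∀ E ∈ K, ∃ k₀ < M, ∃ k₁ < M,
        G ≤ |discriminant (fun t => energyShift V E (t + k₀ * a)) (k₁ * a - k₀ * a)|) →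
      volume (K ∩ ContSpectrum V) ≤ ENNReal.ofReal (B * M ^ 2 / G) := by
  obtain ⟨κ, hκ, hderiv⟩ := exists_mul_le_abs_deriv_discriminant ha (2 * Q + 2 * R ^ 2 * a)
  obtain ⟨B, hB, hcard⟩ := exists_card_discriminant_eq_le_mul_sq ha Q (abs_nonneg R)
  refine ⟨Real.pi * B / κ, by positivity, fun V hV M hM hper G hG hblock => ?_⟩
  have hL0 : 0 < (M : ℝ) * a := by positivity
  have hbands : K ∩ ContSpectrum V ⊆ K ∩ {E | |discriminant (energyShift V E) (M * a)| ≤ 2} :=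
    fun E ⟨hEK, hE⟩ => ⟨hEK, not_lt.1 fun hD => notMem_contSpectrum_of_two_lt_abs_discriminant
      hV.locallyIntegrable hV.locallyIntegrable_sq hL0 hper hD hE⟩
  have hmem {k : ℕ} (hk : k < M) : k * a + a ≤ M * a := by
    have : (k : ℝ) + 1 ≤ M := by exact_mod_cast hk
    nlinarith
  have hD (E : ℝ) := hasDerivAt_discriminant_energyShift hV.locallyIntegrable E hL0.le
  refine (measure_mono hbands).trans ((volume_inter_abs_le_two_le (m := κ * G) (n := B * M ^ 2) hD
    hK (by positivity) (fun E hE hE2 => ?_) fun τ hτ T hT => hcard V hV M hM τ hτ T fun E hE =>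
      ⟨(hKR E (hT E hE).1).trans (le_abs_self R), (hT E hE).2⟩).trans_eq ?_)
  · obtain ⟨k₀, hk₀, k₁, hk₁, hG'⟩ := hblock E hE
    have hcell := hV.integral_sq_norm_energyShift_le ha.le (hKR E hE)
    rw [← (hD E).deriv]
    refine le_trans (by gcongr) (hderiv V hV.locallyIntegrable E
      (locallyIntegrable_sq_norm_energyShift hV.locallyIntegrable hV.locallyIntegrable_sq E) _ _ _
      (by positivity) (hmem hk₀) (by positivity) (hmem hk₁) (hcell k₀) (hcell k₁) hE2)
  · congr 1
    field_simp

end Cells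

/-! ### Approximants with a large discriminant -/

section Approximants

/-- `z` is a sequence in `Y` of period `l > 0` whose entries are `ε`-close to those of `x`. -/
structure IsApproximant {E : Type*} [NormedAddCommGroup E] (Y : Set E) (x : ℤ → E) (ε : ℝ)
    (l : ℕ) (z : ℤ → E) : Prop where
  period_pos : 0 < l
  mem (j : ℤ) : z j ∈ Y
  periodic : Function.Periodic z l
  norm_sub_lt (j : ℤ) : ‖x j - z j‖ < ε

variable {a : ℝ} {S : Set ℝ} {Y : Set (L2I a)} {x : ℤ → L2I a} {p : ℕ} {ε c E : ℝ}

lemma IsApproximant.norm_le {E : Type*} [NormedAddCommGroup E] {Y : Set E} {x z : ℤ → E} {ε R : ℝ}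
    {l : ℕ} (hz : IsApproximant Y x ε l z) (hx : ∀ j, ‖x j‖ ≤ R) (j : ℤ) : ‖z j‖ ≤ R + ε := by
  have hsub := norm_sub_norm_le (z j) (x j)
  rw [norm_sub_rev] at hsub
  linarith [hx j, hz.norm_sub_lt j]

lemma exists_isApproximant_notMem_contSpectrum (hc : c ≠ 0)
    (hY : GapRichC a ((fun φ => c • φ) '' Y) S) (hxY : ∀ j, x j ∈ Y) (hp : 0 < p)
    (hx : Function.Periodic x p) (hε : 0 < ε) (hE : E ∉ S) :
    ∃ l z, IsApproximant Y x ε l z ∧ E ∉ ContSpectrum (aggC a fun j => c • z j) := by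
  obtain ⟨l, hl, w, hwY, hdist, hEw⟩ := hY.2 E hE p hp (fun i => c • x i)
    (fun i => mem_image_of_mem _ (hxY i)) (|c| * ε) (by positivity)
  rw [perExt_eq_of_periodic (x := fun j => c • x j) hp fun j => by
    simp only [hx j]] at hdist
  have hw : (fun j => c • c⁻¹ • perExt w j) = perExt w := funext fun j => smul_inv_smul₀ hc _
  refine ⟨l, fun j => c⁻¹ • perExt w j, ⟨hl, fun j => ?_, fun j => ?_, fun j => ?_⟩, by rwa [hw]⟩
  · obtain ⟨i, hi⟩ := exists_perExt_eq hl w j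
    obtain ⟨φ, hφ, hφi⟩ := hwY i
    rwa [hi, ← hφi, inv_smul_smul₀ hc]
  · simp only [periodic_perExt w j]
  · have hj := hdist j
    rw [← congrFun hw j, dist_eq_norm, ← smul_sub, norm_smul, Real.norm_eq_abs] at hj
    exact lt_of_mul_lt_mul_left hj (abs_nonneg c)

lemma two_lt_abs_discriminant_of_notMem_contSpectrum (ha : 0 < a) {z : ℤ → L2I a} {l : ℕ}
    (hl : 0 < l) (hz : Function.Periodic z l) (hE : E ∉ ContSpectrum (aggC a fun j => c • z j)) :
    2 < |discriminant (energyShift (fun t => c * aggC a z t) E) (l * a)| := by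
  have hL : 0 < l * a := by positivity
  have hV := locallyIntegrable_aggC ha fun j => c • z j
  have hper := periodic_aggC ha (y := fun j => c • z j) (l := l) fun j => by
    simp only [hz j]
  have hcV : LocallyIntegrable fun t => c * aggC a z t := (locallyIntegrable_aggC ha z).smul c
  rw [discriminant_congr (locallyIntegrable_energyShift hV E) (locallyIntegrable_energyShift hcV E)
    hL.le]
  · exact not_le.1 fun hD => hE (mem_contSpectrum_of_abs_discriminant_le_two hV hL.ne' hper hD)
  · filter_upwards [ae_aggC_smul ha z c] with t ht _
    simp only [energyShift, ht]

lemma exists_seq_add_le_of_isCompact {X ι : Type*} [TopologicalSpace X] [Nonempty ι] {C : Set X}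
    (hC : IsCompact C) {f : ι → X → ℝ} (hf : ∀ i, Continuous (f i)) {b : ℝ}
    (h : ∀ s ∈ C, ∃ i, b < f i s) :
    ∃ δ, 0 < δ ∧ ∃ (m : ℕ) (e : ℕ → ι), ∀ s ∈ C, ∃ k < m, b + δ ≤ f (e k) s := by
  obtain ⟨T, hT⟩ := hC.elim_finite_subcover
    (fun i : ι × ℕ => {s | b + 1 / (i.2 + 1 : ℝ) < f i.1 s})
    (fun i => isOpen_lt continuous_const (hf i.1)) fun s hs => by
      obtain ⟨i, hi⟩ := h s hs
      obtain ⟨n, hn⟩ := exists_nat_one_div_lt (sub_pos.2 hi)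
      exact mem_iUnion.2 ⟨(i, n), lt_sub_iff_add_lt'.1 hn⟩
  let d : ι × ℕ := (Classical.arbitrary ι, 0)
  refine ⟨1 / ((T.sup Prod.snd : ℕ) + 1), Nat.one_div_pos_of_nat, T.toList.length,
    fun k => (T.toList.getD k d).1, fun s hs => ?_⟩
  obtain ⟨i, hiT, hi⟩ := mem_iUnion₂.1 (hT hs)
  obtain ⟨k, hk, rfl⟩ := List.mem_iff_getElem.1 (Finset.mem_toList.2 hiT)
  have hi' : b + 1 / ((T.toList[k]).2 + 1 : ℝ) < f (T.toList[k]).1 s := hi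
  refine ⟨k, hk, ?_⟩
  simp only [List.getD_eq_getElem _ d hk]
  refine le_trans ?_ hi'.le
  gcongr
  exact Finset.le_sup (f := Prod.snd) hiT

/-- Beyond the finitely many indices `k < m` doing the work, the approximants are arbitrary. -/
lemma exists_approximants_two_mul_le_abs_discriminant (ha : 0 < a) {Z K : Set ℝ}
    (hZ0 : ∀ c ∈ Z, c ≠ 0) (hZ : IsCompact Z) (hK : IsCompact K) (hKS : K ⊆ Sᶜ)
    (hY : ∀ c ∈ Z, GapRichC a ((fun φ => c • φ) '' Y) S) (hxY : ∀ j, x j ∈ Y) (hp : 0 < p)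
    (hx : Function.Periodic x p) (hε : 0 < ε) :
    ∃ δ, 0 < δ ∧ ∃ (m : ℕ) (l : ℕ → ℕ) (z : ℕ → ℤ → L2I a),
      (∀ k, IsApproximant Y x ε (l k) (z k)) ∧ ∀ c ∈ Z, ∀ E ∈ K, ∃ k < m, 2 * (1 + δ) ≤
        |discriminant (energyShift (fun t => c * aggC a (z k) t) E) (l k * a)| := by
  let ι := {i : ℕ × (ℤ → L2I a) // IsApproximant Y x ε i.1 i.2}
  have hι : Nonempty ι := ⟨⟨(p, x), hp, hxY, hx, fun j => by simpa using hε⟩⟩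
  obtain ⟨δ, hδ, m, e, he⟩ := exists_seq_add_le_of_isCompact (hZ.prod hK)
    (f := fun (i : ι) (s : ℝ × ℝ) =>
      |discriminant (energyShift (fun t => s.1 * aggC a i.1.2 t) s.2) (i.1.1 * a)|) (b := 2)
    (fun i => (continuous_discriminant_energyShift_mul (locallyIntegrable_aggC ha i.1.2)
      (by positivity)).abs) fun s hs => by
      obtain ⟨l, z, hz, hE⟩ := exists_isApproximant_notMem_contSpectrum (hZ0 _ hs.1) (hY _ hs.1)
        hxY hp hx hε (hKS hs.2)
      exact ⟨⟨(l, z), hz⟩, two_lt_abs_discriminant_of_notMem_contSpectrum ha hz.period_pos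
        hz.periodic hE⟩
  refine ⟨δ / 2, half_pos hδ, m, fun k => (e k).1.1, fun k => (e k).1.2, fun k => (e k).2,
    fun c hc E hE => ?_⟩
  obtain ⟨k, hk, hD⟩ := he (c, E) ⟨hc, hE⟩
  exact ⟨k, hk, by linarith⟩

end Approximants

/-! ### The block construction -/

section Blocks

/-- The sequence of period `M` whose fundamental domain `[0, M)` is cut into blocks of length `b`,
the `i`-th block being filled with the corresponding entries of `z i`. -/
def blockSequence {α : Type*} (M b : ℕ) (z : ℕ → ℤ → α) (j : ℤ) : α :=
  z ((j % M) / b).toNat (j % M)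

lemma periodic_blockSequence {α : Type*} (M b : ℕ) (z : ℕ → ℤ → α) :
    Function.Periodic (blockSequence M b z) M := fun j => by
  simp only [blockSequence, Int.add_emod_right]

lemma blockSequence_add_mul {α : Type*} {M b i l : ℕ} {z : ℕ → ℤ → α}
    (hz : Function.Periodic (z i) l) (hlb : l ∣ b) (hM : (i + 1) * b ≤ M) {j : ℤ} (h0 : 0 ≤ j)
    (hj : j < b) : blockSequence M b z (j + (i * b : ℕ)) = z i j := by
  have hb : (0 : ℤ) < b := h0.trans_lt hj
  have hM' : ((i : ℤ) + 1) * b ≤ M := by exact_mod_cast hM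
  have hmod : (j + (i * b : ℕ)) % (M : ℤ) = j + (i * b : ℕ) :=
    Int.emod_eq_of_lt (by positivity) (by push_cast; linarith)
  have hdiv : (j + (i * b : ℕ)) / (b : ℤ) = i := by
    rw [Nat.cast_mul, Int.add_mul_ediv_right _ _ hb.ne', Int.ediv_eq_zero_of_lt h0 hj, zero_add]
  obtain ⟨k, rfl⟩ := hlb
  rw [blockSequence, hmod, hdiv, Int.toNat_natCast,
    show ((i * (l * k) : ℕ) : ℤ) = ((i * k : ℕ) : ℤ) * l by push_cast; ring]
  exact hz.int_mul (i * k : ℕ) j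

lemma norm_sub_blockSequence_lt {E : Type*} [NormedAddCommGroup E] {M b : ℕ} {x : ℤ → E}
    {z : ℕ → ℤ → E} {ε : ℝ} (hx : Function.Periodic x M) (hz : ∀ k j, ‖x j - z k j‖ < ε) (j : ℤ) :
    ‖x j - blockSequence M b z j‖ < ε := by
  rw [← apply_emod_of_periodic hx j]
  exact hz _ _

variable {a : ℝ} {M n i l : ℕ} {z : ℕ → ℤ → L2I a}

lemma aggC_blockSequence_add (ha : 0 < a) {b : ℕ} (hz : Function.Periodic (z i) l) (hlb : l ∣ b)
    (hM : (i + 1) * b ≤ M) {t : ℝ} (h0 : 0 ≤ t) (ht : t < b * a) :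
    aggC a (blockSequence M b z) (t + (i * b : ℕ) * a) = aggC a (z i) t := by
  have hfloor : ⌊t / a⌋ < (b : ℤ) := by rwa [Int.floor_lt, div_lt_iff₀ ha, Int.cast_natCast]
  have hshift := aggC_add_int_mul ha (blockSequence M b z) t (i * b : ℕ)
  rw [Int.cast_natCast] at hshift
  rw [hshift]
  simp only [aggC, blockSequence_add_mul hz hlb hM (Int.floor_nonneg.2 (div_nonneg h0 ha.le))
    hfloor]

lemma discriminant_blockSequence (ha : 0 < a) {b : ℕ} (hz : Function.Periodic (z i) l)
    (hlb : l ∣ b) (hM : (i + 1) * b ≤ M) (c E : ℝ) :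
    discriminant (fun t => energyShift (fun t => c * aggC a (blockSequence M b z) t) E
        (t + (i * b : ℕ) * a)) (b * a) =
      discriminant (energyShift (fun t => c * aggC a (z i) t) E) (b * a) := by
  have hq (y : ℤ → L2I a) : LocallyIntegrable (energyShift (fun t => c * aggC a y t) E) :=
    locallyIntegrable_energyShift ((locallyIntegrable_aggC ha y).smul c) E
  refine discriminant_congr (hq _) (locallyIntegrable_comp_add_right (hq _) _) (by positivity)
    (.of_forall fun t ht => ?_)
  simp only [energyShift, aggC_blockSequence_add ha hz hlb hM ht.1.le ht.2]

lemma two_mul_pow_le_abs_discriminant_blockSequence (ha : 0 < a) {ℓ : ℕ} (hℓ : 0 < ℓ)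
    (hz : Function.Periodic (z i) l) (hlℓ : l ∣ ℓ) (hM : (i + 1) * (n * ℓ) ≤ M) {c E δ : ℝ}
    (hδ : 0 ≤ δ)
    (hD : 2 * (1 + δ) ≤ |discriminant (energyShift (fun t => c * aggC a (z i) t) E) (l * a)|) :
    2 * (1 + δ) ^ n ≤
      |discriminant (fun t => energyShift (fun t => c * aggC a (blockSequence M (n * ℓ) z) t) E
        (t + (i * (n * ℓ) : ℕ) * a)) (((i + 1) * (n * ℓ) : ℕ) * a - (i * (n * ℓ) : ℕ) * a)| := by
  have hq := locallyIntegrable_energyShift ((locallyIntegrable_aggC ha (z i)).smul c) E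
  have hper : Function.Periodic (energyShift (fun t => c * aggC a (z i) t) E) (l * a) := fun t => by
    simp only [energyShift, periodic_aggC ha hz t]
  have hlen : (((i + 1) * (n * ℓ) : ℕ) : ℝ) * a - (i * (n * ℓ) : ℕ) * a = (n * ℓ : ℕ) * a := by
    push_cast
    ring
  rw [hlen, discriminant_blockSequence ha hz (hlℓ.mul_left n) hM]
  obtain ⟨k, rfl⟩ := hlℓ
  have hrep : ((n * (l * k) : ℕ) : ℝ) * a = (n * k : ℕ) * (l * a) := by
    push_cast
    ring
  rw [hrep]
  refine le_trans ?_ (two_mul_pow_le_abs_discriminant hq hper hδ hD (n * k))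
  gcongr
  · linarith
  · exact Nat.le_mul_of_pos_right n (Nat.pos_of_mul_pos_left hℓ)

end Blocks

/-! ### Exponentially small spectra -/

section ThinSpectra

lemma eventually_mul_pow_le_pow (C : ℝ) (k : ℕ) {r : ℝ} (hr : 1 < r) :
    ∀ᶠ n : ℕ in Filter.atTop, C * (n : ℝ) ^ k ≤ r ^ n := by
  have hlim := (tendsto_pow_const_div_const_pow_of_one_lt k hr).const_mul C
  filter_upwards [hlim.eventually_le_const (by simp : C * 0 < 1)] with n hn
  rwa [← mul_div_assoc, div_le_one (pow_pos (zero_lt_one.trans hr) n)] at hn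

lemma exists_eventually_mul_pow_div_pow_le_exp {C r : ℝ} (hC : 0 ≤ C) (hr : 1 < r) (k : ℕ) {m : ℕ}
    (hm : 0 < m) : ∃ c, 0 < c ∧
      ∀ᶠ N : ℕ in Filter.atTop, C * (N : ℝ) ^ k / r ^ (N / m) ≤ Real.exp (-(c * N)) := by
  have hr0 : 0 < r := zero_lt_one.trans hr
  obtain ⟨s, hs, rfl⟩ : ∃ s, 1 < s ∧ s * s = r :=
    ⟨√r, Real.lt_sqrt_of_sq_lt (by simpa), Real.mul_self_sqrt hr0.le⟩
  have hs0 : 0 < s := zero_lt_one.trans hs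
  have hlog : 0 < Real.log s := Real.log_pos hs
  refine ⟨Real.log s / m, by positivity, ?_⟩
  have hdiv : Filter.Tendsto (fun N : ℕ => N / m + 1) Filter.atTop Filter.atTop :=
    (Filter.tendsto_add_atTop_nat 1).comp (Nat.tendsto_div_const_atTop hm.ne')
  filter_upwards [hdiv.eventually (eventually_mul_pow_le_pow (C * m ^ k * (s * s)) k hs)] with N hN
  set n := N / m + 1 with hn
  have hNn : (N : ℝ) ≤ m * n := by
    exact_mod_cast (Nat.lt_mul_div_succ N hm).le
  calc C * (N : ℝ) ^ k / (s * s) ^ (N / m) ≤ C * (m * n) ^ k / (s * s) ^ (N / m) := by gcongr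
    _ = C * m ^ k * (s * s) * n ^ k / (s * s) ^ n := by
        rw [hn, pow_succ (s * s), mul_pow (m : ℝ)]
        field_simp
    _ ≤ s ^ n / (s * s) ^ n := by gcongr
    _ = Real.exp (-(Real.log s * n)) := by
        rw [Real.exp_neg, mul_comm (Real.log s), Real.exp_nat_mul, Real.exp_log hs0, mul_pow]
        field_simp
    _ ≤ Real.exp (-(Real.log s / m * N)) := by
        rw [Real.exp_le_exp, neg_le_neg_iff, div_mul_eq_mul_div, div_le_iff₀ (by positivity),
          mul_assoc, mul_comm (n : ℝ)]
        gcongr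

lemma exists_volume_inter_contSpectrum_blockSequence_le {a : ℝ} (ha : 0 < a) {K : Set ℝ}
    (hK : IsCompact K) (Λ R : ℝ) : ∃ B, 0 ≤ B ∧
      ∀ {m n ℓ M : ℕ} {l : ℕ → ℕ} {z : ℕ → ℤ → L2I a} {δ c : ℝ}, 0 < ℓ → m * (n * ℓ) < M →
        (∀ k j, ‖z k j‖ ≤ R) → (∀ k < m, Function.Periodic (z k) (l k) ∧ l k ∣ ℓ) → 0 < δ →
        |c| ≤ Λ → (∀ E ∈ K, ∃ k < m, 2 * (1 + δ) ≤
          |discriminant (energyShift (fun t => c * aggC a (z k) t) E) (l k * a)|) →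
        volume (K ∩ ContSpectrum fun t => c * aggC a (blockSequence M (n * ℓ) z) t) ≤
          ENNReal.ofReal (B * M ^ 2 / (2 * (1 + δ) ^ n)) := by
  obtain ⟨R', hR'⟩ := hK.isBounded.exists_norm_le
  obtain ⟨B, hB, hvol⟩ := exists_volume_inter_contSpectrum_le ha (Λ ^ 2 * R ^ 2)
    hK.measurableSet hR'
  refine ⟨B, hB, fun {m n ℓ M l z δ c} hℓ hM hz hl hδ hc hD => ?_⟩
  have hM0 : 0 < M := Nat.zero_lt_of_lt hM
  have hper := periodic_aggC ha (periodic_blockSequence M (n * ℓ) z)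
  refine hvol _ (isCellBounded_mul_aggC ha hc fun j => hz _ _) M hM0
    (fun t => congrArg (c * ·) (hper t)) _ (by positivity) fun E hE => ?_
  obtain ⟨k, hk, hDk⟩ := hD E hE
  have hblock : (k + 1) * (n * ℓ) ≤ m * (n * ℓ) := Nat.mul_le_mul_right _ hk
  exact ⟨k * (n * ℓ), (Nat.mul_le_mul_right _ hk.le).trans_lt hM, (k + 1) * (n * ℓ),
    hblock.trans_lt hM, two_mul_pow_le_abs_discriminant_blockSequence ha hℓ (hl k hk).1 (hl k hk).2
      (hblock.trans hM.le) hδ.le hDk⟩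

lemma mul_div_succ_lt {N : ℕ} (hN : 0 < N) (k : ℕ) : k * (N / (k + 1)) < N := by
  rcases (N / (k + 1)).eq_zero_or_pos with h | h
  · simpa [h] using hN
  · nlinarith [Nat.div_mul_le_self N (k + 1)]

end ThinSpectra

end ThinSpectrum

theorem continuum_thin_spectrum_periodic_coupling_general {a : ℝ} (ha : 0 < a) {S : Set ℝ}
    {Y : Set (L2I a)} {Z : Set ℝ} (hZ0 : ∀ c ∈ Z, c ≠ 0) (hZc : IsCompact Z)
    (hGR : ∀ c ∈ Z, GapRichC a ((fun φ => c • φ) '' Y) S) {x : ℤ → L2I a} (hxY : ∀ j, x j ∈ Y)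
    {p : ℕ} (hp : 0 < p) (hper : ∀ j : ℤ, x (j + (p : ℤ)) = x j) {ε : ℝ} (hε : 0 < ε) {K : Set ℝ}
    (hKc : IsCompact K) (hKS : K ⊆ Sᶜ) :
    ∃ N₀ : ℕ, ∃ c₀ : ℝ, 0 < c₀ ∧ ∀ N : ℕ, N₀ ≤ N → ∃ y : ℤ → L2I a,
      (∀ j, y j ∈ Y) ∧ (∀ j : ℤ, y (j + ((N * p : ℕ) : ℤ)) = y j) ∧ (∀ j : ℤ, ‖x j - y j‖ < ε) ∧
        ∀ c ∈ Z, volume (K ∩ ContSpectrum (fun t => c * aggC a y t)) ≤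
          ENNReal.ofReal (Real.exp (-(c₀ * N))) := by
  obtain ⟨δ, hδ, m, l, z, hz, hD⟩ := ThinSpectrum.exists_approximants_two_mul_le_abs_discriminant
    ha hZ0 hZc hKc hKS hGR hxY hp hper hε
  obtain ⟨Λ, hΛ⟩ := hZc.isBounded.exists_norm_le
  obtain ⟨R, hR⟩ := ThinSpectrum.exists_norm_le_of_periodic_int hp hper
  obtain ⟨B, hB, hvol⟩ :=
    ThinSpectrum.exists_volume_inter_contSpectrum_blockSequence_le ha hKc Λ (R + ε)
  set ℓ := ∏ k ∈ Finset.range m, l k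
  have hℓ : 0 < ℓ := Finset.prod_pos fun k _ => (hz k).period_pos
  obtain ⟨c₀, hc₀, hdecay⟩ := ThinSpectrum.exists_eventually_mul_pow_div_pow_le_exp
    (C := B * p ^ 2 / 2) (r := 1 + δ) (by positivity) (by linarith) 2 (Nat.succ_pos (m * ℓ))
  obtain ⟨N₀, hN₀⟩ := Filter.eventually_atTop.1 (hdecay.and (Filter.eventually_gt_atTop 0))
  refine ⟨N₀, c₀, hc₀, fun N hN => ?_⟩
  obtain ⟨hexp, hN0⟩ := hN₀ N hN
  have hfit : m * (N / (m * ℓ + 1) * ℓ) < N * p := by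
    linarith [ThinSpectrum.mul_div_succ_lt hN0 (m * ℓ), Nat.le_mul_of_pos_right N hp]
  refine ⟨ThinSpectrum.blockSequence (N * p) (N / (m * ℓ + 1) * ℓ) z, fun j => (hz _).mem _,
    ThinSpectrum.periodic_blockSequence _ _ _, ThinSpectrum.norm_sub_blockSequence_lt ?_
      fun k => (hz k).norm_sub_lt, fun c hc => (hvol hℓ hfit (fun k => (hz k).norm_le hR)
        (fun k hk => ⟨(hz k).periodic, Finset.dvd_prod_of_mem l (Finset.mem_range.2 hk)⟩) hδ
        (hΛ c hc) (hD c hc)).trans (ENNReal.ofReal_le_ofReal (hexp.trans' (le_of_eq ?_)))⟩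
  · rw [Nat.cast_mul]
    exact Function.Periodic.nat_mul hper N
  · push_cast
    ring

/-- Thin spectra for continuum periodic approximants, uniformly in a compact set
`Z` of coupling constants: if `λY` is gap-rich with exceptional set `S` for all
`λ ∈ Z`, then any periodic `x ∈ per(ℤ,Y)` of minimal period `p` can be
`ε`-approximated by `Np`-periodic `y` with `Leb(K ∩ σ(L_{λy})) ≤ e^{-c₀N}` for
all `λ ∈ Z` and all large `N`, for compact `K ⊆ ℝ∖S`. -/
theorem continuum_thin_spectrum_periodic_coupling (a : ℝ) (ha : 0 < a)
    (S : Set ℝ) (hS : IsDiscreteSet S)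
    (Y : Set (L2I a)) (hY : Perfect Y)
    (Z : Set ℝ) (hZ0 : ∀ lam ∈ Z, lam ≠ 0) (hZc : IsCompact Z)
    (hGR : ∀ lam ∈ Z, GapRichC a ((fun φ => lam • φ) '' Y) S)
    (x : ℤ → L2I a) (hxY : ∀ j, x j ∈ Y)
    (p : ℕ) (hp : 0 < p) (hper : ∀ j : ℤ, x (j + (p : ℤ)) = x j)
    (hmin : ∀ q : ℕ, 0 < q → (∀ j : ℤ, x (j + (q : ℤ)) = x j) → p ≤ q)
    (ε : ℝ) (hε : 0 < ε) (K : Set ℝ) (hKc : IsCompact K) (hKS : K ⊆ Sᶜ) :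
    ∃ N₀ : ℕ, ∃ c₀ : ℝ, 0 < c₀ ∧
      ∀ N : ℕ, N₀ ≤ N →
        ∃ y : ℤ → L2I a,
          (∀ j, y j ∈ Y) ∧
          (∀ j : ℤ, y (j + ((N * p : ℕ) : ℤ)) = y j) ∧
          (∀ j : ℤ, ‖x j - y j‖ < ε) ∧
          ∀ lam ∈ Z,
            volume (K ∩ ContSpectrum (fun t => lam * aggC a y t)) ≤
              ENNReal.ofReal (Real.exp (-(c₀ * N))) :=
  continuum_thin_spectrum_periodic_coupling_general ha hZ0 hZc hGR hxY hp hper hε hKc hKS
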